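/- For the exponential random graph model with parameter β in the subcritical region, there exists a constant C > 0, depending only on β₁,…,β_k and H₁,…,H_k, such that for all n ≥ 2 the normalized number of edges W_n satisfies d_Kol(W_n, Z) = sup_{x∈ℝ} |P(W_n ≤ x) − P(Z ≤ x)| ≤ C n^{−1/4}, where Z is a standard normal random variable. -/

import Mathlib

open MeasureTheory ProbabilityTheory Real Finset

noncomputable section

/-- The index set `I = {(i,j) : 1 ≤ i < j ≤ n}` of potential edges on `n` labeled vertices. -/
def EdgeIdx (n : ℕ) : Type := {p : Fin n × Fin n // p.1 < p.2}

instance (n : ℕ) : Fintype (EdgeIdx n) := by unfold EdgeIdx; infer_instance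
instance (n : ℕ) : DecidableEq (EdgeIdx n) := by unfold EdgeIdx; infer_instance

/-- Adjacency of the graph `G_y` encoded by the edge-indicator vector `y`. -/
def yAdj {n : ℕ} (y : EdgeIdx n → Bool) (a b : Fin n) : Bool :=
  if h : a < b then y ⟨(a, b), h⟩ else if h' : b < a then y ⟨(b, a), h'⟩ else false

/-- The number of edges of a graph `H`. -/
def eCount {V : Type} [Fintype V] (H : SimpleGraph V) : ℕ :=
  Nat.card H.edgeSet

/-- `|Hom(H, G_y)|`: the number of injective maps from the vertex set of `H` to `Fin n`
mapping every edge of `H` to an edge of `G_y`. -/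
def homCount {V : Type} [Fintype V] {n : ℕ} (H : SimpleGraph V) (y : EdgeIdx n → Bool) : ℕ :=
  Nat.card {φ : V → Fin n //
    Function.Injective φ ∧ ∀ a b, H.Adj a b → yAdj y (φ a) (φ b) = true}

/-- `|Hom(H, G_y, s)|`: the number of pairs `(φ, (u, v))` where `φ` is injective, `(u, v)` is
an ordered pair of adjacent vertices of `H` with `{φ u, φ v} = s`, and every edge of `H` other
than `{u, v}` is mapped by `φ` to an edge of `G_y` (regardless of whether the edge `s` is
present in `G_y`). -/
def homCountAt {V : Type} [Fintype V] {n : ℕ} (H : SimpleGraph V) (y : EdgeIdx n → Bool)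
    (s : EdgeIdx n) : ℕ :=
  Nat.card {t : (V → Fin n) × V × V //
    Function.Injective t.1 ∧ H.Adj t.2.1 t.2.2 ∧
    Sym2.mk (t.1 t.2.1, t.1 t.2.2) = Sym2.mk (s.1.1, s.1.2) ∧
    ∀ a b, H.Adj a b → Sym2.mk (a, b) ≠ Sym2.mk (t.2.1, t.2.2) →
      yAdj y (t.1 a) (t.1 b) = true}

section ERGM

variable {k : ℕ} (β : Fin (k + 1) → ℝ) (v : Fin (k + 1) → ℕ)
  (H : ∀ j : Fin (k + 1), SimpleGraph (Fin (v j)))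

/-- The (unnormalized) ERGM weight `exp (Σ_j β_j n^{2−v_j} |Hom(H_j, G_y)|)`. -/
def ergmWeight (n : ℕ) (y : EdgeIdx n → Bool) : ℝ :=
  Real.exp (∑ j, β j * (n : ℝ) ^ ((2 : ℤ) - (v j : ℤ)) * (homCount (H j) y : ℝ))

/-- The ERGM normalizing constant. -/
def ergmZ (n : ℕ) : ℝ := ∑ y : EdgeIdx n → Bool, ergmWeight β v H n y

/-- The ERGM probability of the configuration `y`. -/
def ergmProb (n : ℕ) (y : EdgeIdx n → Bool) : ℝ := ergmWeight β v H n y / ergmZ β v H n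

/-- Expectation of `G(Y)` under the ERGM. -/
def ergmExp (n : ℕ) (G : (EdgeIdx n → Bool) → ℝ) : ℝ :=
  ∑ y : EdgeIdx n → Bool, ergmProb β v H n y * G y

/-- Variance of `G(Y)` under the ERGM. -/
def ergmVar (n : ℕ) (G : (EdgeIdx n → Bool) → ℝ) : ℝ :=
  ergmExp β v H n (fun y => (G y - ergmExp β v H n G) ^ 2)

/-- The total number of edges of `G_y`. -/
def edgeSum {n : ℕ} (y : EdgeIdx n → Bool) : ℝ :=
  ∑ s : EdgeIdx n, (if y s then (1 : ℝ) else 0)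

/-- `Φ_β(a) = Σ_j β_j e_j a^{e_j − 1}`. -/
def PhiFn : ℝ → ℝ := fun a =>
  ∑ j, β j * (eCount (H j) : ℝ) * a ^ (eCount (H j) - 1)

/-- `φ_β(a) = e^{2Φ_β(a)} / (e^{2Φ_β(a)} + 1)`. -/
def phiFn : ℝ → ℝ := fun a =>
  Real.exp (2 * PhiFn β v H a) / (Real.exp (2 * PhiFn β v H a) + 1)

/-- `σ_n² = N p (1−p) / (1 − 2 p (1−p) Φ_β'(p))` with `N = n(n−1)/2`. -/
def sigmaSq (p : ℝ) (n : ℕ) : ℝ :=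
  ((n : ℝ) * ((n : ℝ) - 1) / 2) * p * (1 - p) /
    (1 - 2 * p * (1 - p) * deriv (PhiFn β v H) p)

/-- `μ_n = E Σ_{s ∈ I} Y_s`. -/
def muN (n : ℕ) : ℝ := ergmExp β v H n (edgeSum)

/-- The standardized number of edges `W_n`. -/
def Wn (p : ℝ) (n : ℕ) (y : EdgeIdx n → Bool) : ℝ :=
  (edgeSum y - muN β v H n) / Real.sqrt (sigmaSq β v H p n)

end ERGM

namespace BoolCube

variable {ι : Type} [Fintype ι] [DecidableEq ι]

/-- The discrete derivative of `F` in the coordinate `s`. -/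
def disc (F : (ι → Bool) → ℝ) (s : ι) (x : ι → Bool) : ℝ :=
  F (Function.update x s true) - F (Function.update x s false)

/-- The mean of `F` with respect to the mass function `μ`. -/
def mean (μ F : (ι → Bool) → ℝ) : ℝ := ∑ x, μ x * F x

/-- The mass that `μ` gives to the set `B`. -/
def mass (μ : (ι → Bool) → ℝ) (B : Set (ι → Bool)) : ℝ := mean μ (B.indicator 1)

/-- A probability mass function on the cube satisfying the FKG lattice condition. -/
structure IsFKG (μ : (ι → Bool) → ℝ) : Prop where
  nonneg : ∀ x, 0 ≤ μ x
  sum_one : ∑ x, μ x = 1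
  supermodular : ∀ x y, μ x * μ y ≤ μ (x ⊓ y) * μ (x ⊔ y)

section Flip

omit [Fintype ι] in
theorem update_eq_or (x : ι → Bool) (s : ι) :
    (Function.update x s true = x ∧ Function.update x s false = Function.update x s (!x s)) ∨
    (Function.update x s false = x ∧ Function.update x s true = Function.update x s (!x s)) := by
  cases h : x s
  · right
    refine ⟨?_, by simp⟩
    rw [← h, Function.update_eq_self]
  · left
    refine ⟨?_, by simp⟩
    rw [← h, Function.update_eq_self]

theorem sum_update (G : (ι → Bool) → ℝ) (s : ι) :
    ∑ x, (G (Function.update x s true) + G (Function.update x s false)) = 2 * ∑ x, G x := by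
  have hinv : Function.Involutive fun x : ι → Bool => Function.update x s (!x s) := by
    intro x
    simp
  have h1 : ∑ x, G (Function.update x s (!x s)) = ∑ x, G x :=
    Equiv.sum_comp hinv.toPerm G
  calc _ = ∑ x, (G x + G (Function.update x s (!x s))) := by
        refine Finset.sum_congr rfl fun x _ => ?_
        rcases update_eq_or x s with ⟨h, h'⟩ | ⟨h, h'⟩
        · rw [h, h']
        · rw [h, h', add_comm]
    _ = 2 * ∑ x, G x := by rw [Finset.sum_add_distrib, h1]; ring

omit [Fintype ι] in
theorem update_mono (x : ι → Bool) (s : ι) :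
    Function.update x s false ≤ Function.update x s true := by
  intro t
  by_cases h : t = s
  · subst h; simp
  · simp [h]

theorem monotone_of_disc_nonneg {F : (ι → Bool) → ℝ} (hF : ∀ s x, 0 ≤ disc F s x) :
    Monotone F := by
  intro x y hxy
  have key : ∀ T : Finset ι, F x ≤ F (fun s => if s ∈ T then y s else x s) := by
    intro T
    induction T using Finset.induction_on with
    | empty => simp
    | insert s T hs ih =>
      refine ih.trans ?_
      set z : ι → Bool := fun t => if t ∈ T then y t else x t
      have hz : (fun t => if t ∈ insert s T then y t else x t) = Function.update z s (y s) := by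
        funext t
        by_cases h : t = s
        · subst h; simp
        · simp [h, z]
      have hzs : z s = x s := by simp [z, hs]
      rw [hz]
      cases hy : y s
      · have hx : x s = false := by
          have := hxy s
          rw [hy] at this
          exact Bool.eq_false_of_le_false this
        have : Function.update z s false = z := by
          rw [← hx, ← hzs, Function.update_eq_self]
        rw [this]
      · rcases update_eq_or z s with ⟨h, _⟩ | ⟨h, _⟩
        · rw [h]
        · have := hF s z
          rw [disc, h] at this
          linarith
  have := key Finset.univ
  simpa using this

omit [Fintype ι] in
theorem disc_nonneg {F : (ι → Bool) → ℝ} (hF : Monotone F) (s : ι) (x : ι → Bool) :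
    0 ≤ disc F s x :=
  sub_nonneg.2 (hF (update_mono x s))

omit [Fintype ι] in
theorem disc_update (F : (ι → Bool) → ℝ) (s : ι) (x : ι → Bool) (b : Bool) :
    disc F s (Function.update x s b) = disc F s x := by
  simp [disc]

end Flip

section Mean

variable {μ : (ι → Bool) → ℝ}

theorem mean_add (F G : (ι → Bool) → ℝ) :
    mean μ (fun x => F x + G x) = mean μ F + mean μ G := by
  simp [mean, mul_add, Finset.sum_add_distrib]

theorem mean_sub (F G : (ι → Bool) → ℝ) :
    mean μ (fun x => F x - G x) = mean μ F - mean μ G := by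
  simp [mean, mul_sub, Finset.sum_sub_distrib]

theorem mean_const_mul (c : ℝ) (F : (ι → Bool) → ℝ) :
    mean μ (fun x => c * F x) = c * mean μ F := by
  simp only [mean, Finset.mul_sum]
  exact Finset.sum_congr rfl fun x _ => by ring

theorem mean_sum {κ : Type*} (T : Finset κ) (F : κ → (ι → Bool) → ℝ) :
    mean μ (fun x => ∑ i ∈ T, F i x) = ∑ i ∈ T, mean μ (F i) := by
  simp only [mean, Finset.mul_sum]
  exact Finset.sum_comm

theorem mean_mono (hμ : ∀ x, 0 ≤ μ x) {F G : (ι → Bool) → ℝ} (h : ∀ x, F x ≤ G x) :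
    mean μ F ≤ mean μ G :=
  Finset.sum_le_sum fun x _ => mul_le_mul_of_nonneg_left (h x) (hμ x)

theorem mean_nonneg (hμ : ∀ x, 0 ≤ μ x) {F : (ι → Bool) → ℝ} (h : ∀ x, 0 ≤ F x) :
    0 ≤ mean μ F :=
  Finset.sum_nonneg fun x _ => mul_nonneg (hμ x) (h x)

theorem mean_const (hμ : ∑ x, μ x = 1) (c : ℝ) : mean μ (fun _ => c) = c := by
  simp [mean, ← Finset.sum_mul, hμ]

theorem abs_mean_le (hμ : ∀ x, 0 ≤ μ x) (F : (ι → Bool) → ℝ) :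
    |mean μ F| ≤ mean μ (fun x => |F x|) := by
  refine (Finset.abs_sum_le_sum_abs _ _).trans (Finset.sum_le_sum fun x _ => ?_)
  rw [abs_mul, abs_of_nonneg (hμ x)]

/-- The Cauchy–Schwarz inequality. -/
theorem mean_mul_sq_le (hμ : ∀ x, 0 ≤ μ x) (F G : (ι → Bool) → ℝ) :
    mean μ (fun x => F x * G x) ^ 2 ≤
      mean μ (fun x => F x ^ 2) * mean μ (fun x => G x ^ 2) := by
  refine Finset.sum_sq_le_sum_mul_sum_of_sq_le_mul _
    (fun x _ => mul_nonneg (hμ x) (sq_nonneg _)) (fun x _ => mul_nonneg (hμ x) (sq_nonneg _))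
    fun x _ => (by ring : _ = _).le

theorem mean_abs_le_sqrt (hμ : ∀ x, 0 ≤ μ x) (h1 : ∑ x, μ x = 1) (F : (ι → Bool) → ℝ) :
    mean μ (fun x => |F x|) ≤ √(mean μ (fun x => F x ^ 2)) := by
  refine Real.le_sqrt_of_sq_le ?_
  have := mean_mul_sq_le hμ (fun x => |F x|) (fun _ => 1)
  simpa [mean_const h1] using this

/-- The variance of `F` with respect to the mass function `μ`. -/
def var (μ F : (ι → Bool) → ℝ) : ℝ := mean μ (fun x => (F x - mean μ F) ^ 2)

theorem var_nonneg (hμ : ∀ x, 0 ≤ μ x) (F : (ι → Bool) → ℝ) : 0 ≤ var μ F :=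
  mean_nonneg hμ fun _ => sq_nonneg _

theorem var_eq (h1 : ∑ x, μ x = 1) (F : (ι → Bool) → ℝ) :
    var μ F = mean μ (fun x => F x ^ 2) - mean μ F ^ 2 := by
  have : (fun x => (F x - mean μ F) ^ 2) =
      fun x => (F x ^ 2 - (2 * mean μ F) * F x) + mean μ F ^ 2 := by
    funext x; ring
  rw [var, this, mean_add, mean_sub, mean_const_mul, mean_const h1]
  ring

theorem var_le_mean_sq (h1 : ∑ x, μ x = 1) (F : (ι → Bool) → ℝ) :
    var μ F ≤ mean μ (fun x => F x ^ 2) := by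
  rw [var_eq h1]; nlinarith [sq_nonneg (mean μ F)]

theorem var_const_mul (c : ℝ) (F : (ι → Bool) → ℝ) :
    var μ (fun x => c * F x) = c ^ 2 * var μ F := by
  have e : (fun x => (c * F x - c * mean μ F) ^ 2) =
      fun x => c ^ 2 * (F x - mean μ F) ^ 2 := by
    funext x; ring
  simp only [var, mean_const_mul c F]
  rw [e, mean_const_mul]

theorem var_add_le (hμ : ∀ x, 0 ≤ μ x) (F G : (ι → Bool) → ℝ) :
    var μ (fun x => F x + G x) ≤ 2 * var μ F + 2 * var μ G := by
  have e : 2 * var μ F + 2 * var μ G =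
      mean μ fun x => 2 * (F x - mean μ F) ^ 2 + 2 * (G x - mean μ G) ^ 2 := by
    rw [mean_add, mean_const_mul, mean_const_mul]
    rfl
  rw [e, var, mean_add]
  refine mean_mono hμ fun x => ?_
  nlinarith [sq_nonneg ((F x - mean μ F) - (G x - mean μ G))]

theorem mass_nonneg (hμ : ∀ x, 0 ≤ μ x) (B : Set (ι → Bool)) : 0 ≤ mass μ B :=
  mean_nonneg hμ fun _ => Set.indicator_nonneg (by simp) _

theorem mass_mono (hμ : ∀ x, 0 ≤ μ x) {B C : Set (ι → Bool)} (h : B ⊆ C) :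
    mass μ B ≤ mass μ C :=
  mean_mono hμ fun _ => Set.indicator_le_indicator_of_subset h (by simp) _

theorem mass_union_le (hμ : ∀ x, 0 ≤ μ x) (B C : Set (ι → Bool)) :
    mass μ (B ∪ C) ≤ mass μ B + mass μ C := by
  classical
  rw [mass, mass, mass, ← mean_add]
  refine mean_mono hμ fun x => ?_
  by_cases h1 : x ∈ B <;> by_cases h2 : x ∈ C <;> simp [h1, h2]

theorem mass_iUnion_le (hμ : ∀ x, 0 ≤ μ x) {κ : Type*} [Fintype κ] (B : κ → Set (ι → Bool)) :
    mass μ (⋃ i, B i) ≤ ∑ i, mass μ (B i) := by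
  classical
  simp only [mass]
  rw [← mean_sum]
  refine mean_mono hμ fun x => ?_
  have hn : ∀ i ∈ (Finset.univ : Finset κ), 0 ≤ (B i).indicator (1 : (ι → Bool) → ℝ) x :=
    fun i _ => Set.indicator_nonneg (by simp) _
  by_cases h : x ∈ ⋃ i, B i
  · obtain ⟨i, hi⟩ := Set.mem_iUnion.1 h
    rw [Set.indicator_of_mem h]
    refine le_trans ?_ (Finset.single_le_sum hn (Finset.mem_univ i))
    simp [hi]
  · rw [Set.indicator_of_notMem h]
    exact Finset.sum_nonneg hn

theorem mass_le_one (hμ : ∀ x, 0 ≤ μ x) (h1 : ∑ x, μ x = 1) (B : Set (ι → Bool)) :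
    mass μ B ≤ 1 := by
  classical
  rw [← mean_const h1 1]
  exact mean_mono hμ fun x => by
    by_cases h : x ∈ B <;> simp [h]

end Mean

section FKG

variable {μ : (ι → Bool) → ℝ}

theorem IsFKG.mean_mul_le (hμ : IsFKG μ) {F G : (ι → Bool) → ℝ} (hF : Monotone F)
    (hG : Monotone G) : mean μ F * mean μ G ≤ mean μ (fun x => F x * G x) := by
  have h := fkg (f := fun x => F x - F ⊥) (g := fun x => G x - G ⊥) μ hμ.nonneg
    (fun x => sub_nonneg.2 (hF bot_le)) (fun x => sub_nonneg.2 (hG bot_le))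
    (fun x y h => sub_le_sub_right (hF h) _) (fun x y h => sub_le_sub_right (hG h) _)
    hμ.supermodular
  rw [hμ.sum_one, one_mul] at h
  change mean μ _ * mean μ _ ≤ mean μ _ at h
  have e : (fun x => (F x - F ⊥) * (G x - G ⊥)) =
      fun x => ((F x * G x - G ⊥ * F x) - F ⊥ * G x) + F ⊥ * G ⊥ := by
    funext x; ring
  rw [e, mean_sub, mean_sub, mean_add, mean_sub, mean_sub, mean_const_mul, mean_const_mul,
    mean_const hμ.sum_one, mean_const hμ.sum_one, mean_const hμ.sum_one] at h
  linarith

theorem IsFKG.mean_mul_ge (hμ : IsFKG μ) {F G : (ι → Bool) → ℝ} (hF : Antitone F)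
    (hG : Monotone G) : mean μ (fun x => F x * G x) ≤ mean μ F * mean μ G := by
  have h := hμ.mean_mul_le (F := fun x => -1 * F x) (G := G)
    (fun x y h => by simpa using hF h) hG
  simp only [mul_assoc] at h
  rw [mean_const_mul, mean_const_mul] at h
  linarith

/-- Under the FKG condition, a function whose discrete derivatives are dominated by those of `G`
has variance at most that of `G`. -/
theorem IsFKG.var_le_var (hμ : IsFKG μ) {F G : (ι → Bool) → ℝ}
    (h : ∀ s x, |disc F s x| ≤ disc G s x) : var μ F ≤ var μ G := by
  have h1 : Monotone fun x => G x + F x := monotone_of_disc_nonneg fun s x => by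
    have := (abs_le.1 (h s x)).1
    simp only [disc] at this ⊢
    linarith
  have h2 : Monotone fun x => G x - F x := monotone_of_disc_nonneg fun s x => by
    have := (abs_le.1 (h s x)).2
    simp only [disc] at this ⊢
    linarith
  have h3 := hμ.mean_mul_le h1 h2
  have e : (fun x => (G x + F x) * (G x - F x)) = fun x => G x ^ 2 - F x ^ 2 := by
    funext x; ring
  rw [e, mean_sub, mean_add, mean_sub] at h3
  rw [var_eq hμ.sum_one, var_eq hμ.sum_one]
  nlinarith

end FKG

section Product

/-- The product Bernoulli mass function with parameter `q`. -/
def bern (q : ℝ) (x : ι → Bool) : ℝ := ∏ s, if x s then q else 1 - q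

omit [DecidableEq ι] in
theorem bern_pos {q : ℝ} (h0 : 0 < q) (h1 : q < 1) (x : ι → Bool) : 0 < bern q x :=
  Finset.prod_pos fun s _ => by split_ifs <;> linarith

theorem bern_update (q : ℝ) (s : ι) (x : ι → Bool) :
    (1 - q) * bern q (Function.update x s true) = q * bern q (Function.update x s false) := by
  have h : ∀ b : Bool, bern q (Function.update x s b) =
      (if b then q else 1 - q) * ∏ t ∈ Finset.univ.erase s, if x t then q else 1 - q := by
    intro b
    rw [bern, ← Finset.mul_prod_erase _ _ (Finset.mem_univ s)]
    congr 1
    · simp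
    · exact Finset.prod_congr rfl fun t ht => by
        rw [Function.update_of_ne (Finset.ne_of_mem_erase ht)]
  rw [h, h]
  simp only [if_true, Bool.false_eq_true, if_false]
  ring

/-- The indicator that all coordinates in `T` are switched on. -/
def mono (T : Finset ι) (x : ι → Bool) : ℝ := ∏ t ∈ T, if x t then 1 else 0

theorem mean_bern_mono (q : ℝ) (T : Finset ι) : mean (bern q) (mono T) = q ^ T.card := by
  have h : ∀ x : ι → Bool, bern q x * mono T x =
      ∏ s, (if x s then q else 1 - q) * (if s ∈ T then if x s then 1 else 0 else 1) := by
    intro x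
    rw [Finset.prod_mul_distrib, bern, mono]
    congr 1
    simp [Finset.prod_ite_mem]
  have h2 := Finset.prod_univ_sum (fun _ : ι => (Finset.univ : Finset Bool))
    (fun (s : ι) (b : Bool) =>
      ((if b then q else 1 - q) * (if s ∈ T then if b then 1 else 0 else 1) : ℝ))
  rw [Fintype.piFinset_univ] at h2
  rw [mean, Finset.sum_congr rfl fun x _ => h x, ← h2]
  have h3 : ∀ s : ι, ∑ b : Bool,
      ((if b then q else 1 - q) * (if s ∈ T then if b then 1 else 0 else 1) : ℝ) =
      if s ∈ T then q else 1 := by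
    intro s
    by_cases hs : s ∈ T <;> simp [hs]
  rw [Finset.prod_congr rfl fun s _ => h3 s]
  simp [Finset.prod_ite_mem]

theorem sum_bern (q : ℝ) : ∑ x : ι → Bool, bern q x = 1 := by
  have := mean_bern_mono (ι := ι) q ∅
  simpa [mean, mono] using this

theorem isFKG_bern {q : ℝ} (h0 : 0 < q) (h1 : q < 1) : IsFKG (bern (ι := ι) q) where
  nonneg x := (bern_pos h0 h1 x).le
  sum_one := sum_bern q
  supermodular x y := by
    rw [bern, bern, bern, bern, ← Finset.prod_mul_distrib, ← Finset.prod_mul_distrib]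
    refine le_of_eq (Finset.prod_congr rfl fun s _ => ?_)
    have key : ∀ a b : Bool, (if a then q else 1 - q) * (if b then q else 1 - q) =
        (if a ⊓ b then q else 1 - q) * (if a ⊔ b then q else 1 - q) := by
      intro a b
      cases a <;> cases b <;> simp [mul_comm]
    exact key (x s) (y s)

theorem exp_le_add_exp_sq (x : ℝ) : Real.exp x ≤ x + Real.exp (x ^ 2) := by
  have h2 := Real.add_one_le_exp (x ^ 2)
  rcases le_or_gt |x| 1 with h | h
  · have h3 := (abs_le.1 (Real.abs_exp_sub_one_sub_id_le h)).2
    linarith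
  · rcases lt_abs.1 h with h | h
    · have : Real.exp x ≤ Real.exp (x ^ 2) := Real.exp_le_exp.2 (by nlinarith)
      linarith
    · have : Real.exp x ≤ 1 := Real.exp_le_one_iff.2 (by linarith)
      nlinarith

theorem two_point_exp_le {q : ℝ} (h0 : 0 ≤ q) (h1 : q ≤ 1) (u w : ℝ) :
    q * Real.exp u + (1 - q) * Real.exp w ≤
      Real.exp (q * u + (1 - q) * w) * Real.exp ((u - w) ^ 2) := by
  have e1 : Real.exp u = Real.exp (q * u + (1 - q) * w) * Real.exp ((1 - q) * (u - w)) := by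
    rw [← Real.exp_add]; ring_nf
  have e2 : Real.exp w = Real.exp (q * u + (1 - q) * w) * Real.exp (-q * (u - w)) := by
    rw [← Real.exp_add]; ring_nf
  have i1 := exp_le_add_exp_sq ((1 - q) * (u - w))
  have i2 := exp_le_add_exp_sq (-q * (u - w))
  have j1 : Real.exp (((1 - q) * (u - w)) ^ 2) ≤ Real.exp ((u - w) ^ 2) := by
    refine Real.exp_le_exp.2 ?_
    rw [mul_pow]
    exact mul_le_of_le_one_left (sq_nonneg _) (by nlinarith)
  have j2 : Real.exp ((-q * (u - w)) ^ 2) ≤ Real.exp ((u - w) ^ 2) := by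
    refine Real.exp_le_exp.2 ?_
    rw [mul_pow]
    exact mul_le_of_le_one_left (sq_nonneg _) (by nlinarith)
  have k1 := mul_le_mul_of_nonneg_left (i1.trans (add_le_add_right j1 _)) h0
  have k2 := mul_le_mul_of_nonneg_left (i2.trans (add_le_add_right j2 _)) (sub_nonneg.2 h1)
  calc _ = Real.exp (q * u + (1 - q) * w) * (q * Real.exp ((1 - q) * (u - w))
        + (1 - q) * Real.exp (-q * (u - w))) := by
        rw [mul_add]
        nth_rewrite 1 [e1]
        nth_rewrite 1 [e2]
        ring
    _ ≤ _ := by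
        refine mul_le_mul_of_nonneg_left ?_ (Real.exp_pos _).le
        linarith

/-- Averaging out the coordinate `s`. -/
def avg (q : ℝ) (s : ι) (F : (ι → Bool) → ℝ) (x : ι → Bool) : ℝ :=
  q * F (Function.update x s true) + (1 - q) * F (Function.update x s false)

theorem mean_avg (q : ℝ) (s : ι) (F : (ι → Bool) → ℝ) :
    mean (bern q) (avg q s F) = mean (bern q) F := by
  have h1 := sum_update (fun x => bern q x * F x) s
  have h2 := sum_update (fun x => bern q x * avg q s F x) s
  have : ∀ x, bern q (Function.update x s true) * avg q s F (Function.update x s true) +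
      bern q (Function.update x s false) * avg q s F (Function.update x s false) =
      bern q (Function.update x s true) * F (Function.update x s true) +
      bern q (Function.update x s false) * F (Function.update x s false) := by
    intro x
    have := bern_update q s x
    simp only [avg, Function.update_idem]
    linear_combination (F (Function.update x s false) - F (Function.update x s true)) * this
  simp only [this] at h2
  rw [mean, mean]
  linarith

/-- The bounded differences inequality for the moment generating function. -/
theorem mean_bern_exp_le {q : ℝ} (h0 : 0 < q) (h1 : q < 1) (c : ι → ℝ) (l : ℝ) (T : Finset ι) :
    ∀ F : (ι → Bool) → ℝ, (∀ x y, (∀ t ∈ T, x t = y t) → F x = F y) →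
      (∀ s x, |disc F s x| ≤ c s) →
      mean (bern q) (fun x => Real.exp (l * F x)) ≤
        Real.exp (l * mean (bern q) F + l ^ 2 * ∑ s ∈ T, c s ^ 2) := by
  induction T using Finset.induction_on with
  | empty =>
    intro F hF _
    have : ∀ x, F x = F ⊥ := fun x => hF _ _ (by simp)
    have hF' : F = fun _ => F ⊥ := funext this
    rw [hF', mean_const (sum_bern q), mean_const (sum_bern q)]
    simp
  | insert s T hs ih =>
    intro F hF hc
    have hdep : ∀ x y, (∀ t ∈ T, x t = y t) → avg q s F x = avg q s F y := by
      intro x y hxy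
      have : ∀ b, F (Function.update x s b) = F (Function.update y s b) := by
        intro b
        refine hF _ _ fun t ht => ?_
        by_cases h : t = s
        · subst h; simp
        · simpa [h] using hxy t (Finset.mem_of_mem_insert_of_ne ht h)
      simp [avg, this]
    have hdisc : ∀ t x, |disc (avg q s F) t x| ≤ c t := by
      intro t x
      by_cases h : t = s
      · subst h
        have : disc (avg q t F) t x = 0 := by simp [disc, avg]
        rw [this, abs_zero]
        exact (abs_nonneg _).trans (hc t x)
      · have e : disc (avg q s F) t x = q * disc F t (Function.update x s true) +
            (1 - q) * disc F t (Function.update x s false) := by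
          simp only [disc, avg, Function.update_comm h]
          ring
        have a1 := abs_le.1 (hc t (Function.update x s true))
        have a2 := abs_le.1 (hc t (Function.update x s false))
        rw [e, abs_le]
        constructor <;> nlinarith
    have hpt : ∀ x, avg q s (fun x => Real.exp (l * F x)) x ≤
        Real.exp (l * avg q s F x) * Real.exp (l ^ 2 * c s ^ 2) := by
      intro x
      have := two_point_exp_le h0.le h1.le (l * F (Function.update x s true))
        (l * F (Function.update x s false))
      refine this.trans ?_
      have e1 : q * (l * F (Function.update x s true)) +
          (1 - q) * (l * F (Function.update x s false)) = l * avg q s F x := by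
        simp only [avg]; ring
      rw [e1]
      refine mul_le_mul_of_nonneg_left (Real.exp_le_exp.2 ?_) (Real.exp_pos _).le
      rw [← mul_sub, mul_pow]
      exact mul_le_mul_of_nonneg_left (sq_le_sq' (abs_le.1 (hc s x)).1 (abs_le.1 (hc s x)).2)
        (sq_nonneg _)
    calc mean (bern q) (fun x => Real.exp (l * F x))
        = mean (bern q) (avg q s fun x => Real.exp (l * F x)) := (mean_avg q s _).symm
      _ ≤ mean (bern q) (fun x => Real.exp (l ^ 2 * c s ^ 2) * Real.exp (l * avg q s F x)) :=
          mean_mono (fun x => (bern_pos h0 h1 x).le) fun x => by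
            rw [mul_comm]; exact hpt x
      _ ≤ Real.exp (l ^ 2 * c s ^ 2) *
          Real.exp (l * mean (bern q) (avg q s F) + l ^ 2 * ∑ s ∈ T, c s ^ 2) := by
          rw [mean_const_mul]
          exact mul_le_mul_of_nonneg_left (ih _ hdep hdisc) (Real.exp_pos _).le
      _ = _ := by
          rw [mean_avg, ← Real.exp_add, Finset.sum_insert hs]
          ring_nf

end Product

end BoolCube

namespace BoolCube

variable {ι : Type} [Fintype ι] [DecidableEq ι]

theorem antitone_of_update_le {F : (ι → Bool) → ℝ}
    (hF : ∀ s x, F (Function.update x s true) ≤ F (Function.update x s false)) : Antitone F := by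
  have : Monotone fun x => -F x := monotone_of_disc_nonneg fun s x => by
    have := hF s x
    simp only [disc]
    linarith
  intro x y h
  have := this h
  simpa using this

/-- The density of the restriction of `μ` to `A` with respect to the Bernoulli product measure. -/
def density (μ : (ι → Bool) → ℝ) (A : Set (ι → Bool)) (q : ℝ) (x : ι → Bool) : ℝ :=
  A.indicator μ x / bern q x

omit [DecidableEq ι] in
theorem density_nonneg {μ : (ι → Bool) → ℝ} (hμ : ∀ x, 0 ≤ μ x) {q : ℝ} (h0 : 0 < q) (h1 : q < 1)
    (A : Set (ι → Bool)) (x : ι → Bool) : 0 ≤ density μ A q x :=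
  div_nonneg (Set.indicator_nonneg (fun x _ => hμ x) _) (bern_pos h0 h1 x).le

theorem mean_bern_density_mul (μ : (ι → Bool) → ℝ) {q : ℝ} (h0 : 0 < q) (h1 : q < 1)
    (A : Set (ι → Bool)) (F : (ι → Bool) → ℝ) :
    mean (bern q) (fun x => density μ A q x * F x) = mean μ (fun x => A.indicator F x) := by
  classical
  refine Finset.sum_congr rfl fun x _ => ?_
  have := (bern_pos h0 h1 x).ne'
  by_cases h : x ∈ A
  · simp only [density, Set.indicator_of_mem h]
    field_simp
  · simp [density, Set.indicator_of_notMem h]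

theorem antitone_density {μ : (ι → Bool) → ℝ} (hμ : ∀ x, 0 ≤ μ x) {q : ℝ} (h0 : 0 < q)
    (h1 : q < 1) {A : Set (ι → Bool)} (hA : IsLowerSet A)
    (hdom : ∀ s x, Function.update x s true ∈ A →
      (1 - q) * μ (Function.update x s true) ≤ q * μ (Function.update x s false)) :
    Antitone (density μ A q) := by
  classical
  refine antitone_of_update_le fun s x => ?_
  by_cases h : Function.update x s true ∈ A
  · have h' : Function.update x s false ∈ A := hA (update_mono x s) h
    have b1 := bern_pos h0 h1 (Function.update x s true)
    have b2 := bern_pos h0 h1 (Function.update x s false)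
    have := hdom s x h
    have e := bern_update q s x
    rw [density, density, Set.indicator_of_mem h, Set.indicator_of_mem h', div_le_div_iff₀ b1 b2]
    refine le_of_mul_le_mul_left ?_ (mul_pos h0 (sub_pos.2 h1))
    calc q * (1 - q) * (μ (Function.update x s true) * bern q (Function.update x s false))
        = ((1 - q) * μ (Function.update x s true)) * (q * bern q (Function.update x s false)) := by
          ring
      _ ≤ (q * μ (Function.update x s false)) * (q * bern q (Function.update x s false)) :=
          mul_le_mul_of_nonneg_right this (mul_pos h0 b2).le
      _ = q * (1 - q) * (μ (Function.update x s false) * bern q (Function.update x s true)) := by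
          rw [← e]; ring
  · rw [density, Set.indicator_of_notMem h, zero_div]
    exact density_nonneg hμ h0 h1 _ _

theorem monotone_density {μ : (ι → Bool) → ℝ} (hμ : ∀ x, 0 ≤ μ x) {q : ℝ} (h0 : 0 < q)
    (h1 : q < 1) {A : Set (ι → Bool)} (hA : IsUpperSet A)
    (hdom : ∀ s x, Function.update x s false ∈ A →
      q * μ (Function.update x s false) ≤ (1 - q) * μ (Function.update x s true)) :
    Monotone (density μ A q) := by
  classical
  refine monotone_of_disc_nonneg fun s x => sub_nonneg.2 ?_
  by_cases h : Function.update x s false ∈ A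
  · have h' : Function.update x s true ∈ A := hA (update_mono x s) h
    have b1 := bern_pos h0 h1 (Function.update x s true)
    have b2 := bern_pos h0 h1 (Function.update x s false)
    have := hdom s x h
    have e := bern_update q s x
    rw [density, density, Set.indicator_of_mem h, Set.indicator_of_mem h', div_le_div_iff₀ b2 b1]
    refine le_of_mul_le_mul_left ?_ (mul_pos h0 (sub_pos.2 h1))
    calc q * (1 - q) * (μ (Function.update x s false) * bern q (Function.update x s true))
        = (q * μ (Function.update x s false)) * ((1 - q) * bern q (Function.update x s true)) := by
          ring
      _ ≤ ((1 - q) * μ (Function.update x s true)) * ((1 - q) * bern q (Function.update x s true)) :=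
          mul_le_mul_of_nonneg_right this (mul_pos (sub_pos.2 h1) b1).le
      _ = q * (1 - q) * (μ (Function.update x s true) * bern q (Function.update x s false)) := by
          rw [e]; ring
  · rw [density, Set.indicator_of_notMem h, zero_div]
    exact density_nonneg hμ h0 h1 _ _

theorem mean_indicator_exp_le {μ : (ι → Bool) → ℝ} (hμ : ∀ x, 0 ≤ μ x) (hs : ∑ x, μ x = 1)
    {q : ℝ} (h0 : 0 < q) (h1 : q < 1) {A : Set (ι → Bool)} {F : (ι → Bool) → ℝ} {c : ι → ℝ}
    (hc : ∀ s x, |disc F s x| ≤ c s) {l : ℝ}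
    (hcor : mean (bern q) (fun x => density μ A q x * Real.exp (l * F x)) ≤
      mean (bern q) (density μ A q) * mean (bern q) (fun x => Real.exp (l * F x))) :
    mean μ (fun x => A.indicator (fun x => Real.exp (l * F x)) x) ≤
      Real.exp (l * mean (bern q) F + l ^ 2 * ∑ s, c s ^ 2) := by
  rw [← mean_bern_density_mul μ h0 h1]
  refine hcor.trans ?_
  have hm : mean (bern q) (density μ A q) ≤ 1 := by
    have := mean_bern_density_mul μ h0 h1 A 1
    simp only [Pi.one_apply, mul_one] at this
    change mean (bern q) (density μ A q) = mass μ A at this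
    rw [this]
    exact mass_le_one hμ hs A
  refine (mul_le_of_le_one_left (mean_nonneg (fun x => (bern_pos h0 h1 x).le)
    fun x => (Real.exp_pos _).le) hm).trans ?_
  exact mean_bern_exp_le h0 h1 c l Finset.univ F
    (fun x y h => by rw [funext fun t => h t (Finset.mem_univ t)]) hc

theorem mass_le_exp_of_chernoff {μ : (ι → Bool) → ℝ} (hμ : ∀ x, 0 ≤ μ x) {A B : Set (ι → Bool)}
    {F : (ι → Bool) → ℝ} {m V d : ℝ} {c : ι → ℝ} (hV : 0 < V)
    (hcV : ∑ s, c s ^ 2 ≤ V) (σ : ℝ) (hσ : σ ^ 2 = 1)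
    (hB : ∀ x ∈ B, d ≤ σ * (F x - m))
    (h : mean μ (fun x => A.indicator (fun x => Real.exp (d / (2 * V) * σ * F x)) x) ≤
      Real.exp (d / (2 * V) * σ * m + (d / (2 * V) * σ) ^ 2 * ∑ s, c s ^ 2))
    (hd : 0 ≤ d) :
    mass μ (A ∩ B) ≤ Real.exp (-(d ^ 2 / (4 * V))) := by
  classical
  set l := d / (2 * V) with hl
  have hl0 : 0 ≤ l := by positivity
  have hpt : ∀ x, (A ∩ B).indicator (1 : (ι → Bool) → ℝ) x ≤
      Real.exp (-(l * (d + σ * m))) * A.indicator (fun x => Real.exp (l * σ * F x)) x := by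
    intro x
    by_cases hx : x ∈ A ∩ B
    · rw [Set.indicator_of_mem hx, Set.indicator_of_mem hx.1, ← Real.exp_add, Pi.one_apply,
        Real.one_le_exp_iff]
      have := mul_le_mul_of_nonneg_left (hB x hx.2) hl0
      nlinarith
    · rw [Set.indicator_of_notMem hx]
      exact mul_nonneg (Real.exp_pos _).le
        (Set.indicator_nonneg (fun x _ => (Real.exp_pos _).le) _)
  calc mass μ (A ∩ B) ≤ Real.exp (-(l * (d + σ * m))) *
        mean μ (fun x => A.indicator (fun x => Real.exp (l * σ * F x)) x) := by
        rw [← mean_const_mul]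
        exact mean_mono hμ hpt
    _ ≤ Real.exp (-(l * (d + σ * m))) *
        Real.exp (l * σ * m + (l * σ) ^ 2 * ∑ s, c s ^ 2) :=
        mul_le_mul_of_nonneg_left h (Real.exp_pos _).le
    _ ≤ _ := by
        rw [← Real.exp_add]
        refine Real.exp_le_exp.2 ?_
        have h1 : l ^ 2 * ∑ s, c s ^ 2 ≤ l ^ 2 * V := mul_le_mul_of_nonneg_left hcV (sq_nonneg _)
        have h2 : l ^ 2 * V - l * d = -(d ^ 2 / (4 * V)) := by
          rw [hl]; field_simp; ring
        rw [mul_pow, hσ]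
        linarith

/-- Upper tail bound on a down-set where `μ` is dominated by a Bernoulli product measure. -/
theorem mass_upper_tail_le {μ : (ι → Bool) → ℝ} (hμ : ∀ x, 0 ≤ μ x) (hs : ∑ x, μ x = 1)
    {q : ℝ} (h0 : 0 < q) (h1 : q < 1) {A : Set (ι → Bool)} (hA : IsLowerSet A)
    (hdom : ∀ s x, Function.update x s true ∈ A →
      (1 - q) * μ (Function.update x s true) ≤ q * μ (Function.update x s false))
    {F : (ι → Bool) → ℝ} (hF : Monotone F) {c : ι → ℝ} (hc : ∀ s x, |disc F s x| ≤ c s)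
    {V d : ℝ} (hV : 0 < V) (hcV : ∑ s, c s ^ 2 ≤ V) (hd : 0 ≤ d) :
    mass μ (A ∩ {x | mean (bern q) F + d ≤ F x}) ≤ Real.exp (-(d ^ 2 / (4 * V))) := by
  refine mass_le_exp_of_chernoff (F := F) (m := mean (bern q) F) hμ hV hcV 1 (by norm_num)
    (fun x hx => ?_) ?_ hd
  · have : mean (bern q) F + d ≤ F x := hx
    linarith
  · refine mean_indicator_exp_le hμ hs h0 h1 hc ?_
    refine (isFKG_bern h0 h1).mean_mul_ge (antitone_density hμ h0 h1 hA hdom) ?_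
    intro x y hxy
    have : 0 ≤ d / (2 * V) := by positivity
    exact Real.exp_le_exp.2 (by rw [mul_one]; exact mul_le_mul_of_nonneg_left (hF hxy) this)

/-- Lower tail bound on an up-set where `μ` dominates a Bernoulli product measure. -/
theorem mass_lower_tail_le {μ : (ι → Bool) → ℝ} (hμ : ∀ x, 0 ≤ μ x) (hs : ∑ x, μ x = 1)
    {q : ℝ} (h0 : 0 < q) (h1 : q < 1) {A : Set (ι → Bool)} (hA : IsUpperSet A)
    (hdom : ∀ s x, Function.update x s false ∈ A →
      q * μ (Function.update x s false) ≤ (1 - q) * μ (Function.update x s true))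
    {F : (ι → Bool) → ℝ} (hF : Monotone F) {c : ι → ℝ} (hc : ∀ s x, |disc F s x| ≤ c s)
    {V d : ℝ} (hV : 0 < V) (hcV : ∑ s, c s ^ 2 ≤ V) (hd : 0 ≤ d) :
    mass μ (A ∩ {x | F x ≤ mean (bern q) F - d}) ≤ Real.exp (-(d ^ 2 / (4 * V))) := by
  refine mass_le_exp_of_chernoff (F := F) (m := mean (bern q) F) hμ hV hcV (-1) (by norm_num)
    (fun x hx => ?_) ?_ hd
  · have : F x ≤ mean (bern q) F - d := hx
    linarith
  · refine mean_indicator_exp_le hμ hs h0 h1 hc ?_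
    have := (isFKG_bern h0 h1).mean_mul_ge (F := fun x => Real.exp (d / (2 * V) * -1 * F x)) ?_
      (monotone_density hμ h0 h1 hA hdom)
    · simp only [mul_comm (density μ A q _)]
      rw [mul_comm (mean (bern q) (density μ A q))]
      exact this
    · intro x y hxy
      have h : 0 ≤ d / (2 * V) := by positivity
      have := mul_le_mul_of_nonneg_left (hF hxy) h
      exact Real.exp_le_exp.2 (by linarith)

end BoolCube

namespace BoolCube

section Mono

variable {ι : Type} [DecidableEq ι]

theorem mono_update_true {T : Finset ι} {s : ι} (h : s ∈ T) (x : ι → Bool) :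
    mono T (Function.update x s true) = mono (T.erase s) x := by
  rw [mono, ← Finset.mul_prod_erase _ _ h, mono]
  simp only [Function.update_self, if_true, one_mul]
  exact Finset.prod_congr rfl fun t ht => by
    rw [Function.update_of_ne (Finset.ne_of_mem_erase ht)]

theorem mono_update_false {T : Finset ι} {s : ι} (h : s ∈ T) (x : ι → Bool) :
    mono T (Function.update x s false) = 0 :=
  Finset.prod_eq_zero h (by simp)

theorem mono_update_of_notMem {T : Finset ι} {s : ι} (h : s ∉ T) (x : ι → Bool) (b : Bool) :
    mono T (Function.update x s b) = mono T x :=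
  Finset.prod_congr rfl fun t ht => by
    rw [Function.update_of_ne (ne_of_mem_of_not_mem ht h)]

theorem disc_mono (T : Finset ι) (s : ι) (x : ι → Bool) :
    disc (mono T) s x = if s ∈ T then mono (T.erase s) x else 0 := by
  by_cases h : s ∈ T
  · rw [disc, mono_update_true h, mono_update_false h, if_pos h, sub_zero]
  · rw [disc, mono_update_of_notMem h, mono_update_of_notMem h, if_neg h, sub_self]

omit [DecidableEq ι] in
theorem mono_eq_ite (T : Finset ι) (x : ι → Bool) :
    mono T x = if ∀ t ∈ T, x t = true then 1 else 0 := by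
  split_ifs with h
  · exact Finset.prod_eq_one fun t ht => by simp [h t ht]
  · push Not at h
    obtain ⟨t, ht, hx⟩ := h
    exact Finset.prod_eq_zero ht (by simp [hx])

omit [DecidableEq ι] in
theorem mono_nonneg (T : Finset ι) (x : ι → Bool) : 0 ≤ mono T x := by
  rw [mono_eq_ite]; split_ifs <;> norm_num

omit [DecidableEq ι] in
theorem mono_le_one (T : Finset ι) (x : ι → Bool) : mono T x ≤ 1 := by
  rw [mono_eq_ite]; split_ifs <;> norm_num

omit [DecidableEq ι] in
theorem monotone_mono (T : Finset ι) : Monotone (mono T) := by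
  intro x y hxy
  rw [mono_eq_ite, mono_eq_ite]
  split_ifs with h1 h2 h2
  · exact le_rfl
  · exact absurd (fun t ht => Bool.eq_true_of_true_le ((h1 t ht) ▸ hxy t)) h2
  · exact zero_le_one
  · exact le_rfl

omit [DecidableEq ι] in
theorem mono_add_mono_le (T : Finset ι) (x y : ι → Bool) :
    mono T x + mono T y ≤ mono T (x ⊓ y) + mono T (x ⊔ y) := by
  have hy := monotone_mono T (le_sup_right : y ≤ x ⊔ y)
  have hx := monotone_mono T (le_sup_left : x ≤ x ⊔ y)
  by_cases h1 : ∀ t ∈ T, x t = true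
  · have e1 : mono T x = 1 := by rw [mono_eq_ite, if_pos h1]
    have e2 : mono T (x ⊓ y) = mono T y :=
      Finset.prod_congr rfl fun t ht => by simp [h1 t ht]
    linarith
  · have e1 : mono T x = 0 := by rw [mono_eq_ite, if_neg h1]
    have := mono_nonneg T (x ⊓ y)
    linarith

/-- The indicator that the coordinate `s` is switched on. -/
def ind (s : ι) (x : ι → Bool) : ℝ := if x s then 1 else 0

theorem disc_ind (s t : ι) (x : ι → Bool) : disc (ind s) t x = if s = t then 1 else 0 := by
  by_cases h : s = t
  · subst h; simp [disc, ind]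
  · simp [disc, ind, h]

end Mono

/-- The data of a polynomial Hamiltonian `field · |x| + ∑ₐ coef a · 𝟙[x = 1 on supp a]`. -/
structure PolyHam (ι A : Type) where
  /-- the external field -/
  field : ℝ
  /-- the coefficients -/
  coef : A → ℝ
  /-- the supports of the monomials -/
  supp : A → Finset ι

namespace PolyHam

variable {ι A : Type} [Fintype ι] [DecidableEq ι] [Fintype A] (P : PolyHam ι A)

/-- The Hamiltonian. -/
def ham (x : ι → Bool) : ℝ := P.field * ∑ s, ind s x + ∑ a, P.coef a * mono (P.supp a) x

/-- The Gibbs probability mass function. -/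
def gibbs (x : ι → Bool) : ℝ := Real.exp (P.ham x) / ∑ y, Real.exp (P.ham y)

/-- The terms of the Hamiltonian which involve the coordinate `s`. -/
def terms (s : ι) : Finset A := Finset.univ.filter fun a => s ∈ P.supp a

/-- The local field at `s`, i.e. the discrete derivative of the Hamiltonian. -/
def locField (s : ι) (x : ι → Bool) : ℝ :=
  P.field + ∑ a ∈ P.terms s, P.coef a * mono ((P.supp a).erase s) x

/-- The sum of the discrete derivatives of the local field at `s`. -/
def locSlope (s : ι) (x : ι → Bool) : ℝ :=
  ∑ a ∈ P.terms s, P.coef a * ∑ u ∈ (P.supp a).erase s, mono (((P.supp a).erase s).erase u) x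

/-- The conditional probability that the coordinate `s` is switched on. -/
def condProb (s : ι) (x : ι → Bool) : ℝ := Real.sigmoid (P.locField s x)

/-- The conditional variance of the coordinate `s`. -/
def condVar (s : ι) (x : ι → Bool) : ℝ := P.condProb s x * (1 - P.condProb s x)

omit [Fintype ι] in
@[simp] theorem mem_terms {s : ι} {a : A} : a ∈ P.terms s ↔ s ∈ P.supp a := by simp [terms]

theorem disc_ham (s : ι) (x : ι → Bool) : disc P.ham s x = P.locField s x := by
  have h1 : disc P.ham s x =
      P.field * ∑ t, disc (ind t) s x + ∑ a, P.coef a * disc (mono (P.supp a)) s x := by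
    simp only [disc, ham, Finset.sum_sub_distrib, mul_sub]
    ring
  rw [h1, locField, terms, Finset.sum_filter]
  congr 1
  · simp [disc_ind]
  · exact Finset.sum_congr rfl fun a _ => by rw [disc_mono]; split_ifs <;> simp

omit [Fintype ι] in
theorem locField_update (s : ι) (x : ι → Bool) (b : Bool) :
    P.locField s (Function.update x s b) = P.locField s x := by
  simp only [locField]
  congr 1
  exact Finset.sum_congr rfl fun a _ => by rw [mono_update_of_notMem (by simp)]

omit [Fintype ι] in
theorem locSlope_update (s : ι) (x : ι → Bool) (b : Bool) :
    P.locSlope s (Function.update x s b) = P.locSlope s x := by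
  simp only [locSlope]
  refine Finset.sum_congr rfl fun a _ => ?_
  congr 1
  exact Finset.sum_congr rfl fun u _ => by rw [mono_update_of_notMem (by simp)]

omit [Fintype ι] in
theorem condProb_update (s : ι) (x : ι → Bool) (b : Bool) :
    P.condProb s (Function.update x s b) = P.condProb s x := by
  rw [condProb, locField_update, condProb]

omit [Fintype ι] in
theorem disc_locField (s t : ι) (x : ι → Bool) :
    disc (P.locField s) t x = ∑ a ∈ P.terms s,
      if t ∈ (P.supp a).erase s then P.coef a * mono (((P.supp a).erase s).erase t) x else 0 := by
  have h1 : disc (P.locField s) t x =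
      ∑ a ∈ P.terms s, P.coef a * disc (mono ((P.supp a).erase s)) t x := by
    simp only [disc, locField, Finset.sum_sub_distrib, mul_sub]
    ring
  rw [h1]
  exact Finset.sum_congr rfl fun a _ => by rw [disc_mono]; split_ifs <;> simp

omit [Fintype ι] in
theorem disc_locField_comm (s t : ι) (x : ι → Bool) :
    disc (P.locField s) t x = disc (P.locField t) s x := by
  rw [disc_locField, disc_locField, terms, terms, Finset.sum_filter, Finset.sum_filter]
  refine Finset.sum_congr rfl fun a _ => ?_
  by_cases hst : s = t
  · subst hst; rfl
  · have hts : t ≠ s := Ne.symm hst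
    by_cases h1 : s ∈ P.supp a <;> by_cases h2 : t ∈ P.supp a <;>
      simp [h1, h2, hst, hts, Finset.erase_right_comm (a := s) (b := t)]

theorem sum_disc_locField (s : ι) (x : ι → Bool) :
    ∑ t, disc (P.locField s) t x = P.locSlope s x := by
  simp only [disc_locField, locSlope]
  rw [Finset.sum_comm]
  refine Finset.sum_congr rfl fun a _ => ?_
  rw [Finset.mul_sum, ← Finset.sum_filter]
  exact Finset.sum_congr (by ext; simp) fun _ _ => rfl

omit [Fintype ι] in
theorem monotone_locField (hc : ∀ a, 0 ≤ P.coef a) (s : ι) : Monotone (P.locField s) :=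
  fun _ _ h => add_le_add_right
    (Finset.sum_le_sum fun a _ => mul_le_mul_of_nonneg_left (monotone_mono _ h) (hc a)) _

omit [Fintype ι] in
theorem monotone_locSlope (hc : ∀ a, 0 ≤ P.coef a) (s : ι) : Monotone (P.locSlope s) :=
  fun _ _ h => Finset.sum_le_sum fun a _ => mul_le_mul_of_nonneg_left
    (Finset.sum_le_sum fun _ _ => monotone_mono _ h) (hc a)

omit [Fintype ι] in
theorem monotone_condProb (hc : ∀ a, 0 ≤ P.coef a) (s : ι) : Monotone (P.condProb s) :=
  fun _ _ h => Real.sigmoid_monotone (P.monotone_locField hc s h)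

theorem mean_bern_locField (q : ℝ) (s : ι) :
    mean (bern q) (P.locField s) =
      P.field + ∑ a ∈ P.terms s, P.coef a * q ^ ((P.supp a).card - 1) := by
  unfold locField
  rw [mean_add (fun _ => P.field), mean_const (sum_bern q), mean_sum]
  congr 1
  refine Finset.sum_congr rfl fun a ha => ?_
  rw [mean_const_mul, mean_bern_mono, Finset.card_erase_of_mem (P.mem_terms.1 ha)]

theorem mean_bern_locSlope (q : ℝ) (s : ι) :
    mean (bern q) (P.locSlope s) = ∑ a ∈ P.terms s,
      P.coef a * (((P.supp a).card - 1 : ℕ) * q ^ ((P.supp a).card - 2)) := by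
  unfold locSlope
  rw [mean_sum]
  refine Finset.sum_congr rfl fun a ha => ?_
  rw [mean_const_mul, mean_sum]
  congr 1
  rw [Finset.sum_congr rfl (g := fun _ => q ^ ((P.supp a).card - 2)), Finset.sum_const,
    Finset.card_erase_of_mem (P.mem_terms.1 ha), nsmul_eq_mul]
  intro u hu
  rw [mean_bern_mono, Finset.card_erase_of_mem hu, Finset.card_erase_of_mem (P.mem_terms.1 ha)]
  rfl

theorem partition_pos : 0 < ∑ y, Real.exp (P.ham y) :=
  Finset.sum_pos (fun _ _ => Real.exp_pos _) Finset.univ_nonempty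

theorem gibbs_pos (x : ι → Bool) : 0 < P.gibbs x := div_pos (Real.exp_pos _) P.partition_pos

theorem sum_gibbs : ∑ x, P.gibbs x = 1 := by
  simp only [gibbs, ← Finset.sum_div]
  exact div_self P.partition_pos.ne'

theorem gibbs_update (s : ι) (x : ι → Bool) :
    (1 - P.condProb s x) * P.gibbs (Function.update x s true) =
      P.condProb s x * P.gibbs (Function.update x s false) := by
  have h : P.ham (Function.update x s true) =
      P.locField s x + P.ham (Function.update x s false) := by
    rw [← disc_ham, disc]; ring
  have e : (1 - P.condProb s x) * Real.exp (P.locField s x) = P.condProb s x := by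
    rw [condProb, Real.sigmoid_def, Real.exp_neg]
    have := Real.exp_pos (P.locField s x)
    field_simp
    ring
  rw [gibbs, h, Real.exp_add, gibbs]
  linear_combination (Real.exp (P.ham (Function.update x s false)) / ∑ y, Real.exp (P.ham y)) * e

theorem isFKG_gibbs (hc : ∀ a, 0 ≤ P.coef a) : IsFKG P.gibbs where
  nonneg x := (P.gibbs_pos x).le
  sum_one := P.sum_gibbs
  supermodular x y := by
    rw [gibbs, gibbs, gibbs, gibbs, div_mul_div_comm, div_mul_div_comm, ← Real.exp_add,
      ← Real.exp_add]
    have h1 : ∀ s : ι, ind s (x ⊓ y) + ind s (x ⊔ y) = ind s x + ind s y := by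
      intro s
      have key : ∀ a b : Bool, ((if a ⊓ b then 1 else 0 : ℝ) + if a ⊔ b then 1 else 0) =
          (if a then 1 else 0) + if b then 1 else 0 := by
        intro a b
        cases a <;> cases b <;> simp
      exact key (x s) (y s)
    have h2 : P.field * ∑ s, ind s (x ⊓ y) + P.field * ∑ s, ind s (x ⊔ y) =
        P.field * ∑ s, ind s x + P.field * ∑ s, ind s y := by
      rw [← mul_add, ← mul_add, ← Finset.sum_add_distrib, ← Finset.sum_add_distrib,
        Finset.sum_congr rfl fun s _ => h1 s]
    have h3 : ∑ a, P.coef a * mono (P.supp a) x + ∑ a, P.coef a * mono (P.supp a) y ≤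
        ∑ a, P.coef a * mono (P.supp a) (x ⊓ y) + ∑ a, P.coef a * mono (P.supp a) (x ⊔ y) := by
      rw [← Finset.sum_add_distrib, ← Finset.sum_add_distrib]
      refine Finset.sum_le_sum fun a _ => ?_
      rw [← mul_add, ← mul_add]
      exact mul_le_mul_of_nonneg_left (mono_add_mono_le _ x y) (hc a)
    refine div_le_div_of_nonneg_right (Real.exp_le_exp.2 ?_)
      (mul_pos P.partition_pos P.partition_pos).le
    simp only [ham]
    linarith

omit [Fintype ι] in
theorem condProb_pos (s : ι) (x : ι → Bool) : 0 < P.condProb s x := Real.sigmoid_pos _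

omit [Fintype ι] in
theorem condProb_lt_one (s : ι) (x : ι → Bool) : P.condProb s x < 1 := Real.sigmoid_lt_one _

theorem gibbs_update_le {q : ℝ} (s : ι) (x : ι → Bool) (h : P.condProb s x ≤ q) :
    (1 - q) * P.gibbs (Function.update x s true) ≤ q * P.gibbs (Function.update x s false) := by
  have e := P.gibbs_update s x
  have := P.gibbs_pos (Function.update x s true)
  have := P.gibbs_pos (Function.update x s false)
  nlinarith

theorem le_gibbs_update {q : ℝ} (s : ι) (x : ι → Bool) (h : q ≤ P.condProb s x) :
    q * P.gibbs (Function.update x s false) ≤ (1 - q) * P.gibbs (Function.update x s true) := by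
  have e := P.gibbs_update s x
  have := P.gibbs_pos (Function.update x s true)
  have := P.gibbs_pos (Function.update x s false)
  nlinarith

/-- Integration by parts for the Gibbs measure. -/
theorem mean_ind_sub_condProb_mul (s : ι) (F : (ι → Bool) → ℝ) :
    mean P.gibbs (fun x => (ind s x - P.condProb s x) * F x) =
      mean P.gibbs (fun x => P.condVar s x * disc F s x) := by
  have h1 := sum_update (fun x => P.gibbs x * ((ind s x - P.condProb s x) * F x)) s
  have h2 := sum_update (fun x => P.gibbs x * (P.condVar s x * disc F s x)) s
  rw [mean, mean]
  refine mul_left_cancel₀ (two_ne_zero (α := ℝ)) ?_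
  rw [← h1, ← h2]
  refine Finset.sum_congr rfl fun x _ => ?_
  have e := P.gibbs_update s x
  simp only [condVar, condProb_update, disc_update, ind, Function.update_self, if_true,
    Bool.false_eq_true, if_false]
  rw [disc]
  linear_combination (F (Function.update x s true) -
    P.condProb s x * (F (Function.update x s true) - F (Function.update x s false))) * e

end PolyHam

end BoolCube

theorem exists_sigmoid_slope (a b : ℝ) : ∃ c ∈ Set.uIcc a b,
    Real.sigmoid b - Real.sigmoid a =
      Real.sigmoid c * (1 - Real.sigmoid c) * (b - a) := by
  have key : ∀ a b : ℝ, a < b → ∃ c ∈ Set.Icc a b, Real.sigmoid b - Real.sigmoid a =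
      Real.sigmoid c * (1 - Real.sigmoid c) * (b - a) := by
    intro a b h
    obtain ⟨c, hc, e⟩ := exists_hasDerivAt_eq_slope Real.sigmoid _ h
      (fun x _ => (Real.hasDerivAt_sigmoid x).continuousAt.continuousWithinAt) fun x _ => Real.hasDerivAt_sigmoid x
    refine ⟨c, Set.Ioo_subset_Icc_self hc, ?_⟩
    rw [e, div_mul_cancel₀ _ (sub_pos.2 h).ne']
  rcases lt_trichotomy a b with h | h | h
  · rw [Set.uIcc_of_le h.le]; exact key a b h
  · exact ⟨a, Set.left_mem_uIcc, by rw [h]; ring⟩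
  · obtain ⟨c, hc, e⟩ := key b a h
    exact ⟨c, by rwa [Set.uIcc_of_ge h.le], by linear_combination -e⟩

theorem abs_sigmoid_sub_le (a b : ℝ) : |Real.sigmoid b - Real.sigmoid a| ≤ |b - a| := by
  obtain ⟨c, -, e⟩ := exists_sigmoid_slope a b
  have h0 := Real.sigmoid_pos c
  have h1 := Real.sigmoid_lt_one c
  rw [e, abs_mul, abs_of_nonneg (by nlinarith)]
  exact mul_le_of_le_one_left (abs_nonneg _) (by nlinarith)

theorem abs_sigmoid_sub_sub_le {l a b ε : ℝ} (ha : |a - l| ≤ ε) (hb : |b - l| ≤ ε) :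
    |Real.sigmoid b - Real.sigmoid a - Real.sigmoid l * (1 - Real.sigmoid l) * (b - a)| ≤
      ε * |b - a| := by
  obtain ⟨c, hc, e⟩ := exists_sigmoid_slope a b
  have hcl : |c - l| ≤ ε := by
    rw [Set.mem_uIcc] at hc
    rw [abs_le] at *
    rcases hc with hc | hc <;> constructor <;> linarith
  have h0 := Real.sigmoid_pos c
  have h1 := Real.sigmoid_lt_one c
  have h2 := Real.sigmoid_pos l
  have h3 := Real.sigmoid_lt_one l
  have h4 := (abs_sigmoid_sub_le l c).trans hcl
  have e2 : Real.sigmoid b - Real.sigmoid a - Real.sigmoid l * (1 - Real.sigmoid l) * (b - a) =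
      ((Real.sigmoid c - Real.sigmoid l) * (1 - Real.sigmoid c - Real.sigmoid l)) * (b - a) := by
    rw [e]; ring
  rw [e2, abs_mul, abs_mul]
  refine mul_le_mul_of_nonneg_right ?_ (abs_nonneg _)
  refine (mul_le_of_le_one_right (abs_nonneg _) ?_).trans h4
  rw [abs_le]
  constructor <;> linarith

/-- The mean-field fixed point equation `p = sigmoid (Ψ p)` with contraction rate `ρ`. -/
structure MeanField (Ψ Ψ' : ℝ → ℝ) (p ρ K : ℝ) : Prop where
  one_le : 1 ≤ K
  p_pos : 0 < p
  p_lt_one : p < 1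
  rate_nonneg : 0 ≤ ρ
  rate_lt_one : ρ < 1
  fixed : Real.sigmoid (Ψ p) = p
  contract : ∀ q ∈ Set.Icc (0 : ℝ) 1, |Real.sigmoid (Ψ q) - p| ≤ ρ * |q - p|
  abs_le : ∀ q ∈ Set.Icc (0 : ℝ) 1, |Ψ q| ≤ K
  lipschitz : ∀ q ∈ Set.Icc (0 : ℝ) 1, ∀ r ∈ Set.Icc (0 : ℝ) 1, |Ψ q - Ψ r| ≤ K * |q - r|
  slope_nonneg : 0 ≤ Ψ' p
  abs_slope_le : ∀ q ∈ Set.Icc (0 : ℝ) 1, |Ψ' q| ≤ K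
  slope_lipschitz : ∀ q ∈ Set.Icc (0 : ℝ) 1, ∀ r ∈ Set.Icc (0 : ℝ) 1,
    |Ψ' q - Ψ' r| ≤ K * |q - r|
  subcritical : p * (1 - p) * Ψ' p < 1

namespace BoolCube.PolyHam

variable {ι A : Type} [Fintype ι] [DecidableEq ι] [Fintype A] (P : PolyHam ι A)

/-- The Hamiltonian is ferromagnetic, and its local fields are close to the mean field `Ψ`. -/
structure IsNear (Ψ Ψ' : ℝ → ℝ) (K : ℝ) (n : ℕ) : Prop where
  two_le : 2 ≤ n
  coef_nonneg : ∀ a, 0 ≤ P.coef a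
  field_near : ∀ s, ∀ q ∈ Set.Icc (0 : ℝ) 1,
    |P.field + ∑ a ∈ P.terms s, P.coef a * q ^ ((P.supp a).card - 1) - Ψ q| ≤ K / n
  slope_near : ∀ s, ∀ q ∈ Set.Icc (0 : ℝ) 1,
    |∑ a ∈ P.terms s, P.coef a * (((P.supp a).card - 1 : ℕ) * q ^ ((P.supp a).card - 2)) - Ψ' q|
      ≤ K / n
  pair_le : ∀ s t, s ≠ t → ∑ a ∈ P.terms s with t ∈ P.supp a, P.coef a ≤ K / n
  card_supp_le : ∀ a, ((P.supp a).card : ℝ) ≤ K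
  card_le : (Fintype.card ι : ℝ) ≤ (n : ℝ) ^ 2
  le_card : (n : ℝ) ^ 2 ≤ 4 * Fintype.card ι

/-- The maximal influence of `t` on the local field at `s`. -/
def influence (s t : ι) : ℝ := disc (P.locField s) t ⊤

omit [Fintype ι] [DecidableEq ι] in
theorem _root_.BoolCube.mono_top (T : Finset ι) : mono T ⊤ = 1 := by
  rw [mono_eq_ite, if_pos]; simp

omit [Fintype ι] [DecidableEq ι] in
theorem _root_.BoolCube.mono_bot (T : Finset ι) : mono T ⊥ = 0 ^ T.card := by
  simp [mono]

omit [Fintype ι] in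
theorem monotone_disc_locField (hc : ∀ a, 0 ≤ P.coef a) (s t : ι) :
    Monotone (disc (P.locField s) t) := by
  intro x y h
  rw [disc_locField, disc_locField]
  refine Finset.sum_le_sum fun a _ => ?_
  split_ifs
  · exact mul_le_mul_of_nonneg_left (monotone_mono _ h) (hc a)
  · exact le_rfl

omit [Fintype ι] in
theorem disc_locField_nonneg (hc : ∀ a, 0 ≤ P.coef a) (s t : ι) (x : ι → Bool) :
    0 ≤ disc (P.locField s) t x :=
  disc_nonneg (P.monotone_locField hc s) t x

omit [Fintype ι] in
theorem abs_disc_locField_le (hc : ∀ a, 0 ≤ P.coef a) (s t : ι) (x : ι → Bool) :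
    |disc (P.locField s) t x| ≤ P.influence s t := by
  rw [abs_of_nonneg (P.disc_locField_nonneg hc s t x)]
  exact P.monotone_disc_locField hc s t le_top

omit [Fintype ι] in
theorem disc_locSlope (s t : ι) (x : ι → Bool) :
    disc (P.locSlope s) t x = ∑ a ∈ P.terms s, P.coef a * ∑ u ∈ (P.supp a).erase s,
      disc (mono (((P.supp a).erase s).erase u)) t x := by
  simp only [disc, locSlope, Finset.sum_sub_distrib, mul_sub]

omit [Fintype ι] in
theorem locSlope_top (s : ι) : P.locSlope s ⊤ =
    ∑ a ∈ P.terms s, P.coef a * (((P.supp a).card - 1 : ℕ) * 1 ^ ((P.supp a).card - 2)) := by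
  rw [locSlope]
  refine Finset.sum_congr rfl fun a ha => ?_
  simp [mono_top, Finset.card_erase_of_mem (P.mem_terms.1 ha)]

variable {P} {Ψ Ψ' : ℝ → ℝ} {K : ℝ} {n : ℕ}

namespace IsNear

variable (h : P.IsNear Ψ Ψ' K n)
include h

theorem n_pos : (0 : ℝ) < n := by
  have := h.two_le
  exact_mod_cast (by omega : 0 < n)

theorem influence_nonneg (s t : ι) : 0 ≤ P.influence s t :=
  P.disc_locField_nonneg h.coef_nonneg s t ⊤

theorem abs_disc_locSlope_le (s t : ι) (x : ι → Bool) :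
    |disc (P.locSlope s) t x| ≤ K * P.influence s t := by
  rw [abs_of_nonneg (disc_nonneg (P.monotone_locSlope h.coef_nonneg s) t x), disc_locSlope,
    influence, disc_locField, Finset.mul_sum]
  refine Finset.sum_le_sum fun a ha => ?_
  by_cases ht : t ∈ (P.supp a).erase s
  · rw [if_pos ht, mono_top, mul_one, mul_comm K]
    refine mul_le_mul_of_nonneg_left ?_ (h.coef_nonneg a)
    calc _ ≤ ∑ u ∈ (P.supp a).erase s, (1 : ℝ) := Finset.sum_le_sum fun u _ => by
            rw [disc_mono]
            split_ifs
            · exact mono_le_one _ _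
            · exact zero_le_one
      _ ≤ ((P.supp a).card : ℝ) := by
          rw [Finset.sum_const, nsmul_eq_mul, mul_one]
          exact_mod_cast Finset.card_le_card (Finset.erase_subset _ _)
      _ ≤ K := h.card_supp_le a
  · rw [if_neg ht, mul_zero]
    refine le_of_eq (mul_eq_zero_of_right _ (Finset.sum_eq_zero fun u _ => ?_))
    rw [disc_mono, if_neg fun ht' => ht (Finset.mem_of_mem_erase ht')]

theorem influence_le (hK : 0 ≤ K) (s t : ι) : P.influence s t ≤ K / n := by
  rw [influence, disc_locField]
  by_cases hst : s = t
  · subst hst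
    simp only [Finset.mem_erase, ne_eq, not_true_eq_false, false_and, if_false,
      Finset.sum_const_zero]
    exact div_nonneg hK (Nat.cast_nonneg _)
  · refine le_trans (le_of_eq ?_) (h.pair_le s t hst)
    rw [Finset.sum_filter]
    exact Finset.sum_congr rfl fun a _ => by simp [mono_top, Ne.symm hst]

theorem sum_influence_le {p ρ : ℝ} (hm : MeanField Ψ Ψ' p ρ K) (s : ι) :
    ∑ t, P.influence s t ≤ 2 * K := by
  simp only [influence]
  rw [sum_disc_locField, locSlope_top]
  have h1 := abs_le.1 (h.slope_near s 1 (by simp))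
  have h2 := abs_le.1 (hm.abs_slope_le 1 (by simp))
  have h3 : K / n ≤ K := div_le_self (by linarith [hm.one_le])
    (by exact_mod_cast (by have := h.two_le; omega : 1 ≤ n))
  linarith

theorem sum_influence_sq_le {p ρ : ℝ} (hm : MeanField Ψ Ψ' p ρ K) (s : ι) :
    ∑ t, (K * P.influence s t) ^ 2 ≤ 2 * K ^ 4 / n := by
  have hK := hm.one_le
  calc ∑ t, (K * P.influence s t) ^ 2 ≤ ∑ t, K ^ 2 * (K / n) * P.influence s t :=
        Finset.sum_le_sum fun t _ => by
          have h1 := h.influence_nonneg s t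
          have h2 := h.influence_le (by linarith) s t
          rw [mul_pow, pow_two (P.influence s t), mul_assoc]
          exact mul_le_mul_of_nonneg_left (mul_le_mul_of_nonneg_right h2 h1) (sq_nonneg _)
    _ ≤ K ^ 2 * (K / n) * (2 * K) := by
        rw [← Finset.mul_sum]
        exact mul_le_mul_of_nonneg_left (h.sum_influence_le hm s) (by positivity)
    _ = _ := by ring

theorem locField_top_le (s : ι) (x : ι → Bool) : P.locField s x ≤ Ψ 1 + K / n := by
  have h1 := abs_le.1 (h.field_near s 1 (by simp))
  have h2 := P.monotone_locField h.coef_nonneg s (le_top : x ≤ ⊤)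
  have h3 : P.locField s ⊤ =
      P.field + ∑ a ∈ P.terms s, P.coef a * 1 ^ ((P.supp a).card - 1) := by
    rw [locField]
    simp [mono_top]
  linarith

theorem le_locField_bot (s : ι) (x : ι → Bool) : Ψ 0 - K / n ≤ P.locField s x := by
  have h1 := abs_le.1 (h.field_near s 0 (by simp))
  have h2 := P.monotone_locField h.coef_nonneg s (bot_le : ⊥ ≤ x)
  have h3 : P.locField s ⊥ =
      P.field + ∑ a ∈ P.terms s, P.coef a * 0 ^ ((P.supp a).card - 1) := by
    rw [locField]
    congr 1
    refine Finset.sum_congr rfl fun a ha => ?_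
    rw [mono_bot, Finset.card_erase_of_mem (P.mem_terms.1 ha)]
  linarith

end IsNear

end BoolCube.PolyHam

theorem pow_le_div_of_lt_one {ρ : ℝ} (h0 : 0 ≤ ρ) (h1 : ρ < 1) {n : ℕ} (hn : 0 < n) :
    ρ ^ n ≤ 1 / n / (1 - ρ) := by
  have hn' : (0 : ℝ) < n := by exact_mod_cast hn
  have h2 : 0 < 1 - ρ := sub_pos.2 h1
  rw [div_div, le_div_iff₀ (mul_pos hn' h2)]
  have h3 : (n : ℝ) * ρ ^ n ≤ ∑ i ∈ Finset.range n, ρ ^ i := by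
    rw [← nsmul_eq_mul, ← Finset.card_range n, ← Finset.sum_const, Finset.card_range]
    exact Finset.sum_le_sum fun i hi =>
      pow_le_pow_of_le_one h0 h1.le (Finset.mem_range.1 hi).le
  have h4 := mul_neg_geom_sum ρ n
  have h5 : 0 ≤ ρ ^ n := pow_nonneg h0 n
  nlinarith

namespace BoolCube.PolyHam.IsNear

variable {ι A : Type} [Fintype ι] [DecidableEq ι] [Fintype A] {P : PolyHam ι A}
variable {Ψ Ψ' : ℝ → ℝ} {p ρ K : ℝ} {n : ℕ}

/-- The configurations for which some conditional probability exceeds `p` by more than `e`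
(for `σ = 1`) or is below `p` by more than `e` (for `σ = -1`). -/
def deviant (P : PolyHam ι A) (σ p e : ℝ) : Set (ι → Bool) :=
  {x | ∃ s, e < σ * (P.condProb s x - p)}

omit [Fintype ι] in
theorem isUpperSet_deviant (hc : ∀ a, 0 ≤ P.coef a) (p e : ℝ) :
    IsUpperSet (deviant P 1 p e) := by
  rintro x y hxy ⟨s, hs⟩
  have := P.monotone_condProb hc s hxy
  exact ⟨s, by linarith⟩

omit [Fintype ι] in
theorem isLowerSet_deviant (hc : ∀ a, 0 ≤ P.coef a) (p e : ℝ) :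
    IsLowerSet (deviant P (-1) p e) := by
  rintro x y hxy ⟨s, hs⟩
  have := P.monotone_condProb hc s hxy
  exact ⟨s, by linarith⟩

/-- Concentration, off a deviant set, of functions with small influences around their Bernoulli
means. -/
theorem mass_tail_le (h : P.IsNear Ψ Ψ' K n) {σ : ℝ} (hσ : σ = 1 ∨ σ = -1) {e q : ℝ}
    (hq : q = p + σ * e) (h0 : 0 < q) (h1 : q < 1) {F : (ι → Bool) → ℝ} (hF : Monotone F)
    {c : ι → ℝ} (hc : ∀ t x, |disc F t x| ≤ c t) {V d : ℝ} (hV : 0 < V)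
    (hcV : ∑ t, c t ^ 2 ≤ V) (hd : 0 ≤ d) :
    mass P.gibbs ((deviant P σ p e)ᶜ ∩ {x | d ≤ σ * (F x - mean (bern q) F)}) ≤
      Real.exp (-(d ^ 2 / (4 * V))) := by
  have hμ : ∀ x, 0 ≤ P.gibbs x := fun x => (P.gibbs_pos x).le
  rcases hσ with rfl | rfl
  · have := mass_upper_tail_le hμ P.sum_gibbs h0 h1
      (isUpperSet_deviant h.coef_nonneg p e).compl (fun s x hx => ?_) hF hc hV hcV hd
    · refine le_trans (le_of_eq ?_) this
      congr 2
      ext x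
      simp only [Set.mem_ofPred_eq]
      constructor <;> intro h <;> linarith
    · refine P.gibbs_update_le s x ?_
      by_contra hlt
      refine hx ⟨s, ?_⟩
      rw [condProb_update]
      linarith
  · have := mass_lower_tail_le hμ P.sum_gibbs h0 h1
      (isLowerSet_deviant h.coef_nonneg p e).compl (fun s x hx => ?_) hF hc hV hcV hd
    · refine le_trans (le_of_eq ?_) this
      congr 2
      ext x
      simp only [Set.mem_ofPred_eq]
      constructor <;> intro h <;> linarith
    · refine P.le_gibbs_update s x ?_
      by_contra hlt
      refine hx ⟨s, ?_⟩
      rw [condProb_update]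
      linarith

/-- The tail probability for a deviation `d`. -/
def tailBound (K d : ℝ) (n : ℕ) : ℝ := Real.exp (-(d ^ 2 * n / (8 * K ^ 4)))

theorem mass_locField_tail_le (h : P.IsNear Ψ Ψ' K n) (hm : MeanField Ψ Ψ' p ρ K) {σ : ℝ}
    (hσ : σ = 1 ∨ σ = -1) {e q : ℝ} (hq : q = p + σ * e) (h0 : 0 < q) (h1 : q < 1) {d : ℝ}
    (hd : 0 ≤ d) (s : ι) :
    mass P.gibbs ((deviant P σ p e)ᶜ ∩ {x | K / n + d ≤ σ * (P.locField s x - Ψ q)}) ≤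
      tailBound K d n := by
  have hK := hm.one_le
  have hn := h.n_pos
  have hμ : ∀ x, 0 ≤ P.gibbs x := fun x => (P.gibbs_pos x).le
  refine le_trans (mass_mono hμ ?_) ((h.mass_tail_le hσ hq h0 h1
    (P.monotone_locField h.coef_nonneg s) (c := fun t => K * P.influence s t) (fun t x => ?_)
    (V := 2 * K ^ 4 / n) (by positivity) (h.sum_influence_sq_le hm s) hd).trans (le_of_eq ?_))
  · rintro x ⟨hx, hx'⟩
    refine ⟨hx, ?_⟩
    have h2 := abs_le.1 (h.field_near s q ⟨h0.le, h1.le⟩)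
    rw [← mean_bern_locField] at h2
    simp only [Set.mem_ofPred_eq] at hx' ⊢
    rcases hσ with rfl | rfl <;> linarith
  · refine (P.abs_disc_locField_le h.coef_nonneg s t x).trans ?_
    exact le_mul_of_one_le_left (h.influence_nonneg s t) hK
  · rw [tailBound]
    congr 2
    field_simp
    ring

theorem mass_locSlope_tail_le (h : P.IsNear Ψ Ψ' K n) (hm : MeanField Ψ Ψ' p ρ K) {σ : ℝ}
    (hσ : σ = 1 ∨ σ = -1) {e q : ℝ} (hq : q = p + σ * e) (h0 : 0 < q) (h1 : q < 1) {d : ℝ}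
    (hd : 0 ≤ d) (s : ι) :
    mass P.gibbs ((deviant P σ p e)ᶜ ∩ {x | K / n + d ≤ σ * (P.locSlope s x - Ψ' q)}) ≤
      tailBound K d n := by
  have hK := hm.one_le
  have hn := h.n_pos
  have hμ : ∀ x, 0 ≤ P.gibbs x := fun x => (P.gibbs_pos x).le
  refine le_trans (mass_mono hμ ?_) ((h.mass_tail_le hσ hq h0 h1
    (P.monotone_locSlope h.coef_nonneg s) (c := fun t => K * P.influence s t)
    (h.abs_disc_locSlope_le s)
    (V := 2 * K ^ 4 / n) (by positivity) (h.sum_influence_sq_le hm s) hd).trans (le_of_eq ?_))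
  · rintro x ⟨hx, hx'⟩
    refine ⟨hx, ?_⟩
    have h2 := abs_le.1 (h.slope_near s q ⟨h0.le, h1.le⟩)
    rw [← mean_bern_locSlope] at h2
    simp only [Set.mem_ofPred_eq] at hx' ⊢
    rcases hσ with rfl | rfl <;> linarith
  · rw [tailBound]
    congr 2
    field_simp
    ring

/-- The radius after `i` rounds of bootstrapping. -/
def radius (ρ D r : ℝ) (i : ℕ) : ℝ := ρ ^ (i + 1) * r + D / (1 - ρ)

theorem radius_succ {ρ : ℝ} (h1 : ρ < 1) (D r : ℝ) (i : ℕ) :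
    radius ρ D r (i + 1) = ρ * radius ρ D r i + D := by
  have : 1 - ρ ≠ 0 := (sub_pos.2 h1).ne'
  simp only [radius]
  field_simp
  ring

/-- One round of bootstrapping improves the radius of the deviant set. -/
theorem mass_deviant_step (h : P.IsNear Ψ Ψ' K n) (hm : MeanField Ψ Ψ' p ρ K) {σ : ℝ}
    (hσ : σ = 1 ∨ σ = -1) {e d : ℝ} (he : 0 ≤ e) (h0 : 0 < p + σ * e) (h1 : p + σ * e < 1)
    (hd : 0 ≤ d) :
    mass P.gibbs (deviant P σ p (ρ * e + (K / n + d))) ≤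
      mass P.gibbs (deviant P σ p e) + Fintype.card ι * tailBound K d n := by
  have hμ : ∀ x, 0 ≤ P.gibbs x := fun x => (P.gibbs_pos x).le
  have hsub : deviant P σ p (ρ * e + (K / n + d)) ⊆ deviant P σ p e ∪
      ⋃ s, ((deviant P σ p e)ᶜ ∩ {x | K / n + d ≤ σ * (P.locField s x - Ψ (p + σ * e))}) := by
    rintro x ⟨s, hs⟩
    by_cases hx : x ∈ deviant P σ p e
    · exact Or.inl hx
    · refine Or.inr (Set.mem_iUnion.2 ⟨s, hx, ?_⟩)
      have h2 := abs_le.1 (hm.contract (p + σ * e) ⟨h0.le, h1.le⟩)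
      have h3 : |p + σ * e - p| = e := by
        rcases hσ with rfl | rfl <;> simp [abs_of_nonneg he]
      rw [h3] at h2
      simp only [Set.mem_ofPred_eq]
      by_contra hlt
      push Not at hlt
      rw [condProb] at hs
      have hD : 0 ≤ K / n + d :=
        add_nonneg (div_nonneg (by linarith [hm.one_le]) (Nat.cast_nonneg _)) hd
      rcases hσ with rfl | rfl
      · have h4 : Real.sigmoid (P.locField s x) ≤
            Real.sigmoid (Ψ (p + 1 * e) + (K / n + d)) := Real.sigmoid_monotone (by linarith)
        have h5 := abs_le.1 (abs_sigmoid_sub_le (Ψ (p + 1 * e)) (Ψ (p + 1 * e) + (K / n + d)))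
        rw [add_sub_cancel_left, abs_of_nonneg hD] at h5
        linarith
      · have h4 : Real.sigmoid (Ψ (p + -1 * e) - (K / n + d)) ≤
            Real.sigmoid (P.locField s x) := Real.sigmoid_monotone (by linarith)
        have h5 := abs_le.1 (abs_sigmoid_sub_le (Ψ (p + -1 * e) - (K / n + d)) (Ψ (p + -1 * e)))
        rw [sub_sub_cancel, abs_of_nonneg hD] at h5
        linarith
  refine (mass_mono hμ hsub).trans ((mass_union_le hμ _ _).trans ?_)
  refine add_le_add_right ((mass_iUnion_le hμ _).trans ?_) _
  refine (Finset.sum_le_card_nsmul _ _ (tailBound K d n) fun s _ =>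
    h.mass_locField_tail_le hm hσ rfl h0 h1 hd s).trans ?_
  rw [nsmul_eq_mul, Finset.card_univ]

theorem deviant_start_eq_empty (h : P.IsNear Ψ Ψ' K n) (hm : MeanField Ψ Ψ' p ρ K) {σ r : ℝ}
    (hσr : σ = 1 ∧ r = 1 - p ∨ σ = -1 ∧ r = p) {d : ℝ} (hd : 0 ≤ d) :
    deviant P σ p (radius ρ (K / n + d) r 0) = ∅ := by
  have hD : 0 ≤ K / n := div_nonneg (by linarith [hm.one_le]) (Nat.cast_nonneg _)
  have h1 := hm.rate_lt_one
  have hr : ρ * r + K / n ≤ radius ρ (K / n + d) r 0 := by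
    have : K / n ≤ (K / n + d) / (1 - ρ) := by
      rw [le_div_iff₀ (sub_pos.2 h1)]
      nlinarith [hm.rate_nonneg, mul_nonneg hD hm.rate_nonneg]
    simp only [radius, zero_add, pow_one]
    linarith
  refine Set.eq_empty_of_forall_notMem ?_
  rintro x ⟨s, hs⟩
  rw [condProb] at hs
  rcases hσr with ⟨rfl, rfl⟩ | ⟨rfl, rfl⟩
  · have h2 := abs_le.1 (hm.contract 1 (by simp))
    rw [abs_of_nonneg (by linarith [hm.p_lt_one])] at h2
    have h4 := Real.sigmoid_monotone (h.locField_top_le s x)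
    have h5 := abs_le.1 (abs_sigmoid_sub_le (Ψ 1) (Ψ 1 + K / n))
    rw [add_sub_cancel_left, abs_of_nonneg hD] at h5
    linarith
  · have h2 := abs_le.1 (hm.contract 0 (by simp))
    rw [zero_sub, abs_neg, abs_of_nonneg (by linarith [hm.p_pos])] at h2
    have h4 := Real.sigmoid_monotone (h.le_locField_bot s x)
    have h5 := abs_le.1 (abs_sigmoid_sub_le (Ψ 0 - K / n) (Ψ 0))
    rw [sub_sub_cancel, abs_of_nonneg hD] at h5
    linarith

theorem tailBound_pos (K d : ℝ) (n : ℕ) : 0 < tailBound K d n := Real.exp_pos _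

theorem mass_deviant_radius_le (h : P.IsNear Ψ Ψ' K n) (hm : MeanField Ψ Ψ' p ρ K) {σ r : ℝ}
    (hσr : σ = 1 ∧ r = 1 - p ∨ σ = -1 ∧ r = p) {d : ℝ} (hd : 0 ≤ d)
    (hsmall : (K / n + d) / (1 - ρ) < (1 - ρ) * r) (i : ℕ) :
    mass P.gibbs (deviant P σ p (radius ρ (K / n + d) r i)) ≤
      i * (Fintype.card ι * tailBound K d n) := by
  have hD : 0 ≤ K / n + d :=
    add_nonneg (div_nonneg (by linarith [hm.one_le]) (Nat.cast_nonneg _)) hd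
  have hρ := sub_pos.2 hm.rate_lt_one
  have hr : 0 < r := by
    rcases hσr with ⟨-, rfl⟩ | ⟨-, rfl⟩
    · linarith [hm.p_lt_one]
    · exact hm.p_pos
  induction i with
  | zero =>
    rw [h.deviant_start_eq_empty hm hσr hd]
    simp [mass, mean]
  | succ i ih =>
    rw [radius_succ hm.rate_lt_one]
    have he : 0 ≤ radius ρ (K / n + d) r i :=
      add_nonneg (mul_nonneg (pow_nonneg hm.rate_nonneg _) hr.le) (div_nonneg hD hρ.le)
    have he' : radius ρ (K / n + d) r i < r := by
      have : ρ ^ (i + 1) ≤ ρ := by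
        simpa using pow_le_pow_of_le_one hm.rate_nonneg hm.rate_lt_one.le
          (by omega : 1 ≤ i + 1)
      rw [radius]
      nlinarith
    have hp0 := hm.p_pos
    have hp1 := hm.p_lt_one
    refine (h.mass_deviant_step hm (hσr.imp And.left And.left) he ?_ ?_ hd).trans ?_
    · rcases hσr with ⟨rfl, rfl⟩ | ⟨rfl, rfl⟩ <;> linarith
    · rcases hσr with ⟨rfl, rfl⟩ | ⟨rfl, rfl⟩ <;> linarith
    · push_cast
      linarith

/-- There is a set of small mass off which the local fields and slopes are close, on one side, to
their mean-field values. -/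
theorem exists_bad_set (h : P.IsNear Ψ Ψ' K n) (hm : MeanField Ψ Ψ' p ρ K) {σ r : ℝ}
    (hσr : σ = 1 ∧ r = 1 - p ∨ σ = -1 ∧ r = p) {d : ℝ} (hd : 1 / n ≤ d)
    (hsmall : (K + 2) / (1 - ρ) * d < (1 - ρ) * r) :
    ∃ U : Set (ι → Bool), (σ = 1 → IsUpperSet U) ∧ (σ = -1 → IsLowerSet U) ∧
      mass P.gibbs U ≤ (n + 2) * (Fintype.card ι * tailBound K d n) ∧
      ∀ x ∉ U, ∀ s,
        σ * (P.condProb s x - p) ≤ (K + 2) / (1 - ρ) * d ∧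
        σ * (P.locField s x - Ψ p) ≤ (K * ((K + 2) / (1 - ρ)) + K + 1) * d ∧
        σ * (P.locSlope s x - Ψ' p) ≤ (K * ((K + 2) / (1 - ρ)) + K + 1) * d := by
  have hμ : ∀ x, 0 ≤ P.gibbs x := fun x => (P.gibbs_pos x).le
  have hn := h.n_pos
  have hd0 : 0 ≤ d := le_trans (by positivity) hd
  have hK := hm.one_le
  have hρ := sub_pos.2 hm.rate_lt_one
  have hr1 : 0 ≤ r ∧ r ≤ 1 := by
    have := hm.p_pos
    have := hm.p_lt_one
    rcases hσr with ⟨-, rfl⟩ | ⟨-, rfl⟩ <;> constructor <;> linarith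
  have hKn : K / n ≤ K * d := by
    rw [div_eq_mul_one_div]
    exact mul_le_mul_of_nonneg_left hd (by linarith)
  set C := (K + 2) / (1 - ρ) with hC
  have hC0 : 0 ≤ C := div_nonneg (by linarith) hρ.le
  have hDC : (K / n + d) / (1 - ρ) ≤ C * d := by
    rw [hC, div_mul_eq_mul_div]
    exact div_le_div_of_nonneg_right (by linarith) hρ.le
  have hrad : radius ρ (K / n + d) r n ≤ C * d := by
    have h1 : ρ ^ (n + 1) * r ≤ d / (1 - ρ) := by
      have h2 := pow_le_div_of_lt_one hm.rate_nonneg hm.rate_lt_one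
        (by have := h.two_le; omega : 0 < n)
      have h3 : (1 / n / (1 - ρ) : ℝ) ≤ d / (1 - ρ) := div_le_div_of_nonneg_right hd hρ.le
      have h4 : ρ ^ (n + 1) ≤ ρ ^ n :=
        pow_le_pow_of_le_one hm.rate_nonneg hm.rate_lt_one.le (Nat.le_succ n)
      exact (mul_le_of_le_one_right (pow_nonneg hm.rate_nonneg _) hr1.2).trans
        (h4.trans (h2.trans h3))
    have h5 : d / (1 - ρ) + (K / n + d) / (1 - ρ) ≤ C * d := by
      rw [hC, div_mul_eq_mul_div, ← add_div]
      exact div_le_div_of_nonneg_right (by linarith) hρ.le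
    rw [radius]
    linarith
  have hσ : σ = 1 ∨ σ = -1 := hσr.imp And.left And.left
  set q := p + σ * (C * d) with hq
  have hCd : 0 ≤ C * d := mul_nonneg hC0 hd0
  have hCr : C * d < r := hsmall.trans_le (by nlinarith [hm.rate_nonneg])
  have hq0 : 0 < q := by
    have := hm.p_pos
    rcases hσr with ⟨rfl, rfl⟩ | ⟨rfl, rfl⟩ <;> simp only [hq] <;> linarith
  have hq1 : q < 1 := by
    have := hm.p_lt_one
    rcases hσr with ⟨rfl, rfl⟩ | ⟨rfl, rfl⟩ <;> simp only [hq] <;> linarith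
  have hqI : q ∈ Set.Icc (0 : ℝ) 1 := ⟨hq0.le, hq1.le⟩
  have hpI : p ∈ Set.Icc (0 : ℝ) 1 := ⟨hm.p_pos.le, hm.p_lt_one.le⟩
  have hqp : |q - p| = C * d := by
    rw [hq, add_sub_cancel_left]
    rcases hσ with rfl | rfl <;> simp [abs_of_nonneg hCd]
  set B := deviant P σ p (C * d) with hB
  set U1 : Set (ι → Bool) := ⋃ s, {x | K / n + d ≤ σ * (P.locField s x - Ψ q)} with hU1
  set U2 : Set (ι → Bool) := ⋃ s, {x | K / n + d ≤ σ * (P.locSlope s x - Ψ' q)} with hU2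
  refine ⟨B ∪ U1 ∪ U2, ?_, ?_, ?_, ?_⟩
  · rintro rfl
    refine ((isUpperSet_deviant h.coef_nonneg _ _).union (isUpperSet_iUnion fun s => ?_)).union
      (isUpperSet_iUnion fun s => ?_)
    · intro x y hxy hx
      have := P.monotone_locField h.coef_nonneg s hxy
      simp only [Set.mem_ofPred_eq] at hx ⊢
      linarith
    · intro x y hxy hx
      have := P.monotone_locSlope h.coef_nonneg s hxy
      simp only [Set.mem_ofPred_eq] at hx ⊢
      linarith
  · rintro rfl
    refine ((isLowerSet_deviant h.coef_nonneg _ _).union (isLowerSet_iUnion fun s => ?_)).union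
      (isLowerSet_iUnion fun s => ?_)
    · intro x y hxy hx
      have := P.monotone_locField h.coef_nonneg s hxy
      simp only [Set.mem_ofPred_eq] at hx ⊢
      linarith
    · intro x y hxy hx
      have := P.monotone_locSlope h.coef_nonneg s hxy
      simp only [Set.mem_ofPred_eq] at hx ⊢
      linarith
  · have hsub : B ∪ U1 ∪ U2 ⊆
        B ∪ ((⋃ s, (Bᶜ ∩ {x | K / n + d ≤ σ * (P.locField s x - Ψ q)})) ∪
          ⋃ s, (Bᶜ ∩ {x | K / n + d ≤ σ * (P.locSlope s x - Ψ' q)})) := by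
      intro x hx
      rw [← Set.inter_iUnion, ← Set.inter_iUnion]
      by_cases hxB : x ∈ B
      · exact Or.inl hxB
      · rcases hx with (hx | hx) | hx
        · exact absurd hx hxB
        · exact Or.inr (Or.inl ⟨hxB, hx⟩)
        · exact Or.inr (Or.inr ⟨hxB, hx⟩)
    have hBm : mass P.gibbs B ≤ n * (Fintype.card ι * tailBound K d n) := by
      refine le_trans (mass_mono hμ ?_)
        (h.mass_deviant_radius_le hm hσr hd0 (hDC.trans_lt hsmall) n)
      rintro x ⟨s, hs⟩
      exact ⟨s, hrad.trans_lt hs⟩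
    have hsum : ∀ f : ι → Set (ι → Bool), (∀ s, mass P.gibbs (f s) ≤ tailBound K d n) →
        mass P.gibbs (⋃ s, f s) ≤ Fintype.card ι * tailBound K d n := by
      intro f hf
      refine (mass_iUnion_le hμ f).trans ((Finset.sum_le_card_nsmul _ _ _ fun s _ => hf s).trans ?_)
      rw [nsmul_eq_mul, Finset.card_univ]
    have h1 := hsum _ fun s => h.mass_locField_tail_le hm hσ hq hq0 hq1 hd0 s
    have h2 := hsum _ fun s => h.mass_locSlope_tail_le hm hσ hq hq0 hq1 hd0 s
    refine (mass_mono hμ hsub).trans ((mass_union_le hμ _ _).trans ?_)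
    have h3 := mass_union_le hμ
      (⋃ s, (Bᶜ ∩ {x | K / n + d ≤ σ * (P.locField s x - Ψ q)}))
      (⋃ s, (Bᶜ ∩ {x | K / n + d ≤ σ * (P.locSlope s x - Ψ' q)}))
    linarith
  · intro x hx s
    have hx1 : x ∉ B := fun hx' => hx (Or.inl (Or.inl hx'))
    have hx2 : ¬ (K / n + d ≤ σ * (P.locField s x - Ψ q)) :=
      fun hx' => hx (Or.inl (Or.inr (Set.mem_iUnion.2 ⟨s, hx'⟩)))
    have hx3 : ¬ (K / n + d ≤ σ * (P.locSlope s x - Ψ' q)) :=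
      fun hx' => hx (Or.inr (Set.mem_iUnion.2 ⟨s, hx'⟩))
    have hl := abs_le.1 (hm.lipschitz q hqI p hpI)
    have hl' := abs_le.1 (hm.slope_lipschitz q hqI p hpI)
    rw [hqp] at hl hl'
    refine ⟨?_, ?_, ?_⟩
    · by_contra hlt
      exact hx1 ⟨s, not_le.1 hlt⟩
    · rcases hσ with rfl | rfl <;> linarith
    · rcases hσ with rfl | rfl <;> linarith

end BoolCube.PolyHam.IsNear

namespace BoolCube

section Disc

variable {ι : Type} [DecidableEq ι]

theorem disc_sub (F G : (ι → Bool) → ℝ) (s : ι) (x : ι → Bool) :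
    disc (fun x => F x - G x) s x = disc F s x - disc G s x := by
  simp only [disc]; ring

theorem disc_add (F G : (ι → Bool) → ℝ) (s : ι) (x : ι → Bool) :
    disc (fun x => F x + G x) s x = disc F s x + disc G s x := by
  simp only [disc]; ring

theorem disc_const_mul (c : ℝ) (F : (ι → Bool) → ℝ) (s : ι) (x : ι → Bool) :
    disc (fun x => c * F x) s x = c * disc F s x := by
  simp only [disc]; ring

theorem disc_sum {κ : Type*} (T : Finset κ) (F : κ → (ι → Bool) → ℝ) (s : ι) (x : ι → Bool) :
    disc (fun x => ∑ i ∈ T, F i x) s x = ∑ i ∈ T, disc (F i) s x := by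
  simp only [disc, Finset.sum_sub_distrib]

variable [Fintype ι]

/-- The number of coordinates that are switched on. -/
def size (x : ι → Bool) : ℝ := ∑ s, ind s x

theorem disc_size (s : ι) (x : ι → Bool) : disc size s x = 1 := by
  have := disc_sum Finset.univ (fun s : ι => ind s) s x
  change disc size s x = _ at this
  rw [this]
  simp [disc_ind]

omit [Fintype ι] [DecidableEq ι] in
theorem ind_nonneg (s : ι) (x : ι → Bool) : 0 ≤ ind s x := by
  unfold ind; split_ifs <;> norm_num

omit [Fintype ι] [DecidableEq ι] in
theorem ind_le_one (s : ι) (x : ι → Bool) : ind s x ≤ 1 := by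
  unfold ind; split_ifs <;> norm_num

omit [DecidableEq ι] in
theorem size_nonneg (x : ι → Bool) : 0 ≤ size x := Finset.sum_nonneg fun s _ => ind_nonneg s x

omit [DecidableEq ι] in
theorem size_le_card (x : ι → Bool) : size x ≤ Fintype.card ι := by
  refine (Finset.sum_le_card_nsmul _ _ 1 fun s _ => ind_le_one s x).trans ?_
  simp

end Disc

namespace PolyHam

variable {ι A : Type} [Fintype ι] [DecidableEq ι] [Fintype A] (P : PolyHam ι A)

/-- The bad sets: an up-set and a down-set of small mass off which the local fields are within
`ε` of their mean-field values. -/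
structure BadSets (Ψ Ψ' : ℝ → ℝ) (p ε : ℝ) (n : ℕ) (U D : Set (ι → Bool)) : Prop where
  nonneg : 0 ≤ ε
  upper : IsUpperSet U
  lower : IsLowerSet D
  mass_le : (n : ℝ) ^ 4 * (mass P.gibbs U + mass P.gibbs D) ≤ 1
  condProb_near : ∀ x ∉ U, x ∉ D → ∀ s, |P.condProb s x - p| ≤ ε
  locField_near : ∀ x ∉ U, x ∉ D → ∀ s, |P.locField s x - Ψ p| ≤ ε
  locSlope_near : ∀ x ∉ U, x ∉ D → ∀ s, |P.locSlope s x - Ψ' p| ≤ ε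

/-- The remainder in the linearization of the sum of the conditional probabilities. -/
def remainder (θ : ℝ) (x : ι → Bool) : ℝ := θ * size x - ∑ s, P.condProb s x

/-- The sum of the conditionally centred coordinates. -/
def centred (x : ι → Bool) : ℝ := ∑ s, (ind s x - P.condProb s x)

theorem disc_remainder (θ : ℝ) (s : ι) (x : ι → Bool) :
    disc (P.remainder θ) s x = θ - ∑ u, disc (P.condProb u) s x := by
  unfold remainder
  rw [disc_sub, disc_const_mul, disc_size, mul_one]
  exact congrArg _ (disc_sum Finset.univ P.condProb s x)

theorem disc_centred (s : ι) (x : ι → Bool) :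
    disc P.centred s x = 1 - ∑ u, disc (P.condProb u) s x := by
  unfold centred
  simp only [Finset.sum_sub_distrib]
  rw [disc_sub, disc_sum]
  simp only [disc_ind, Finset.sum_ite_eq', Finset.mem_univ, if_true]
  exact congrArg _ (disc_sum Finset.univ P.condProb s x)

theorem centred_eq (θ : ℝ) (x : ι → Bool) :
    P.centred x = (1 - θ) * size x + P.remainder θ x := by
  rw [centred, Finset.sum_sub_distrib, remainder, size]
  ring

theorem mean_centred_mul (F : (ι → Bool) → ℝ) :
    mean P.gibbs (fun x => P.centred x * F x) =
      ∑ s, mean P.gibbs (fun x => P.condVar s x * disc F s x) := by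
  simp only [centred, Finset.sum_mul]
  rw [mean_sum]
  exact Finset.sum_congr rfl fun s _ => P.mean_ind_sub_condProb_mul s F

theorem mean_centred : mean P.gibbs P.centred = 0 := by
  have := P.mean_centred_mul 1
  simpa [disc, mean] using this

theorem centred_eq_sub_mean (θ : ℝ) (x : ι → Bool) :
    P.centred x = (1 - θ) * (size x - mean P.gibbs size) +
      (P.remainder θ x - mean P.gibbs (P.remainder θ)) := by
  have h1 := P.mean_centred
  rw [funext (P.centred_eq θ), mean_add, mean_const_mul] at h1
  rw [P.centred_eq θ]
  linarith

omit [Fintype ι] in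
theorem condVar_nonneg (s : ι) (x : ι → Bool) : 0 ≤ P.condVar s x :=
  mul_nonneg (P.condProb_pos s x).le (sub_nonneg.2 (P.condProb_lt_one s x).le)

omit [Fintype ι] in
theorem condVar_le_one (s : ι) (x : ι → Bool) : P.condVar s x ≤ 1 := by
  have := P.condProb_pos s x
  have := P.condProb_lt_one s x
  rw [condVar]
  nlinarith

theorem mean_condVar_le_one (s : ι) : mean P.gibbs (P.condVar s) ≤ 1 := by
  rw [← mean_const P.sum_gibbs 1]
  exact mean_mono (fun x => (P.gibbs_pos x).le) (P.condVar_le_one s)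

omit [Fintype ι] in
theorem abs_condVar_sub_le {p : ℝ} (h0 : 0 < p) (h1 : p < 1) (s : ι) (x : ι → Bool) :
    |P.condVar s x - p * (1 - p)| ≤ |P.condProb s x - p| := by
  have h2 := P.condProb_pos s x
  have h3 := P.condProb_lt_one s x
  have e : P.condVar s x - p * (1 - p) = (P.condProb s x - p) * (1 - P.condProb s x - p) := by
    rw [condVar]; ring
  rw [e, abs_mul]
  refine mul_le_of_le_one_right (abs_nonneg _) ?_
  rw [abs_le]
  constructor <;> linarith

variable {P} {Ψ Ψ' : ℝ → ℝ} {p ρ K ε : ℝ} {n : ℕ} {U D : Set (ι → Bool)}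

namespace IsNear

variable (h : P.IsNear Ψ Ψ' K n)
include h

theorem sum_disc_condProb_nonneg (s : ι) (x : ι → Bool) :
    0 ≤ ∑ u, disc (P.condProb u) s x :=
  Finset.sum_nonneg fun u _ => disc_nonneg (P.monotone_condProb h.coef_nonneg u) s x

theorem locSlope_le (hm : MeanField Ψ Ψ' p ρ K) (s : ι) (x : ι → Bool) :
    P.locSlope s x ≤ 2 * K := by
  rw [← sum_disc_locField]
  exact (Finset.sum_le_sum fun t _ => (le_abs_self _).trans
    (P.abs_disc_locField_le h.coef_nonneg s t x)).trans (h.sum_influence_le hm s)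

theorem abs_disc_remainder_le (hm : MeanField Ψ Ψ' p ρ K) (s : ι) (x : ι → Bool) :
    |disc (P.remainder (p * (1 - p) * Ψ' p)) s x| ≤ 3 * K := by
  rw [disc_remainder]
  have h1 := h.sum_disc_condProb_nonneg s x
  have h2 : ∑ u, disc (P.condProb u) s x ≤ 2 * K := by
    refine le_trans (Finset.sum_le_sum fun u _ => ?_)
      ((P.sum_disc_locField s x).le.trans (h.locSlope_le hm s x))
    rw [P.disc_locField_comm s u, ← abs_of_nonneg (P.disc_locField_nonneg h.coef_nonneg u s x)]
    exact (le_abs_self _).trans (abs_sigmoid_sub_le _ _)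
  have h3 := hm.subcritical
  have h4 : 0 ≤ p * (1 - p) * Ψ' p :=
    mul_nonneg (mul_nonneg hm.p_pos.le (by linarith [hm.p_lt_one])) hm.slope_nonneg
  have := hm.one_le
  rw [abs_le]
  constructor <;> linarith

theorem abs_disc_remainder_le_of_good (hm : MeanField Ψ Ψ' p ρ K)
    (hb : P.BadSets Ψ Ψ' p ε n U D) {s : ι} {x : ι → Bool}
    (hU : Function.update x s true ∉ U) (hD : Function.update x s false ∉ D) :
    |disc (P.remainder (p * (1 - p) * Ψ' p)) s x| ≤ (2 * K + 1) * ε := by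
  have hU' : Function.update x s false ∉ U := fun h => hU (hb.upper (update_mono x s) h)
  have hD' : Function.update x s true ∉ D := fun h => hD (hb.lower (update_mono x s) h)
  have hp0 := hm.p_pos
  have hp1 := hm.p_lt_one
  have h1 : ∀ u, |disc (P.condProb u) s x - p * (1 - p) * disc (P.locField s) u x| ≤
      ε * disc (P.locField s) u x := by
    intro u
    have := abs_sigmoid_sub_sub_le (hb.locField_near _ hU' hD u) (hb.locField_near _ hU hD' u)
    rw [hm.fixed] at this
    rw [P.disc_locField_comm s u]
    refine this.trans (le_of_eq ?_)
    rw [← abs_of_nonneg (P.disc_locField_nonneg h.coef_nonneg u s x)]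
    rfl
  have h2 : |∑ u, disc (P.condProb u) s x - p * (1 - p) * P.locSlope s x| ≤
      ε * P.locSlope s x := by
    rw [← sum_disc_locField, Finset.mul_sum, Finset.mul_sum, ← Finset.sum_sub_distrib]
    exact (Finset.abs_sum_le_sum_abs _ _).trans (Finset.sum_le_sum fun u _ => h1 u)
  have h3 := hb.locSlope_near _ hU hD' s
  rw [locSlope_update] at h3
  have h4 := h.locSlope_le hm s x
  have hε : 0 ≤ ε := (abs_nonneg _).trans h3
  rw [disc_remainder]
  rw [abs_le] at h2 h3 ⊢
  have hw : 0 ≤ p * (1 - p) ∧ p * (1 - p) ≤ 1 := by constructor <;> nlinarith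
  have h5 := mul_le_mul_of_nonneg_left h3.1 hw.1
  have h6 := mul_le_mul_of_nonneg_left h3.2 hw.1
  have h7 : p * (1 - p) * ε ≤ ε := mul_le_of_le_one_left hε hw.2
  have h8 := mul_le_mul_of_nonneg_left h4 hε
  constructor <;> linarith

/-- The variance of the remainder, in terms of the variance of the size. -/
theorem var_remainder_le (hm : MeanField Ψ Ψ' p ρ K) (hb : P.BadSets Ψ Ψ' p ε n U D) :
    var P.gibbs (P.remainder (p * (1 - p) * Ψ' p)) ≤
      2 * ((2 * K + 1) * ε) ^ 2 * var P.gibbs size + 36 * K ^ 2 := by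
  classical
  have hK := hm.one_le
  have hμ : ∀ x, 0 ≤ P.gibbs x := fun x => (P.gibbs_pos x).le
  set N : ℝ := (Fintype.card ι : ℝ) with hN
  set T1 : (ι → Bool) → ℝ := U.indicator size with hT1
  set T2 : (ι → Bool) → ℝ := D.indicator (fun x => N - size x) with hT2
  have hd1 : ∀ s x, (if Function.update x s true ∈ U then 1 else 0) ≤ disc T1 s x := by
    intro s x
    have h1 := disc_size s x
    have h2 := size_nonneg (Function.update x s true)
    have h3 := size_nonneg (Function.update x s false)
    rw [disc] at h1
    simp only [disc, hT1]
    by_cases hu : Function.update x s true ∈ U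
    · rw [if_pos hu, Set.indicator_of_mem hu]
      by_cases hd : Function.update x s false ∈ U
      · rw [Set.indicator_of_mem hd]; linarith
      · rw [Set.indicator_of_notMem hd]; linarith
    · rw [if_neg hu, Set.indicator_of_notMem hu,
        Set.indicator_of_notMem fun h => hu (hb.upper (update_mono x s) h), sub_zero]
  have hd2 : ∀ s x, (if Function.update x s false ∈ D then 1 else 0) ≤ -disc T2 s x := by
    intro s x
    have h1 := disc_size s x
    have h2 := size_le_card (Function.update x s true)
    have h3 := size_le_card (Function.update x s false)
    rw [disc] at h1
    simp only [disc, hT2]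
    by_cases hd : Function.update x s false ∈ D
    · rw [if_pos hd, Set.indicator_of_mem hd]
      by_cases hu : Function.update x s true ∈ D
      · rw [Set.indicator_of_mem hu]; linarith
      · rw [Set.indicator_of_notMem hu]; linarith
    · rw [if_neg hd, Set.indicator_of_notMem hd,
        Set.indicator_of_notMem fun h => hd (hb.lower (update_mono x s) h), sub_zero, neg_zero]
  have hdom : ∀ s x, |disc (P.remainder (p * (1 - p) * Ψ' p)) s x| ≤
      disc (fun x => (2 * K + 1) * ε * size x + 3 * K * (T1 x - T2 x)) s x := by
    intro s x
    rw [disc_add, disc_const_mul, disc_const_mul, disc_size, disc_sub]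
    have e1 := hd1 s x
    have e2 := hd2 s x
    have hε : 0 ≤ (2 * K + 1) * ε := mul_nonneg (by linarith) hb.nonneg
    have e3 : 0 ≤ disc T1 s x := le_trans (by split_ifs <;> norm_num) e1
    have e4 : 0 ≤ -disc T2 s x := le_trans (by split_ifs <;> norm_num) e2
    by_cases hgood : Function.update x s true ∉ U ∧ Function.update x s false ∉ D
    · have := h.abs_disc_remainder_le_of_good hm hb hgood.1 hgood.2
      nlinarith
    · have e5 : 1 ≤ disc T1 s x - disc T2 s x := by
        rw [not_and_or, not_not, not_not] at hgood
        rcases hgood with hu | hd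
        · rw [if_pos hu] at e1; linarith
        · rw [if_pos hd] at e2; linarith
      have := h.abs_disc_remainder_le hm s x
      nlinarith
  have hN2 : N ≤ (n : ℝ) ^ 2 := h.card_le
  have hN0 : 0 ≤ N := Nat.cast_nonneg _
  have hT : ∀ x, (T1 x - T2 x) ^ 2 ≤ 2 * (n : ℝ) ^ 4 *
      (U.indicator (1 : (ι → Bool) → ℝ) x + D.indicator (1 : (ι → Bool) → ℝ) x) := by
    intro x
    have h2 := size_nonneg x
    have h3 := size_le_card x
    have hn4 : N ^ 2 ≤ (n : ℝ) ^ 4 := by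
      calc N ^ 2 ≤ ((n : ℝ) ^ 2) ^ 2 := pow_le_pow_left₀ hN0 hN2 2
        _ = _ := by ring
    have h5 : size x ^ 2 ≤ N ^ 2 := pow_le_pow_left₀ h2 h3 2
    have h6 : (N - size x) ^ 2 ≤ N ^ 2 := pow_le_pow_left₀ (by linarith) (by linarith) 2
    by_cases hu : x ∈ U <;> by_cases hd : x ∈ D <;> simp only [hT1, hT2, hu, hd,
      Set.indicator_of_mem, Set.indicator_of_notMem, not_false_eq_true, Pi.one_apply]
    · nlinarith [sq_nonneg (size x + (N - size x))]
    · nlinarith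
    · nlinarith
    · nlinarith
  refine (((P.isFKG_gibbs h.coef_nonneg).var_le_var hdom).trans (var_add_le hμ _ _)).trans ?_
  rw [var_const_mul, var_const_mul]
  have hT' : var P.gibbs (fun x => T1 x - T2 x) ≤ 2 := by
    refine (var_le_mean_sq P.sum_gibbs _).trans ((mean_mono hμ hT).trans ?_)
    rw [mean_const_mul, mean_add]
    have := hb.mass_le
    simp only [mass] at this
    linarith
  nlinarith [mul_le_mul_of_nonneg_left hT' (sq_nonneg (3 * K))]

theorem mean_centred_sq_le : mean P.gibbs (fun x => P.centred x ^ 2) ≤ (n : ℝ) ^ 2 := by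
  simp only [pow_two (P.centred _)]
  rw [mean_centred_mul]
  refine (Finset.sum_le_card_nsmul _ _ 1 fun s _ => ?_).trans (by simpa using h.card_le)
  refine (mean_mono (fun x => (P.gibbs_pos x).le) fun x => ?_).trans (P.mean_condVar_le_one s)
  refine mul_le_of_le_one_right (P.condVar_nonneg s x) ?_
  rw [disc_centred]
  linarith [h.sum_disc_condProb_nonneg s x]

theorem var_size_le (hm : MeanField Ψ Ψ' p ρ K) (hb : P.BadSets Ψ Ψ' p ε n U D)
    (hε : 8 * ((2 * K + 1) * ε) ^ 2 ≤ (1 - p * (1 - p) * Ψ' p) ^ 2) :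
    var P.gibbs size ≤ 2 / (1 - p * (1 - p) * Ψ' p) *
      (n ^ 2 + 36 * K ^ 2 / (1 - p * (1 - p) * Ψ' p)) := by
  have hμ : ∀ x, 0 ≤ P.gibbs x := fun x => (P.gibbs_pos x).le
  set θ := p * (1 - p) * Ψ' p with hθ
  set τ := 1 - θ with hτ
  have hτ0 : 0 < τ := sub_pos.2 hm.subcritical
  have hR := h.var_remainder_le hm hb
  have hv := var_nonneg hμ (size (ι := ι))
  have h1 : mean P.gibbs (fun x => P.centred x * (size x - mean P.gibbs size)) ≤ (n : ℝ) ^ 2 := by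
    rw [mean_centred_mul]
    refine (Finset.sum_le_card_nsmul _ _ 1 fun s _ => ?_).trans (by simpa using h.card_le)
    refine (mean_mono hμ fun x => ?_).trans (P.mean_condVar_le_one s)
    rw [disc_sub, disc_size]
    simp [disc]
  have h2 : 3 * τ / 4 * var P.gibbs size - 1 / τ * var P.gibbs (P.remainder θ) ≤
      mean P.gibbs (fun x => P.centred x * (size x - mean P.gibbs size)) := by
    rw [var, var, ← mean_const_mul, ← mean_const_mul, ← mean_sub]
    refine mean_mono hμ fun x => ?_
    rw [P.centred_eq_sub_mean θ]
    set a := size x - mean P.gibbs size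
    set b := P.remainder θ x - mean P.gibbs (P.remainder θ)
    have : 0 ≤ τ * (a / 2 + b / τ) ^ 2 := mul_nonneg hτ0.le (sq_nonneg _)
    have e : τ * (a / 2 + b / τ) ^ 2 = τ / 4 * a ^ 2 + b * a + 1 / τ * b ^ 2 := by
      field_simp
      ring
    rw [← hτ]
    nlinarith
  have h3 : 1 / τ * var P.gibbs (P.remainder θ) ≤
      τ / 4 * var P.gibbs size + 36 * K ^ 2 / τ := by
    have h4 : var P.gibbs (P.remainder θ) ≤ τ ^ 2 / 4 * var P.gibbs size + 36 * K ^ 2 := by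
      refine hR.trans (add_le_add_left (mul_le_mul_of_nonneg_right ?_ hv) _)
      linarith
    calc _ ≤ 1 / τ * (τ ^ 2 / 4 * var P.gibbs size + 36 * K ^ 2) :=
          mul_le_mul_of_nonneg_left h4 (by positivity)
      _ = _ := by field_simp
  have h5 : τ / 2 * var P.gibbs size ≤ n ^ 2 + 36 * K ^ 2 / τ := by linarith
  calc var P.gibbs size = 2 / τ * (τ / 2 * var P.gibbs size) := by field_simp
    _ ≤ _ := mul_le_mul_of_nonneg_left h5 (by positivity)

theorem mean_abs_condVar_sub_le (hm : MeanField Ψ Ψ' p ρ K) (hb : P.BadSets Ψ Ψ' p ε n U D)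
    (s : ι) : mean P.gibbs (fun x => |P.condVar s x - p * (1 - p)|) ≤ ε + 1 / n := by
  classical
  have hμ : ∀ x, 0 ≤ P.gibbs x := fun x => (P.gibbs_pos x).le
  have hp0 := hm.p_pos
  have hp1 := hm.p_lt_one
  have hn := h.n_pos
  have h1 : ∀ x, |P.condVar s x - p * (1 - p)| ≤ ε +
      (U.indicator (1 : (ι → Bool) → ℝ) x + D.indicator (1 : (ι → Bool) → ℝ) x) := by
    intro x
    refine (P.abs_condVar_sub_le hp0 hp1 s x).trans ?_
    have h2 : |P.condProb s x - p| ≤ 1 := by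
      have := P.condProb_pos s x
      have := P.condProb_lt_one s x
      rw [abs_le]
      constructor <;> linarith
    have hε := hb.nonneg
    by_cases hu : x ∈ U <;> by_cases hd : x ∈ D <;> simp only [hu, hd,
      Set.indicator_of_mem, Set.indicator_of_notMem, not_false_eq_true, Pi.one_apply]
    · linarith
    · linarith
    · linarith
    · linarith [hb.condProb_near x hu hd s]
  refine (mean_mono hμ h1).trans ?_
  rw [mean_add, mean_const P.sum_gibbs, mean_add]
  refine add_le_add_right ?_ _
  have h3 := hb.mass_le
  have h4 := add_nonneg (mass_nonneg hμ U) (mass_nonneg hμ D)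
  change mass P.gibbs U + mass P.gibbs D ≤ 1 / n
  rw [le_div_iff₀ hn]
  refine le_trans ?_ h3
  rw [mul_comm]
  refine mul_le_mul_of_nonneg_right ?_ h4
  exact le_self_pow₀ (by exact_mod_cast (by have := h.two_le; omega : 1 ≤ n)) (by norm_num)

/-- A uniform lower bound for the conditional variances. -/
theorem le_condVar (hm : MeanField Ψ Ψ' p ρ K) (s : ι) (x : ι → Bool) :
    Real.sigmoid (-(2 * K)) ^ 2 ≤ P.condVar s x := by
  have hK := hm.one_le
  have h3 : K / n ≤ K := div_le_self (by linarith)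
    (by exact_mod_cast (by have := h.two_le; omega : 1 ≤ n))
  have h1 := h.locField_top_le s x
  have h2 := h.le_locField_bot s x
  have h4 := abs_le.1 (hm.abs_le 1 (by simp))
  have h5 := abs_le.1 (hm.abs_le 0 (by simp))
  have h6 : Real.sigmoid (-(2 * K)) ≤ P.condProb s x := Real.sigmoid_monotone (by linarith)
  have h7 : Real.sigmoid (-(2 * K)) ≤ 1 - P.condProb s x := by
    rw [condProb, ← Real.sigmoid_neg]
    exact Real.sigmoid_monotone (by linarith)
  have h8 := Real.sigmoid_pos (-(2 * K))
  rw [condVar, pow_two]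
  exact mul_le_mul h6 h7 h8.le (P.condProb_pos s x).le

end IsNear

end PolyHam

end BoolCube

open Filter Topology in
theorem tendsto_natCast_rpow_neg_quarter :
    Tendsto (fun n : ℕ => (n : ℝ) ^ (-(1 / 4) : ℝ)) atTop (𝓝 0) :=
  (tendsto_rpow_neg_atTop (by norm_num)).comp tendsto_natCast_atTop_atTop

theorem one_div_le_rpow_neg_quarter {n : ℕ} (hn : 1 ≤ n) :
    1 / (n : ℝ) ≤ (n : ℝ) ^ (-(1 / 4) : ℝ) := by
  have hn' : (1 : ℝ) ≤ n := by exact_mod_cast hn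
  rw [one_div, ← Real.rpow_neg_one]
  exact Real.rpow_le_rpow_of_exponent_le hn' (by norm_num)

theorem sq_rpow_neg_quarter_mul {n : ℕ} (hn : 1 ≤ n) :
    ((n : ℝ) ^ (-(1 / 4) : ℝ)) ^ 2 * n = (n : ℝ) ^ (1 / 2 : ℝ) := by
  have hn' : (0 : ℝ) < n := by exact_mod_cast hn
  rw [← Real.rpow_natCast, ← Real.rpow_mul hn'.le]
  nth_rewrite 2 [← Real.rpow_one (n : ℝ)]
  rw [← Real.rpow_add hn']
  norm_num

open Filter Topology in
theorem eventually_tailBound_le {K : ℝ} (hK : 1 ≤ K) : ∀ᶠ n : ℕ in atTop,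
    (n : ℝ) ^ 4 * (2 * ((n + 2) * ((n : ℝ) ^ 2 *
      BoolCube.PolyHam.IsNear.tailBound K ((n : ℝ) ^ (-(1 / 4) : ℝ)) n))) ≤ 1 := by
  have hc : 0 < 1 / (8 * K ^ 4) := by positivity
  have h1 := (tendsto_rpow_mul_exp_neg_mul_atTop_nhds_zero 14 _ hc).comp
    ((tendsto_rpow_atTop (y := 1 / 2) (by norm_num)).comp tendsto_natCast_atTop_atTop)
  have h2 := h1.eventually (ge_mem_nhds (show (0 : ℝ) < 1 / 4 by norm_num))
  filter_upwards [h2, eventually_ge_atTop 2] with n h3 hn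
  have hn' : (2 : ℝ) ≤ n := by exact_mod_cast hn
  simp only [Function.comp_apply] at h3
  rw [← Real.rpow_mul (by positivity), show (1 / 2 : ℝ) * 14 = (7 : ℕ) by norm_num,
    Real.rpow_natCast] at h3
  rw [BoolCube.PolyHam.IsNear.tailBound, sq_rpow_neg_quarter_mul (by omega)]
  rw [show -(1 / (8 * K ^ 4)) * (n : ℝ) ^ (1 / 2 : ℝ) = -((n : ℝ) ^ (1 / 2 : ℝ) / (8 * K ^ 4)) by
    ring] at h3
  set E := Real.exp (-((n : ℝ) ^ (1 / 2 : ℝ) / (8 * K ^ 4)))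
  have hE : 0 < E := Real.exp_pos _
  have h4 : (n + 2 : ℝ) ≤ 2 * n := by linarith
  have h5 : 0 ≤ (n : ℝ) ^ 6 * E := by positivity
  nlinarith [mul_le_mul_of_nonneg_left h4 h5]

namespace BoolCube.PolyHam.IsNear

variable {ι A : Type} [Fintype ι] [DecidableEq ι] [Fintype A] {P : PolyHam ι A}
variable {Ψ Ψ' : ℝ → ℝ} {p ρ K : ℝ} {n : ℕ}

theorem exists_badSets (h : P.IsNear Ψ Ψ' K n) (hm : MeanField Ψ Ψ' p ρ K) {d : ℝ}
    (hd : 1 / n ≤ d) (h0 : (K + 2) / (1 - ρ) * d < (1 - ρ) * p)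
    (h1 : (K + 2) / (1 - ρ) * d < (1 - ρ) * (1 - p))
    (hn : (n : ℝ) ^ 4 * (2 * ((n + 2) * ((n : ℝ) ^ 2 * tailBound K d n))) ≤ 1) :
    ∃ U D, P.BadSets Ψ Ψ' p ((K * ((K + 2) / (1 - ρ)) + K + 1) * d) n U D := by
  have hK := hm.one_le
  have hρ := sub_pos.2 hm.rate_lt_one
  have hd0 : 0 ≤ d := le_trans (by positivity) hd
  obtain ⟨U, hU, -, hUm, hUx⟩ := h.exists_bad_set hm (Or.inl ⟨rfl, rfl⟩) hd h1
  obtain ⟨D, -, hD, hDm, hDx⟩ := h.exists_bad_set hm (Or.inr ⟨rfl, rfl⟩) hd h0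
  have hC : (K + 2) / (1 - ρ) * d ≤ (K * ((K + 2) / (1 - ρ)) + K + 1) * d := by
    refine mul_le_mul_of_nonneg_right ?_ hd0
    have : 0 ≤ (K + 2) / (1 - ρ) := by positivity
    nlinarith
  refine ⟨U, D, ⟨?_, hU rfl, hD rfl, ?_, ?_, ?_, ?_⟩⟩
  · positivity
  · refine le_trans ?_ hn
    refine mul_le_mul_of_nonneg_left ?_ (by positivity)
    have h2 : (n + 2 : ℝ) * (Fintype.card ι * tailBound K d n) ≤
        (n + 2) * ((n : ℝ) ^ 2 * tailBound K d n) :=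
      mul_le_mul_of_nonneg_left
        (mul_le_mul_of_nonneg_right h.card_le (tailBound_pos K d n).le) (by positivity)
    linarith
  all_goals
    intro x hxU hxD s
    have e1 := hUx x hxU s
    have e2 := hDx x hxD s
    rw [abs_le]
    constructor <;> linarith [e1.1, e1.2.1, e1.2.2, e2.1, e2.2.1, e2.2.2]

end BoolCube.PolyHam.IsNear

open Filter Topology in
/-- For large `n`, a Gibbs measure that is near a subcritical mean field has bad sets with error
of order `n ^ (-1/4)`. -/
theorem MeanField.exists_badSets {Ψ Ψ' : ℝ → ℝ} {p ρ K : ℝ} (hm : MeanField Ψ Ψ' p ρ K) :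
    ∃ C : ℝ, ∃ n₀ : ℕ, 0 < C ∧ ∀ n : ℕ, n₀ ≤ n →
      8 * ((2 * K + 1) * (C * (n : ℝ) ^ (-(1 / 4) : ℝ))) ^ 2 ≤ (1 - p * (1 - p) * Ψ' p) ^ 2 ∧
      ∀ {ι A : Type} [Fintype ι] [DecidableEq ι] [Fintype A] (P : BoolCube.PolyHam ι A),
        P.IsNear Ψ Ψ' K n → ∃ U D, P.BadSets Ψ Ψ' p (C * (n : ℝ) ^ (-(1 / 4) : ℝ)) n U D := by
  have hK := hm.one_le
  have hρ := sub_pos.2 hm.rate_lt_one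
  have hp0 := hm.p_pos
  have hp1 := sub_pos.2 hm.p_lt_one
  have hτ := sub_pos.2 hm.subcritical
  set C := K * ((K + 2) / (1 - ρ)) + K + 1 with hC
  have hd := tendsto_natCast_rpow_neg_quarter
  have h1 : ∀ᶠ n : ℕ in atTop, (K + 2) / (1 - ρ) * (n : ℝ) ^ (-(1 / 4) : ℝ) < (1 - ρ) * p :=
    (hd.const_mul _).eventually (gt_mem_nhds (by rw [mul_zero]; positivity))
  have h2 : ∀ᶠ n : ℕ in atTop,
      (K + 2) / (1 - ρ) * (n : ℝ) ^ (-(1 / 4) : ℝ) < (1 - ρ) * (1 - p) :=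
    (hd.const_mul _).eventually (gt_mem_nhds (by rw [mul_zero]; positivity))
  have h3 : ∀ᶠ n : ℕ in atTop, 8 * ((2 * K + 1) * (C * (n : ℝ) ^ (-(1 / 4) : ℝ))) ^ 2 ≤
      (1 - p * (1 - p) * Ψ' p) ^ 2 := by
    refine (((((hd.const_mul C).const_mul (2 * K + 1)).pow 2).const_mul 8)).eventually
      (ge_mem_nhds ?_)
    rw [mul_zero, mul_zero]
    norm_num
    positivity
  obtain ⟨n₀, hn₀⟩ := eventually_atTop.1 (h1.and (h2.and (h3.and (eventually_tailBound_le hK))))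
  refine ⟨C, n₀, by positivity, fun n hn => ?_⟩
  obtain ⟨e1, e2, e3, e4⟩ := hn₀ n hn
  refine ⟨e3, fun P h => ?_⟩
  exact h.exists_badSets hm (one_div_le_rpow_neg_quarter (by have := h.two_le; omega)) e1 e2 e4

/-- The standard normal distribution function. -/
def gaussCdf (z : ℝ) : ℝ := (gaussianReal 0 1 (Set.Iic z)).toReal

/-- The standard normal density. -/
def gaussPdf (z : ℝ) : ℝ := gaussianPDFReal 0 1 z

theorem gaussPdf_pos (z : ℝ) : 0 < gaussPdf z := gaussianPDFReal_pos 0 1 z one_ne_zero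

theorem gaussPdf_eq (z : ℝ) : gaussPdf z = (√(2 * π))⁻¹ * Real.exp (-(1 / 2) * z ^ 2) := by
  rw [gaussPdf, gaussianPDFReal_def]
  simp only [NNReal.coe_one, mul_one, sub_zero]
  ring_nf

theorem gaussPdf_neg (z : ℝ) : gaussPdf (-z) = gaussPdf z := by
  rw [gaussPdf_eq, gaussPdf_eq, neg_sq]

theorem hasDerivAt_gaussPdf (z : ℝ) : HasDerivAt gaussPdf (-z * gaussPdf z) z := by
  have h : HasDerivAt (fun z : ℝ => (√(2 * π))⁻¹ * Real.exp (-(1 / 2) * z ^ 2))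
      ((√(2 * π))⁻¹ * (Real.exp (-(1 / 2) * z ^ 2) * (-(1 / 2) * (2 * z)))) z := by
    refine HasDerivAt.const_mul _ (HasDerivAt.exp (HasDerivAt.const_mul _ ?_))
    simpa using hasDerivAt_pow 2 z
  rw [funext gaussPdf_eq]
  convert h using 1
  ring

theorem continuous_gaussPdf : Continuous gaussPdf :=
  continuous_iff_continuousAt.2 fun z => (hasDerivAt_gaussPdf z).continuousAt

theorem gaussCdf_eq_integral (z : ℝ) : gaussCdf z = ∫ x in Set.Iic z, gaussPdf x := by
  rw [gaussCdf, gaussianReal_apply_eq_integral 0 one_ne_zero, ENNReal.toReal_ofReal]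
  · rfl
  · exact integral_nonneg fun x => gaussianPDFReal_nonneg 0 1 x

theorem integrable_gaussPdf : Integrable gaussPdf := integrable_gaussianPDFReal 0 1

theorem hasDerivAt_gaussCdf (z : ℝ) : HasDerivAt gaussCdf (gaussPdf z) z := by
  have h : gaussCdf = fun z => gaussCdf 0 + ∫ x in (0 : ℝ)..z, gaussPdf x := by
    funext z
    rw [gaussCdf_eq_integral, gaussCdf_eq_integral, ← intervalIntegral.integral_Iic_sub_Iic
      integrable_gaussPdf.integrableOn integrable_gaussPdf.integrableOn]
    ring
  rw [h]
  exact (continuous_gaussPdf.integral_hasStrictDerivAt 0 z).hasDerivAt.const_add _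

theorem gaussCdf_nonneg (z : ℝ) : 0 ≤ gaussCdf z := ENNReal.toReal_nonneg

theorem gaussCdf_add_neg (z : ℝ) : gaussCdf z + gaussCdf (-z) = 1 := by
  have h1 : gaussCdf (-z) = (gaussianReal 0 1 (Set.Ici z)).toReal := by
    rw [gaussCdf]
    nth_rewrite 1 [← neg_zero (G := ℝ), ← gaussianReal_map_neg]
    rw [Measure.map_apply measurable_neg measurableSet_Iic]
    simp
  have : NullSingletonClass (gaussianReal 0 1) :=
    nullSingletonClass_gaussianReal one_ne_zero
  rw [h1, gaussCdf, ← measure_congr (Ioi_ae_eq_Ici (μ := gaussianReal 0 1) (a := z)),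
    ← Set.compl_Iic]
  exact probReal_add_probReal_compl measurableSet_Iic

theorem gaussCdf_le_one (z : ℝ) : gaussCdf z ≤ 1 := by
  have := gaussCdf_add_neg z
  have := gaussCdf_nonneg (-z)
  linarith

open Filter Topology in
theorem tendsto_gaussPdf_atBot : Tendsto gaussPdf atBot (𝓝 0) := by
  have h1 : Tendsto (fun z : ℝ => (1 / 2) * z ^ 2) atBot atTop :=
    (tendsto_pow_atTop (two_ne_zero)).comp tendsto_abs_atBot_atTop |>.congr
      (fun x => by simp) |>.const_mul_atTop (by norm_num)
  have h2 := (Real.tendsto_exp_neg_atTop_nhds_zero.comp h1).const_mul (√(2 * π))⁻¹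
  rw [mul_zero] at h2
  refine h2.congr fun z => ?_
  rw [gaussPdf_eq, Function.comp_apply, neg_mul]

/-- Mills' bound for the lower tail. -/
theorem neg_mul_gaussCdf_le (z : ℝ) : -z * gaussCdf z ≤ gaussPdf z := by
  have hint : Integrable fun x => -x * gaussPdf x := by
    have := (integrable_mul_exp_neg_mul_sq (b := 1 / 2) (by norm_num)).const_mul
      (-(√(2 * π))⁻¹)
    refine this.congr (Filter.Eventually.of_forall fun x => ?_)
    simp only [gaussPdf_eq]
    ring
  have h := integral_Iic_of_hasDerivAt_of_tendsto' (a := z)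
    (fun x _ => hasDerivAt_gaussPdf x) hint.integrableOn tendsto_gaussPdf_atBot
  rw [sub_zero] at h
  rw [← h, gaussCdf_eq_integral, ← integral_const_mul]
  refine setIntegral_mono_on (integrable_gaussPdf.const_mul _).integrableOn hint.integrableOn
    measurableSet_Iic fun x hx => ?_
  exact mul_le_mul_of_nonneg_right (neg_le_neg hx) (gaussPdf_pos x).le

/-- The ratio of the standard normal distribution function and density. -/
def mills (z : ℝ) : ℝ := gaussCdf z / gaussPdf z

theorem mills_nonneg (z : ℝ) : 0 ≤ mills z := div_nonneg (gaussCdf_nonneg z) (gaussPdf_pos z).le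

theorem neg_mul_mills_le (z : ℝ) : -z * mills z ≤ 1 := by
  rw [mills, ← mul_div_assoc, div_le_one (gaussPdf_pos z)]
  exact neg_mul_gaussCdf_le z

theorem hasDerivAt_mills (z : ℝ) : HasDerivAt mills (1 + z * mills z) z := by
  have h := (hasDerivAt_gaussCdf z).div (hasDerivAt_gaussPdf z) (gaussPdf_pos z).ne'
  have hp := (gaussPdf_pos z).ne'
  refine h.congr_deriv ?_
  rw [mills]
  field_simp
  ring

theorem monotone_mills : Monotone mills :=
  monotone_of_deriv_nonneg (fun z => (hasDerivAt_mills z).differentiableAt) fun z => by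
    rw [(hasDerivAt_mills z).deriv]
    linarith [neg_mul_mills_le z]

/-- The bounded solution of Stein's equation for the indicator of `(-∞, z]`. -/
def steinSol (z w : ℝ) : ℝ :=
  if w ≤ z then gaussCdf (-z) * mills w else gaussCdf z * mills (-w)

theorem gaussCdf_neg_mul_mills (z : ℝ) :
    gaussCdf (-z) * mills z = gaussCdf z * mills (-z) := by
  rw [mills, mills, gaussPdf_neg]
  ring

theorem steinSol_of_le {z w : ℝ} (h : w ≤ z) : steinSol z w = gaussCdf (-z) * mills w := if_pos h

theorem steinSol_neg (z w : ℝ) : steinSol (-z) (-w) = steinSol z w := by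
  rcases lt_trichotomy w z with h | rfl | h
  · rw [steinSol, steinSol, if_neg (by linarith), if_pos h.le, neg_neg]
  · rw [steinSol_of_le le_rfl, steinSol_of_le le_rfl, gaussCdf_neg_mul_mills, neg_neg]
  · rw [steinSol, steinSol, if_pos (by linarith), if_neg (by linarith), neg_neg]

theorem steinSol_nonneg (z w : ℝ) : 0 ≤ steinSol z w := by
  rw [steinSol]
  split_ifs
  · exact mul_nonneg (gaussCdf_nonneg _) (mills_nonneg _)
  · exact mul_nonneg (gaussCdf_nonneg _) (mills_nonneg _)

theorem gaussCdf_neg_mul_mills_le (z : ℝ) : gaussCdf (-z) * mills z ≤ mills 0 := by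
  wlog hz : z ≤ 0 generalizing z
  · rw [gaussCdf_neg_mul_mills]
    simpa using this (-z) (by linarith)
  · exact (mul_le_of_le_one_left (mills_nonneg z) (gaussCdf_le_one _)).trans (monotone_mills hz)

theorem steinSol_le (z w : ℝ) : steinSol z w ≤ mills 0 := by
  wlog h : w ≤ z generalizing z w
  · rw [← steinSol_neg]
    exact this (-z) (-w) (by linarith)
  · rw [steinSol_of_le h]
    exact (mul_le_mul_of_nonneg_left (monotone_mills h) (gaussCdf_nonneg _)).trans
      (gaussCdf_neg_mul_mills_le z)

/-- The slope `w f(w) + 1(w ≤ z) - Φ(z)` of the solution of Stein's equation. -/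
def steinSlope (z w : ℝ) : ℝ := w * steinSol z w + (if w ≤ z then 1 else 0) - gaussCdf z

theorem steinSlope_of_le {z w : ℝ} (h : w ≤ z) :
    steinSlope z w = gaussCdf (-z) * (1 + w * mills w) := by
  rw [steinSlope, steinSol_of_le h, if_pos h]
  linarith [gaussCdf_add_neg z]

theorem steinSlope_neg {z w : ℝ} (h : w ≠ z) : steinSlope (-z) (-w) = -steinSlope z w := by
  have h1 := gaussCdf_add_neg z
  rw [steinSlope, steinSlope, steinSol_neg]
  rcases lt_or_gt_of_ne h with h | h
  · rw [if_neg (by linarith), if_pos h.le]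
    linarith
  · rw [if_pos (by linarith), if_neg (by linarith)]
    linarith

theorem abs_steinSlope_le (z w : ℝ) : |steinSlope z w| ≤ 2 := by
  wlog h : w ≤ z generalizing z w
  · rw [← abs_neg, ← steinSlope_neg (by rintro rfl; exact h le_rfl)]
    exact this (-z) (-w) (by linarith)
  · rw [steinSlope_of_le h]
    have h0 := gaussCdf_nonneg (-z)
    have h1 := gaussCdf_le_one (-z)
    have h2 := neg_mul_mills_le w
    rw [abs_of_nonneg (mul_nonneg h0 (by linarith))]
    rcases le_total w 0 with hw | hw
    · have := mul_nonneg (neg_nonneg.2 hw) (mills_nonneg w)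
      nlinarith
    · have h3 : w * mills w ≤ z * mills z :=
        mul_le_mul h (monotone_mills h) (mills_nonneg w) (hw.trans h)
      have h4 : z * mills z * gaussCdf (-z) ≤ 1 := by
        have e : z * mills z * gaussCdf (-z) = gaussCdf z * (-(-z) * mills (-z)) := by
          rw [neg_neg, mul_assoc, mul_comm (mills z), gaussCdf_neg_mul_mills]
          ring
        rw [e]
        exact (mul_le_of_le_one_right (gaussCdf_nonneg z) (neg_mul_mills_le _)).trans
          (gaussCdf_le_one z)
      nlinarith [mul_le_mul_of_nonneg_right h3 h0]

theorem exists_steinSlope_of_le {z a b : ℝ} (hab : a < b) (hb : b ≤ z) :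
    ∃ c ∈ Set.Ioo a b, steinSol z b - steinSol z a = (b - a) * steinSlope z c := by
  have hd : ∀ x, HasDerivAt (fun w => gaussCdf (-z) * mills w)
      (gaussCdf (-z) * (1 + x * mills x)) x := fun x => (hasDerivAt_mills x).const_mul _
  obtain ⟨c, hc, e⟩ := exists_hasDerivAt_eq_slope _ _ hab
    (fun x _ => (hd x).continuousAt.continuousWithinAt) fun x _ => hd x
  refine ⟨c, hc, ?_⟩
  rw [steinSlope_of_le (hc.2.le.trans hb), e, steinSol_of_le hb,
    steinSol_of_le (hab.le.trans hb)]
  have : b - a ≠ 0 := (sub_pos.2 hab).ne'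
  field_simp

theorem abs_steinSol_sub_le (z : ℝ) {a b : ℝ} (hab : a ≤ b) :
    |steinSol z b - steinSol z a| ≤ 2 * (b - a) := by
  have key : ∀ z a b : ℝ, a ≤ b → b ≤ z → |steinSol z b - steinSol z a| ≤ 2 * (b - a) := by
    intro z a b hab hb
    rcases hab.eq_or_lt with rfl | hab
    · simp
    · obtain ⟨c, -, e⟩ := exists_steinSlope_of_le hab hb
      rw [e, abs_mul, abs_of_pos (sub_pos.2 hab), mul_comm]
      exact mul_le_mul_of_nonneg_right (abs_steinSlope_le z c) (sub_pos.2 hab).le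
  have key' : ∀ z a b : ℝ, a ≤ b → z ≤ a → |steinSol z b - steinSol z a| ≤ 2 * (b - a) := by
    intro z a b hab ha
    have := key (-z) (-b) (-a) (by linarith) (by linarith)
    rw [steinSol_neg, steinSol_neg, abs_sub_comm] at this
    linarith
  rcases le_total b z with hb | hb
  · exact key z a b hab hb
  rcases le_total z a with ha | ha
  · exact key' z a b hab ha
  · have h1 := key z a z ha le_rfl
    have h2 := key' z z b hb le_rfl
    have := abs_sub_le (steinSol z b) (steinSol z z) (steinSol z a)
    linarith

/-- First-order expansion of the solution of Stein's equation over a short interval. -/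
theorem abs_steinSol_sub_sub_le (z : ℝ) {y w d : ℝ} (hy : y ≤ w) (hw : w ≤ y + d) :
    |steinSol z (y + d) - steinSol z y - d * steinSlope z w| ≤
      d * (d * (mills 0 + 2 * |w|) + 4 * if |w - z| ≤ d then 1 else 0) := by
  have hm := mills_nonneg 0
  have hd : 0 ≤ d := by linarith
  have key : ∀ z y w : ℝ, y ≤ w → w ≤ y + d → y + d ≤ z →
      |steinSol z (y + d) - steinSol z y - d * steinSlope z w| ≤
        d * (d * (mills 0 + 2 * |w|)) := by
    intro z y w hy hw hz
    rcases hd.eq_or_lt with rfl | hd'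
    · simp
    obtain ⟨c, hc, e⟩ := exists_steinSlope_of_le (by linarith : y < y + d) hz
    rw [e, add_sub_cancel_left, ← mul_sub, abs_mul, abs_of_nonneg hd]
    refine mul_le_mul_of_nonneg_left ?_ hd
    have e1 : steinSlope z c - steinSlope z w =
        (c - w) * steinSol z c + w * (steinSol z c - steinSol z w) := by
      rw [steinSlope, steinSlope, if_pos (hc.2.le.trans hz), if_pos (hw.trans hz)]
      ring
    have e2 : |c - w| ≤ d := by
      rw [abs_le]
      constructor <;> linarith [hc.1, hc.2]
    have e3 : |steinSol z c - steinSol z w| ≤ 2 * |c - w| := by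
      rcases le_total w c with h | h
      · rw [abs_of_nonneg (sub_nonneg.2 h)]
        exact abs_steinSol_sub_le z h
      · rw [abs_sub_comm, abs_sub_comm c, abs_of_nonneg (sub_nonneg.2 h)]
        exact abs_steinSol_sub_le z h
    rw [e1]
    refine (abs_add_le _ _).trans ?_
    rw [abs_mul, abs_mul, abs_of_nonneg (steinSol_nonneg z c)]
    have e4 := mul_le_mul e2 (steinSol_le z c) (steinSol_nonneg z c) hd
    have e5 := mul_le_mul_of_nonneg_left (e3.trans (mul_le_mul_of_nonneg_left e2 zero_le_two))
      (abs_nonneg w)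
    linarith
  by_cases hz : y ≤ z ∧ z ≤ y + d
  · have h1 := abs_steinSol_sub_le z (by linarith : y ≤ y + d)
    have h2 := mul_le_mul_of_nonneg_left (abs_steinSlope_le z w) hd
    rw [if_pos (by rw [abs_le]; constructor <;> linarith)]
    refine (abs_sub _ _).trans ?_
    rw [abs_mul, abs_of_nonneg hd]
    have : 0 ≤ d * (d * (mills 0 + 2 * |w|)) := by positivity
    linarith
  · have h3 : 0 ≤ d * (4 * if |w - z| ≤ d then (1 : ℝ) else 0) := by positivity
    suffices h : |steinSol z (y + d) - steinSol z y - d * steinSlope z w| ≤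
        d * (d * (mills 0 + 2 * |w|)) by linarith
    rcases lt_or_ge z y with hy' | hy'
    · have h4 := key (-z) (-(y + d)) (-w) (by linarith) (by linarith) (by linarith)
      rw [steinSlope_neg (by linarith [hy'] : w ≠ z), abs_neg, steinSol_neg,
        show -(y + d) + d = -y by ring, steinSol_neg] at h4
      rw [← abs_neg]
      convert h4 using 2
      ring
    · exact key z y w hy hw (le_of_not_ge fun h => hz ⟨hy', h⟩)

namespace BoolCube

variable {ι : Type} [Fintype ι] [DecidableEq ι]

open Classical in
theorem mass_eq_mean_ite (μ : (ι → Bool) → ℝ) (S : (ι → Bool) → Prop) :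
    mass μ {x | S x} = mean μ (fun x => if S x then 1 else 0) := by
  rw [mass]
  congr 1

namespace PolyHam

variable {A : Type} [Fintype A] (P : PolyHam ι A)

/-- The size, centred at its mean and rescaled by `σ`. -/
def stdSize (σ : ℝ) (x : ι → Bool) : ℝ := (size x - mean P.gibbs size) / σ

theorem exists_disc_comp_stdSize {σ : ℝ} (hσ : 0 < σ) (s : ι) (x : ι → Bool) :
    ∃ y, y ≤ P.stdSize σ x ∧ P.stdSize σ x ≤ y + 1 / σ ∧
      ∀ f : ℝ → ℝ, disc (fun x => f (P.stdSize σ x)) s x = f (y + 1 / σ) - f y := by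
  have h1 : P.stdSize σ (Function.update x s true) =
      P.stdSize σ (Function.update x s false) + 1 / σ := by
    have := disc_size s x
    rw [disc, sub_eq_iff_eq_add] at this
    rw [stdSize, stdSize, this]
    ring
  have hd : 0 < 1 / σ := by positivity
  refine ⟨P.stdSize σ (Function.update x s false), ?_, ?_, fun f => ?_⟩
  · rcases update_eq_or x s with ⟨h, -⟩ | ⟨h, -⟩
    · rw [h] at h1; linarith
    · rw [h]
  · rcases update_eq_or x s with ⟨h, -⟩ | ⟨h, -⟩
    · rw [h] at h1; linarith
    · rw [h]; linarith
  · rw [disc, h1]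

namespace IsNear

variable {P} {Ψ Ψ' : ℝ → ℝ} {p ρ K ε : ℝ} {n : ℕ} {U D : Set (ι → Bool)}

variable (h : P.IsNear Ψ Ψ' K n)
include h

/-- The standardized size puts little mass on short intervals. -/
theorem mass_stdSize_near_le (hm : MeanField Ψ Ψ' p ρ K) {σ : ℝ} (hσ : 0 < σ) (z : ℝ) :
    mass P.gibbs {x | |P.stdSize σ x - z| ≤ 1 / σ} ≤
      8 / (Real.sigmoid (-(2 * K)) ^ 2 * n) := by
  classical
  have hμ : ∀ x, 0 ≤ P.gibbs x := fun x => (P.gibbs_pos x).le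
  have hn := h.n_pos
  set w := Real.sigmoid (-(2 * K)) ^ 2 with hw
  have hw0 : 0 < w := by have := Real.sigmoid_pos (-(2 * K)); positivity
  set d := 1 / σ with hd
  have hd0 : 0 < d := by positivity
  set f : ℝ → ℝ := fun y => max (-(2 * d)) (min (2 * d) (y - z)) with hf
  have hfm : Monotone f := fun a b hab =>
    max_le_max le_rfl (min_le_min le_rfl (sub_le_sub_right hab z))
  have hfb : ∀ y, |f y| ≤ 2 * d := fun y => by
    rw [abs_le]
    exact ⟨le_max_left _ _, max_le (by linarith) (min_le_left _ _)⟩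
  have hfe : ∀ y, |y - z| ≤ 2 * d → f y = y - z := fun y hy => by
    rw [abs_le] at hy
    simp only [hf]
    rw [min_eq_right hy.2, max_eq_right hy.1]
  have h1 : mean P.gibbs (fun x => P.centred x * f (P.stdSize σ x)) ≤ 2 * d * n := by
    refine (le_abs_self _).trans ((abs_mean_le hμ _).trans ?_)
    calc _ ≤ mean P.gibbs (fun x => 2 * d * |P.centred x|) := by
          refine mean_mono hμ fun x => ?_
          rw [abs_mul, mul_comm]
          exact mul_le_mul_of_nonneg_right (hfb _) (abs_nonneg _)
      _ = 2 * d * mean P.gibbs (fun x => |P.centred x|) := mean_const_mul _ _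
      _ ≤ _ := by
          refine mul_le_mul_of_nonneg_left ?_ (by positivity)
          refine (mean_abs_le_sqrt hμ P.sum_gibbs _).trans ?_
          exact (Real.sqrt_le_sqrt h.mean_centred_sq_le).trans_eq (Real.sqrt_sq hn.le)
  rw [mean_centred_mul] at h1
  have h2 : ∀ s, w * d * mass P.gibbs {x | |P.stdSize σ x - z| ≤ d} ≤
      mean P.gibbs (fun x => P.condVar s x * disc (fun x => f (P.stdSize σ x)) s x) := by
    intro s
    rw [mass_eq_mean_ite, ← mean_const_mul]
    refine mean_mono hμ fun x => ?_
    obtain ⟨y, hy1, hy2, hy3⟩ := P.exists_disc_comp_stdSize hσ s x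
    rw [hy3 f, ← hd]
    rw [← hd] at hy2
    split_ifs with hx
    · rw [abs_le] at hx
      rw [hfe y (by rw [abs_le]; constructor <;> linarith),
        hfe (y + d) (by rw [abs_le]; constructor <;> linarith)]
      have := mul_le_mul_of_nonneg_right (h.le_condVar hm s x) hd0.le
      rw [← hw] at this
      linarith
    · rw [mul_zero]
      exact mul_nonneg (P.condVar_nonneg s x)
        (sub_nonneg.2 (hfm (by linarith)))
  have h3 := (Finset.card_nsmul_le_sum Finset.univ _ _ fun s _ => h2 s).trans h1
  rw [nsmul_eq_mul, Finset.card_univ] at h3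
  set Q := mass P.gibbs {x | |P.stdSize σ x - z| ≤ d}
  have hQ : 0 ≤ Q := mass_nonneg hμ _
  have h4 := mul_le_mul_of_nonneg_right h.le_card (by positivity : 0 ≤ w * d * Q)
  rw [le_div_iff₀ (by positivity)]
  have h5 : (Q * (w * n)) * (d * n) ≤ 8 * (d * n) := by nlinarith
  exact le_of_mul_le_mul_right h5 (by positivity)

theorem abs_mass_stdSize_sub_le (hm : MeanField Ψ Ψ' p ρ K) (hb : P.BadSets Ψ Ψ' p ε n U D)
    {σ : ℝ} (hσ : 0 < σ)
    (hσ2 : σ ^ 2 * (1 - p * (1 - p) * Ψ' p) = Fintype.card ι * (p * (1 - p))) (z : ℝ) :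
    |mass P.gibbs {x | P.stdSize σ x ≤ z} - gaussCdf z| ≤
      (1 / σ * (mills 0 + 2 * mean P.gibbs (fun x => |P.stdSize σ x|)) +
          4 * mass P.gibbs {x | |P.stdSize σ x - z| ≤ 1 / σ} + 2 * (ε + 1 / n)) / (p * (1 - p)) +
        mills 0 * mean P.gibbs (fun x => |P.remainder (p * (1 - p) * Ψ' p) x -
          mean P.gibbs (P.remainder (p * (1 - p) * Ψ' p))|) /
          (σ * (1 - p * (1 - p) * Ψ' p)) := by
  classical
  have hμ : ∀ x, 0 ≤ P.gibbs x := fun x => (P.gibbs_pos x).le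
  set θ := p * (1 - p) * Ψ' p with hθ
  set τ := 1 - θ with hτ
  have hτ0 : 0 < τ := sub_pos.2 hm.subcritical
  set w := p * (1 - p) with hw
  have hw0 : 0 < w := mul_pos hm.p_pos (sub_pos.2 hm.p_lt_one)
  set d := 1 / σ with hd
  have hd0 : 0 < d := by positivity
  have hB := mills_nonneg 0
  set B := mills 0
  set N : ℝ := (Fintype.card ι : ℝ) with hN
  have hN0 : 0 ≤ N := Nat.cast_nonneg _
  set W := P.stdSize σ with hW
  set f := steinSol z with hf
  set M := mean P.gibbs (fun x => |W x|)
  set Q := mass P.gibbs {x | |W x - z| ≤ d} with hQ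
  set Rb : (ι → Bool) → ℝ := fun x => P.remainder θ x - mean P.gibbs (P.remainder θ) with hRb
  set G := mean P.gibbs (fun x => steinSlope z (W x)) with hG
  set E := mean P.gibbs (fun x => W x * f (W x)) with hE
  have h_stein : mass P.gibbs {x | W x ≤ z} - gaussCdf z = G - E := by
    rw [mass_eq_mean_ite, hG, hE]
    simp only [steinSlope]
    rw [mean_sub, mean_add, mean_const P.sum_gibbs]
    ring
  have h_A : mean P.gibbs (fun x => P.centred x * f (W x)) =
      τ * σ * E + mean P.gibbs (fun x => Rb x * f (W x)) := by
    rw [hE, ← mean_const_mul, ← mean_add]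
    congr 1
    funext x
    rw [P.centred_eq_sub_mean θ, hW, stdSize]
    field_simp
    simp only [hRb, hτ]
    ring
  rw [mean_centred_mul] at h_A
  have h_R : |mean P.gibbs (fun x => Rb x * f (W x))| ≤ B * mean P.gibbs (fun x => |Rb x|) := by
    refine (abs_mean_le hμ _).trans ?_
    rw [← mean_const_mul]
    refine mean_mono hμ fun x => ?_
    rw [abs_mul, abs_of_nonneg (steinSol_nonneg z _), mul_comm]
    exact mul_le_mul_of_nonneg_right (steinSol_le z _) (abs_nonneg _)
  set X := d * (B + 2 * M) + 4 * Q + 2 * (ε + 1 / n) with hX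
  have h_s : ∀ s, |mean P.gibbs (fun x => P.condVar s x * disc (fun x => f (W x)) s x) -
      d * w * G| ≤ d * X := by
    intro s
    rw [hG, ← mean_const_mul, ← mean_sub]
    refine (abs_mean_le hμ _).trans ?_
    have h1 : ∀ x, |P.condVar s x * disc (fun x => f (W x)) s x -
        d * w * steinSlope z (W x)| ≤ d * (d * (B + 2 * |W x|) +
          4 * (if |W x - z| ≤ d then 1 else 0) + 2 * |P.condVar s x - w|) := by
      intro x
      obtain ⟨y, hy1, hy2, hy3⟩ := P.exists_disc_comp_stdSize hσ s x
      have e1 := abs_steinSol_sub_sub_le z hy1 hy2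
      have e2 := abs_steinSlope_le z (W x)
      rw [hy3 f]
      rw [← hd] at e1 ⊢
      have e3 : P.condVar s x * (f (y + d) - f y) - d * w * steinSlope z (W x) =
          P.condVar s x * (f (y + d) - f y - d * steinSlope z (W x)) +
            d * (steinSlope z (W x) * (P.condVar s x - w)) := by ring
      rw [e3]
      refine (abs_add_le _ _).trans ?_
      rw [abs_mul, abs_mul, abs_mul, abs_of_pos hd0, abs_of_nonneg (P.condVar_nonneg s x)]
      have e4 := mul_le_mul_of_nonneg_right e2 (abs_nonneg (P.condVar s x - w))
      have e5 := mul_le_mul_of_nonneg_left e4 hd0.le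
      have e6 := mul_le_of_le_one_left (abs_nonneg (f (y + d) - f y - d * steinSlope z (W x)))
        (P.condVar_le_one s x)
      linarith
    refine (mean_mono hμ h1).trans ?_
    rw [mean_const_mul, mean_add, mean_add, mean_const_mul, mean_const_mul, mean_const_mul,
      mean_add, mean_const_mul, mean_const P.sum_gibbs, ← mass_eq_mean_ite]
    refine mul_le_mul_of_nonneg_left ?_ hd0.le
    have := h.mean_abs_condVar_sub_le hm hb s
    rw [hX]
    linarith
  have h_sum : |∑ s, mean P.gibbs (fun x => P.condVar s x * disc (fun x => f (W x)) s x) -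
      N * (d * w * G)| ≤ N * (d * X) := by
    have e : N * (d * w * G) = ∑ _s : ι, d * w * G := by simp [hN]
    rw [e, ← Finset.sum_sub_distrib]
    refine (Finset.abs_sum_le_sum_abs _ _).trans ?_
    refine (Finset.sum_le_card_nsmul _ _ _ fun s _ => h_s s).trans ?_
    simp [hN]
  have h_d : N * d = σ * τ / w := by
    rw [eq_div_iff hw0.ne', hd]
    field_simp
    linarith
  have h_dw : N * (d * w * G) = σ * τ * G := by
    rw [← mul_assoc, ← mul_assoc, h_d, div_mul_cancel₀ _ hw0.ne']
  rw [h_A, h_dw, ← mul_assoc, h_d] at h_sum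
  have hστ : 0 < σ * τ := by positivity
  have h_fin : σ * τ * |G - E| ≤ σ * τ / w * X + B * mean P.gibbs (fun x => |Rb x|) := by
    rw [← abs_of_pos hστ, ← abs_mul, abs_of_pos hστ]
    rw [abs_le] at h_sum h_R ⊢
    constructor <;> linarith [h_sum.1, h_sum.2, h_R.1, h_R.2]
  rw [h_stein]
  calc |G - E| = σ * τ * |G - E| / (σ * τ) := by field_simp
    _ ≤ (σ * τ / w * X + B * mean P.gibbs (fun x => |Rb x|)) / (σ * τ) :=
        div_le_div_of_nonneg_right h_fin hστ.le
    _ = _ := by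
        rw [add_div]
        congr 1
        field_simp

end IsNear

end PolyHam

end BoolCube

namespace BoolCube.PolyHam

variable {ι A : Type} [Fintype ι] [DecidableEq ι] [Fintype A] {P : PolyHam ι A}
variable {Ψ Ψ' : ℝ → ℝ} {p ρ K ε : ℝ} {n : ℕ} {U D : Set (ι → Bool)}

theorem mean_abs_stdSize_le {σ c V : ℝ} (hc : 0 < c) (hn : 0 < n) (hσ : c * n ≤ σ)
    (hV : var P.gibbs size ≤ V * n ^ 2) :
    mean P.gibbs (fun x => |P.stdSize σ x|) ≤ √(V / c ^ 2) := by
  have hn' : (0 : ℝ) < n := by exact_mod_cast hn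
  have hμ : ∀ x, 0 ≤ P.gibbs x := fun x => (P.gibbs_pos x).le
  refine (mean_abs_le_sqrt hμ P.sum_gibbs _).trans (Real.sqrt_le_sqrt ?_)
  have e : mean P.gibbs (fun x => P.stdSize σ x ^ 2) = var P.gibbs size / σ ^ 2 := by
    rw [var, div_eq_inv_mul, ← mean_const_mul]
    congr 1
    funext x
    rw [stdSize]
    ring
  have h0 : 0 < c * n := by positivity
  rw [e]
  calc _ ≤ V * n ^ 2 / (c * n) ^ 2 := div_le_div₀ ((var_nonneg hμ _).trans hV) hV (by positivity)
        (pow_le_pow_left₀ h0.le hσ 2)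
    _ = _ := by field_simp

theorem IsNear.mean_abs_remainder_le (h : P.IsNear Ψ Ψ' K n) (hm : MeanField Ψ Ψ' p ρ K)
    (hb : P.BadSets Ψ Ψ' p ε n U D) {V c d : ℝ} (hV0 : 0 ≤ V) (hV : var P.gibbs size ≤ V * n ^ 2)
    (hε : ε = c * d) (hd : 1 / n ≤ d) :
    mean P.gibbs (fun x => |P.remainder (p * (1 - p) * Ψ' p) x -
        mean P.gibbs (P.remainder (p * (1 - p) * Ψ' p))|) ≤
      √(2 * ((2 * K + 1) * c) ^ 2 * V + 36 * K ^ 2) * (d * n) := by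
  have hμ : ∀ x, 0 ≤ P.gibbs x := fun x => (P.gibbs_pos x).le
  have hn := h.n_pos
  have hdn : 1 ≤ d * n := (div_le_iff₀ hn).1 hd
  refine (mean_abs_le_sqrt hμ P.sum_gibbs _).trans ?_
  rw [← Real.sqrt_sq (by linarith : 0 ≤ d * n), ← Real.sqrt_mul (by positivity)]
  refine Real.sqrt_le_sqrt ((h.var_remainder_le hm hb).trans ?_)
  have h1 := mul_le_mul_of_nonneg_left hV
    (by positivity : 0 ≤ 2 * ((2 * K + 1) * ε) ^ 2)
  have h2 : 36 * K ^ 2 ≤ 36 * K ^ 2 * (d * n) ^ 2 :=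
    le_mul_of_one_le_right (by positivity) (one_le_pow₀ hdn)
  rw [hε] at h1 ⊢
  linarith

end BoolCube.PolyHam

open BoolCube in
/-- For large `n`, the standardized size under a Gibbs measure that is near a subcritical mean
field is within order `n ^ (-1/4)` of a standard normal variable in Kolmogorov distance. -/
theorem MeanField.exists_kolmogorov_bound {Ψ Ψ' : ℝ → ℝ} {p ρ K : ℝ}
    (hm : MeanField Ψ Ψ' p ρ K) :
    ∃ C : ℝ, ∃ n₀ : ℕ, 0 < C ∧ ∀ n : ℕ, n₀ ≤ n →
      ∀ {ι A : Type} [Fintype ι] [DecidableEq ι] [Fintype A] (P : PolyHam ι A),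
        P.IsNear Ψ Ψ' K n → ∀ σ : ℝ, 0 < σ →
        σ ^ 2 * (1 - p * (1 - p) * Ψ' p) = Fintype.card ι * (p * (1 - p)) → ∀ z : ℝ,
        |mass P.gibbs {x | P.stdSize σ x ≤ z} - gaussCdf z| ≤ C * (n : ℝ) ^ (-(1 / 4) : ℝ) := by
  obtain ⟨c₁, n₀, hc₁, hn₀⟩ := hm.exists_badSets
  have hK := hm.one_le
  have hp0 := hm.p_pos
  have hp1 := sub_pos.2 hm.p_lt_one
  have hτ := sub_pos.2 hm.subcritical
  have hθ := hm.slope_nonneg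
  set w := p * (1 - p) with hw
  have hw0 : 0 < w := by positivity
  set τ := 1 - w * Ψ' p with hτ_def
  have hτ1 : τ ≤ 1 := by rw [hτ_def]; nlinarith
  set s := Real.sigmoid (-(2 * K)) ^ 2 with hs
  have hs0 : 0 < s := by have := Real.sigmoid_pos (-(2 * K)); positivity
  set c := √w / 2 with hc
  have hc0 : 0 < c := by positivity
  have hc2 : c ^ 2 = w / 4 := by rw [hc, div_pow, Real.sq_sqrt hw0.le]; norm_num
  set V := 2 / τ * (1 + 36 * K ^ 2 / τ) with hV
  have hV0 : 0 ≤ V := by positivity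
  set L := 2 * ((2 * K + 1) * c₁) ^ 2 * V + 36 * K ^ 2
  have hB := mills_nonneg 0
  set B := mills 0
  refine ⟨(1 / c * (B + 2 * √(V / c ^ 2)) + 4 * (8 / s) + 2 * (c₁ + 1)) / w +
    B * √L / (c * τ), n₀, by positivity, ?_⟩
  intro n hn ι A _ _ _ P h σ hσ hσ2 z
  obtain ⟨hε, hbad⟩ := hn₀ n hn
  obtain ⟨U, D, hb⟩ := hbad P h
  have hn' := h.n_pos
  have hn1 : 1 ≤ n := by have := h.two_le; omega
  have hd := one_div_le_rpow_neg_quarter hn1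
  set d := (n : ℝ) ^ (-(1 / 4) : ℝ) with hd_def
  have hd0 : 0 < d := lt_of_lt_of_le (by positivity) hd
  have hσn : c * n ≤ σ := by
    rw [← sq_le_sq₀ (by positivity) hσ.le, mul_pow, hc2]
    have h1 := mul_le_mul_of_nonneg_right h.le_card hw0.le
    have h2 := mul_le_mul_of_nonneg_left hτ1 (sq_nonneg σ)
    linarith
  have hvar : var P.gibbs size ≤ V * n ^ 2 := by
    refine (h.var_size_le hm hb hε).trans ?_
    rw [← hτ_def, hV, mul_assoc]
    refine mul_le_mul_of_nonneg_left ?_ (by positivity)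
    have : 36 * K ^ 2 / τ ≤ 36 * K ^ 2 / τ * (n : ℝ) ^ 2 :=
      le_mul_of_one_le_right (by positivity) (one_le_pow₀ (by exact_mod_cast hn1))
    linarith
  have hM := PolyHam.mean_abs_stdSize_le hc0 hn1 hσn hvar
  have hR := h.mean_abs_remainder_le hm hb hV0 hvar rfl hd
  have hQ : mass P.gibbs {x | |P.stdSize σ x - z| ≤ 1 / σ} ≤ 8 / s * d := by
    refine (h.mass_stdSize_near_le hm hσ z).trans ?_
    rw [← hs, ← div_div, div_eq_mul_one_div]
    exact mul_le_mul_of_nonneg_left hd (by positivity)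
  have hσd : 1 / σ ≤ 1 / c * d := by
    calc 1 / σ ≤ 1 / (c * n) := one_div_le_one_div_of_le (by positivity) hσn
      _ = 1 / c * (1 / n) := by rw [one_div_mul_one_div]
      _ ≤ _ := mul_le_mul_of_nonneg_left hd (by positivity)
  refine (h.abs_mass_stdSize_sub_le hm hb hσ hσ2 z).trans ?_
  rw [add_mul, ← hw, ← hτ_def]
  refine add_le_add ?_ ?_
  · rw [div_mul_eq_mul_div (_ + _ + _) w d]
    refine div_le_div_of_nonneg_right ?_ hw0.le
    have h1 : 1 / σ * (B + 2 * mean P.gibbs (fun x => |P.stdSize σ x|)) ≤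
        1 / c * d * (B + 2 * √(V / c ^ 2)) := by
      refine mul_le_mul hσd (by linarith) ?_ (by positivity)
      have := mean_nonneg (μ := P.gibbs) (fun x => (P.gibbs_pos x).le)
        (fun x => abs_nonneg (P.stdSize σ x))
      positivity
    linarith
  · calc _ ≤ B * (√L * (d * n)) / (c * n * τ) := by
          refine div_le_div₀ (by positivity) (mul_le_mul_of_nonneg_left hR hB) (by positivity)
            (mul_le_mul_of_nonneg_right hσn hτ.le)
      _ = _ := by field_simp

theorem exists_contraction_rate {φ : ℝ → ℝ} (hφ : Continuous φ)
    (hmono : MonotoneOn φ (Set.Icc 0 1)) (hrange : ∀ q, φ q ∈ Set.Ioo (0 : ℝ) 1) {p : ℝ}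
    (hp : p ∈ Set.Ioo (0 : ℝ) 1) (hfix : φ p = p) (huniq : ∀ q ∈ Set.Ioo (0 : ℝ) 1, φ q = q → q = p)
    (hdiff : DifferentiableAt ℝ φ p) (hsub : deriv φ p < 1) :
    ∃ ρ, 0 ≤ ρ ∧ ρ < 1 ∧ ∀ q ∈ Set.Icc (0 : ℝ) 1, |φ q - p| ≤ ρ * |q - p| := by
  have hpI : p ∈ Set.Icc (0 : ℝ) 1 := ⟨hp.1.le, hp.2.le⟩
  have hgt : ∀ q ∈ Set.Icc (0 : ℝ) 1, p < q → φ q < q := by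
    intro q hq hpq
    by_contra! hle
    obtain ⟨r, hr, e⟩ := intermediate_value_Icc' hq.2
      ((hφ.sub continuous_id).continuousOn (s := Set.Icc q 1))
      (show (0 : ℝ) ∈ _ from ⟨sub_nonpos.2 (hrange 1).2.le, sub_nonneg.2 hle⟩)
    have e : φ r = r := sub_eq_zero.1 e
    have := huniq r (e ▸ hrange r) e
    linarith [hr.1]
  have hlt : ∀ q ∈ Set.Icc (0 : ℝ) 1, q < p → q < φ q := by
    intro q hq hpq
    by_contra! hle
    obtain ⟨r, hr, e⟩ := intermediate_value_Icc' hq.1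
      ((hφ.sub continuous_id).continuousOn (s := Set.Icc 0 q))
      (show (0 : ℝ) ∈ _ from ⟨sub_nonpos.2 hle, sub_nonneg.2 (hrange 0).1.le⟩)
    have e : φ r = r := sub_eq_zero.1 e
    have := huniq r (e ▸ hrange r) e
    linarith [hr.2]
  have hcont : ContinuousOn (dslope φ p) (Set.Icc 0 1) :=
    ((continuousOn_dslope Filter.univ_mem).2 ⟨hφ.continuousOn, hdiff⟩).mono (Set.subset_univ _)
  have hslope : ∀ q, q ≠ p → dslope φ p q = (φ q - p) / (q - p) := by
    intro q hq
    rw [dslope_of_ne _ hq, slope_def_field, hfix]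
  obtain ⟨m, hm, hmax⟩ := isCompact_Icc.exists_isMaxOn ⟨p, hpI⟩ hcont
  refine ⟨max 0 (dslope φ p m), le_max_left _ _, max_lt one_pos ?_, fun q hq => ?_⟩
  · rcases lt_trichotomy m p with h | rfl | h
    · rw [hslope m h.ne, div_lt_one_of_neg (by linarith)]
      linarith [hlt m hm h]
    · rwa [dslope_same]
    · rw [hslope m h.ne', div_lt_one (by linarith)]
      linarith [hgt m hm h]
  · have h1 : dslope φ p q ≤ max 0 (dslope φ p m) := (hmax hq).trans (le_max_right _ _)
    rcases eq_or_ne q p with rfl | hne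
    · simp [hfix]
    refine le_trans (le_of_eq ?_) (mul_le_mul_of_nonneg_right h1 (abs_nonneg _))
    rw [hslope q hne]
    rcases lt_or_gt_of_ne hne with h | h
    · have := hmono hq hpI h.le
      rw [abs_of_nonpos (by linarith), abs_of_neg (by linarith)]
      have : q - p ≠ 0 := by linarith
      field_simp
    · have := hmono hpI hq h.le
      rw [abs_of_nonneg (by linarith), abs_of_pos (by linarith)]
      have : q - p ≠ 0 := by linarith
      field_simp

theorem MeanField.mono {Ψ Ψ' : ℝ → ℝ} {p ρ K K' : ℝ} (h : MeanField Ψ Ψ' p ρ K) (hK : K ≤ K') :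
    MeanField Ψ Ψ' p ρ K' where
  one_le := h.one_le.trans hK
  p_pos := h.p_pos
  p_lt_one := h.p_lt_one
  rate_nonneg := h.rate_nonneg
  rate_lt_one := h.rate_lt_one
  fixed := h.fixed
  contract := h.contract
  abs_le q hq := (h.abs_le q hq).trans hK
  lipschitz q hq r hr := (h.lipschitz q hq r hr).trans
    (mul_le_mul_of_nonneg_right hK (abs_nonneg _))
  slope_nonneg := h.slope_nonneg
  abs_slope_le q hq := (h.abs_slope_le q hq).trans hK
  slope_lipschitz q hq r hr := (h.slope_lipschitz q hq r hr).trans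
    (mul_le_mul_of_nonneg_right hK (abs_nonneg _))
  subcritical := h.subcritical

theorem abs_pow_sub_pow_le_mul {q r : ℝ} (hq : q ∈ Set.Icc (0 : ℝ) 1) (hr : r ∈ Set.Icc (0 : ℝ) 1)
    (m : ℕ) : |q ^ m - r ^ m| ≤ m * |q - r| := by
  refine (abs_pow_sub_pow_le q r m).trans ?_
  have h1 : max |q| |r| ≤ 1 := by
    rw [abs_of_nonneg hq.1, abs_of_nonneg hr.1]
    exact max_le hq.2 hr.2
  have h2 : max |q| |r| ^ (m - 1) ≤ 1 :=
    pow_le_one₀ (le_max_of_le_left (abs_nonneg _)) h1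
  rw [mul_comm (m : ℝ)]
  exact mul_le_of_le_one_right (by positivity) h2

section ERGM

variable {k : ℕ} (β : Fin (k + 1) → ℝ) (v : Fin (k + 1) → ℕ)
  (H : ∀ j : Fin (k + 1), SimpleGraph (Fin (v j)))

/-- The derivative of `2 Φ_β`. -/
def ergmSlope (a : ℝ) : ℝ :=
  2 * ∑ j, β j * (eCount (H j) : ℝ) * ((eCount (H j) - 1 : ℕ) * a ^ (eCount (H j) - 2))

theorem hasDerivAt_two_mul_PhiFn (a : ℝ) :
    HasDerivAt (fun a => 2 * PhiFn β v H a) (ergmSlope β v H a) a := by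
  refine HasDerivAt.const_mul 2 ?_
  exact HasDerivAt.fun_sum fun j _ => (hasDerivAt_pow _ a).const_mul _

theorem phiFn_eq_sigmoid (a : ℝ) : phiFn β v H a = Real.sigmoid (2 * PhiFn β v H a) := by
  rw [phiFn, Real.sigmoid_def, Real.exp_neg]
  have := Real.exp_pos (2 * PhiFn β v H a)
  field_simp

/-- A subcritical exponential random graph model has a subcritical mean field. -/
theorem exists_meanField (hβ : ∀ j : Fin (k + 1), j ≠ 0 → 0 < β j) (he0 : eCount (H 0) = 1)
    (he : ∀ j, 1 ≤ eCount (H j)) {p : ℝ} (hp : p ∈ Set.Ioo (0 : ℝ) 1) (hfix : phiFn β v H p = p)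
    (huniq : ∀ q ∈ Set.Ioo (0 : ℝ) 1, phiFn β v H q = q → q = p)
    (hsub : deriv (phiFn β v H) p < 1) :
    ∃ ρ K, MeanField (fun a => 2 * PhiFn β v H a) (ergmSlope β v H) p ρ K := by
  have hφ : phiFn β v H = fun a => Real.sigmoid (2 * PhiFn β v H a) :=
    funext (phiFn_eq_sigmoid β v H)
  have hslope0 : ∀ q, 0 ≤ q → 0 ≤ ergmSlope β v H q := by
    intro q hq
    refine mul_nonneg zero_le_two (Finset.sum_nonneg fun j _ => ?_)
    rcases eq_or_ne j 0 with rfl | hj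
    · simp [he0]
    · have := (hβ j hj).le
      positivity
  have hd : ∀ a, HasDerivAt (phiFn β v H)
      (phiFn β v H a * (1 - phiFn β v H a) * ergmSlope β v H a) a := by
    intro a
    rw [hφ]
    exact (Real.hasDerivAt_sigmoid _).comp a (hasDerivAt_two_mul_PhiFn β v H a)
  have hcont : Continuous (phiFn β v H) := continuous_iff_continuousAt.2 fun a => (hd a).continuousAt
  have hrange : ∀ q, phiFn β v H q ∈ Set.Ioo (0 : ℝ) 1 := fun q => by
    rw [hφ]
    exact ⟨Real.sigmoid_pos _, Real.sigmoid_lt_one _⟩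
  have hmono : MonotoneOn (phiFn β v H) (Set.Icc 0 1) := by
    refine monotoneOn_of_deriv_nonneg (convex_Icc 0 1) hcont.continuousOn
      (fun a _ => (hd a).differentiableAt.differentiableWithinAt) fun a ha => ?_
    rw [interior_Icc] at ha
    rw [(hd a).deriv]
    have := hrange a
    exact mul_nonneg (mul_nonneg this.1.le (sub_nonneg.2 this.2.le)) (hslope0 a ha.1.le)
  obtain ⟨ρ, hρ0, hρ1, hρ⟩ := exists_contraction_rate hcont hmono hrange hp hfix huniq
    (hd p).differentiableAt hsub
  rw [(hd p).deriv, hfix] at hsub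
  set K : ℝ := 1 + 2 * ∑ j, |β j| * (eCount (H j) : ℝ) ^ 3 with hK
  have hsq : ∀ j, (eCount (H j) : ℝ) ≤ (eCount (H j) : ℝ) ^ 2 := fun j => by
    exact_mod_cast Nat.le_self_pow two_ne_zero _
  have hone : ∀ j, (1 : ℝ) ≤ (eCount (H j) : ℝ) ^ 2 := fun j =>
    one_le_pow₀ (by exact_mod_cast he j)
  have hbound : ∀ (c : Fin (k + 1) → ℝ) (t : ℝ), 0 ≤ t →
      (∀ j, |c j| ≤ (eCount (H j) : ℝ) ^ 2 * t) →
      |2 * ∑ j, β j * (eCount (H j) : ℝ) * c j| ≤ K * t := by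
    intro c t ht hc
    rw [abs_mul, abs_two]
    have h1 : |∑ j, β j * (eCount (H j) : ℝ) * c j| ≤
        ∑ j, |β j| * (eCount (H j) : ℝ) ^ 3 * t := by
      refine (Finset.abs_sum_le_sum_abs _ _).trans (Finset.sum_le_sum fun j _ => ?_)
      rw [abs_mul, abs_mul, Nat.abs_cast]
      have := mul_le_mul_of_nonneg_left (hc j)
        (by positivity : 0 ≤ |β j| * (eCount (H j) : ℝ))
      linarith
    rw [← Finset.sum_mul] at h1
    rw [hK]
    linarith
  have hsub1 : ∀ m i : ℕ, ((m - i : ℕ) : ℝ) ≤ m := fun m i => by exact_mod_cast Nat.sub_le m i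
  have hpow : ∀ q ∈ Set.Icc (0 : ℝ) 1, ∀ m : ℕ, 0 ≤ q ^ m ∧ q ^ m ≤ 1 := fun q hq m =>
    ⟨pow_nonneg hq.1 m, pow_le_one₀ hq.1 hq.2⟩
  refine ⟨ρ, K, ?_, hp.1, hp.2, hρ0, hρ1, ?_, ?_, ?_, ?_, hslope0 p hp.1.le, ?_, ?_, hsub⟩
  · have : 0 ≤ ∑ j, |β j| * (eCount (H j) : ℝ) ^ 3 := by positivity
    linarith
  · rw [← phiFn_eq_sigmoid, hfix]
  · intro q hq
    rw [← phiFn_eq_sigmoid]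
    exact hρ q hq
  · intro q hq
    have := hbound (fun j => q ^ (eCount (H j) - 1)) 1 zero_le_one fun j => by
      rw [abs_of_nonneg (hpow q hq _).1, mul_one]
      exact (hpow q hq _).2.trans (hone j)
    rwa [mul_one] at this
  · intro q hq r hr
    have := hbound (fun j => q ^ (eCount (H j) - 1) - r ^ (eCount (H j) - 1)) |q - r|
      (abs_nonneg _) fun j => (abs_pow_sub_pow_le_mul hq hr _).trans
        (mul_le_mul_of_nonneg_right ((hsub1 _ _).trans (hsq j)) (abs_nonneg _))
    simpa only [PhiFn, mul_sub, Finset.sum_sub_distrib] using this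
  · intro q hq
    have := hbound (fun j => (eCount (H j) - 1 : ℕ) * q ^ (eCount (H j) - 2)) 1 zero_le_one
      fun j => by
        have := hpow q hq (eCount (H j) - 2)
        rw [abs_of_nonneg (mul_nonneg (Nat.cast_nonneg _) this.1), mul_one]
        exact (mul_le_of_le_one_right (Nat.cast_nonneg _) this.2).trans
          ((hsub1 _ _).trans (hsq j))
    rwa [mul_one] at this
  · intro q hq r hr
    have := hbound (fun j => (eCount (H j) - 1 : ℕ) * q ^ (eCount (H j) - 2) -
      (eCount (H j) - 1 : ℕ) * r ^ (eCount (H j) - 2)) |q - r| (abs_nonneg _) fun j => by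
        rw [← mul_sub, abs_mul, Nat.abs_cast, sq, mul_assoc]
        refine mul_le_mul (hsub1 _ _) ?_ (abs_nonneg _) (Nat.cast_nonneg _)
        exact (abs_pow_sub_pow_le_mul hq hr _).trans
          (mul_le_mul_of_nonneg_right (hsub1 _ _) (abs_nonneg _))
    simpa only [ergmSlope, mul_sub, Finset.sum_sub_distrib] using this

end ERGM

section Embeddings

variable {V : Type} [Fintype V] {n : ℕ}

theorem exists_perm_of_ne {α : Type} [DecidableEq α] {i k i' k' : α} (h : i ≠ k) (h' : i' ≠ k') :
    ∃ τ : Equiv.Perm α, τ i = i' ∧ τ k = k' := by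
  refine ⟨(Equiv.swap i i').trans (Equiv.swap (Equiv.swap i i' k) k'), ?_, by simp⟩
  rw [Equiv.trans_apply, Equiv.swap_apply_left, Equiv.swap_apply_of_ne_of_ne _ h']
  intro e
  apply h
  have := congrArg (Equiv.swap i i') e
  simpa using this

theorem card_embedding_pair_eq {a b : V} {i k i' k' : Fin n} (h : i ≠ k) (h' : i' ≠ k') :
    (univ.filter fun φ : V ↪ Fin n => φ a = i ∧ φ b = k).card =
      (univ.filter fun φ : V ↪ Fin n => φ a = i' ∧ φ b = k').card := by
  obtain ⟨τ, rfl, rfl⟩ := exists_perm_of_ne h h'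
  refine Finset.card_bijective (fun φ : V ↪ Fin n => φ.trans τ.toEmbedding)
    (Equiv.embeddingCongr (Equiv.refl V) τ).bijective fun φ => ?_
  simp

/-- The number of embeddings with two prescribed values. -/
theorem card_embedding_pair {a b : V} (hab : a ≠ b) {i k : Fin n} (hik : i ≠ k) :
    (univ.filter fun φ : V ↪ Fin n => φ a = i ∧ φ b = k).card =
      (n - 2).descFactorial (Fintype.card V - 2) := by
  obtain ⟨u, hu⟩ : ∃ u, Fintype.card V = u + 2 :=
    ⟨_, (Nat.sub_add_cancel (Fintype.one_lt_card_iff.2 ⟨a, b, hab⟩)).symm⟩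
  obtain ⟨m, rfl⟩ : ∃ m, n = m + 2 := by
    have : 1 < Fintype.card (Fin n) := Fintype.one_lt_card_iff.2 ⟨i, k, hik⟩
    rw [Fintype.card_fin] at this
    exact ⟨_, (Nat.sub_add_cancel this).symm⟩
  have h1 : Fintype.card (V ↪ Fin (m + 2)) =
      ∑ x ∈ (univ : Finset (Fin (m + 2))).offDiag,
        (univ.filter fun φ : V ↪ Fin (m + 2) => φ a = x.1 ∧ φ b = x.2).card := by
    rw [← Finset.card_univ, Finset.card_eq_sum_card_fiberwise (f := fun φ => (φ a, φ b))
      (t := (univ : Finset (Fin (m + 2))).offDiag)]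
    · simp only [Prod.ext_iff]
    · intro φ _
      simpa using hab
  rw [Finset.sum_congr rfl fun x hx =>
      card_embedding_pair_eq (by simpa using hx : x.1 ≠ x.2) hik,
    Finset.sum_const, smul_eq_mul, Finset.offDiag_card, Fintype.card_embedding_eq, hu,
    Finset.card_univ, Fintype.card_fin, Nat.succ_descFactorial_succ,
    Nat.succ_descFactorial_succ] at h1
  have h2 : (m + 2) * (m + 2) - (m + 2) = (m + 2) * (m + 1) := by
    rw [← Nat.mul_sub_one]; rfl
  rw [h2, ← mul_assoc] at h1
  rw [hu]
  exact (Nat.eq_of_mul_eq_mul_left (by positivity) h1).symm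

/-- There are at most `n ^ (|V| - 3)` embeddings with three prescribed values. -/
theorem card_embedding_triple_le {a b c : V} (hab : a ≠ b) (hac : a ≠ c) (hbc : b ≠ c)
    (i k l : Fin n) :
    (univ.filter fun φ : V ↪ Fin n => φ a = i ∧ φ b = k ∧ φ c = l).card ≤
      n ^ (Fintype.card V - 3) := by
  classical
  set T : Finset V := {a, b, c}
  have hT : T.card = 3 := Finset.card_eq_three.2 ⟨a, b, c, hab, hac, hbc, rfl⟩
  have h1 : Fintype.card ({x // x ∉ T} → Fin n) = n ^ (Fintype.card V - 3) := by
    rw [Fintype.card_fun, Fintype.card_fin, Fintype.card_subtype_compl, Fintype.card_coe, hT]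
  rw [← h1, ← Finset.card_univ]
  refine Finset.card_le_card_of_injOn (fun φ x => φ x) (fun _ _ => by simp) ?_
  intro φ hφ ψ hψ h
  simp only [Finset.coe_filter, Finset.mem_univ, true_and, Set.mem_ofPred_eq] at hφ hψ
  ext x
  by_cases hx : x ∈ T
  · simp only [T, Finset.mem_insert, Finset.mem_singleton] at hx
    rcases hx with rfl | rfl | rfl
    · rw [hφ.1, hψ.1]
    · rw [hφ.2.1, hψ.2.1]
    · rw [hφ.2.2, hψ.2.2]
  · have := congrFun h ⟨x, hx⟩
    exact congrArg Fin.val this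

end Embeddings

section EdgeSupport

variable {V : Type} [Fintype V] (G : SimpleGraph V) {n : ℕ}

open Classical in
/-- The potential edges that are images of edges of `G` under `φ`. -/
def edgeSupport (φ : V ↪ Fin n) : Finset (EdgeIdx n) :=
  univ.filter fun s => ∃ a b, G.Adj a b ∧ φ a = s.1.1 ∧ φ b = s.1.2

variable {G}

@[simp] theorem mem_edgeSupport {φ : V ↪ Fin n} {s : EdgeIdx n} :
    s ∈ edgeSupport G φ ↔ ∃ a b, G.Adj a b ∧ φ a = s.1.1 ∧ φ b = s.1.2 := by
  simp [edgeSupport]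

variable (G)

theorem card_edgeSupport (φ : V ↪ Fin n) : (edgeSupport G φ).card = eCount G := by
  classical
  have hinj : Function.Injective fun s : EdgeIdx n => s(s.1.1, s.1.2) := by
    rintro ⟨⟨a, b⟩, h⟩ ⟨⟨c, d⟩, h'⟩ e
    simp only [Sym2.eq_iff] at e h h'
    rcases e with ⟨rfl, rfl⟩ | ⟨rfl, rfl⟩
    · rfl
    · exact absurd h (lt_asymm h')
  have himage : (edgeSupport G φ).image (fun s : EdgeIdx n => s(s.1.1, s.1.2)) =
      G.edgeFinset.map φ.sym2Map := by
    ext e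
    simp only [Finset.mem_image, mem_edgeSupport, Finset.mem_map, SimpleGraph.mem_edgeFinset]
    constructor
    · rintro ⟨s, ⟨a, b, hab, h1, h2⟩, rfl⟩
      exact ⟨s(a, b), hab, by simp [h1, h2]⟩
    · rintro ⟨e, he, rfl⟩
      induction e using Sym2.ind with
      | _ a b =>
        have hab : G.Adj a b := he
        rcases lt_or_gt_of_ne (φ.injective.ne hab.ne) with h | h
        · exact ⟨⟨(φ a, φ b), h⟩, ⟨a, b, hab, rfl, rfl⟩, by simp⟩
        · exact ⟨⟨(φ b, φ a), h⟩, ⟨b, a, hab.symm, rfl, rfl⟩, by simp [Sym2.eq_swap]⟩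
  rw [← Finset.card_image_of_injective _ hinj, himage, Finset.card_map, eCount,
    Nat.card_eq_fintype_card, SimpleGraph.edgeFinset_card]

/-- The number of copies of `G` through a given potential edge. -/
theorem card_filter_mem_edgeSupport (s : EdgeIdx n) :
    (univ.filter fun φ : V ↪ Fin n => s ∈ edgeSupport G φ).card =
      2 * eCount G * (n - 2).descFactorial (Fintype.card V - 2) := by
  classical
  have hs : s.1.1 ≠ s.1.2 := s.2.ne
  have h1 : (univ.filter fun φ : V ↪ Fin n => s ∈ edgeSupport G φ) =
      (univ : Finset G.Dart).biUnion fun d =>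
        univ.filter fun φ : V ↪ Fin n => φ d.fst = s.1.1 ∧ φ d.snd = s.1.2 := by
    ext φ
    simp only [Finset.mem_filter, Finset.mem_univ, true_and, mem_edgeSupport, Finset.mem_biUnion]
    constructor
    · rintro ⟨a, b, hab, h⟩
      exact ⟨⟨(a, b), hab⟩, h⟩
    · rintro ⟨d, h⟩
      exact ⟨d.fst, d.snd, d.adj, h⟩
  rw [h1, Finset.card_biUnion]
  · rw [Finset.sum_congr rfl fun d _ => card_embedding_pair d.adj.ne hs, Finset.sum_const,
      Finset.card_univ, SimpleGraph.dart_card_eq_twice_card_edges, smul_eq_mul, eCount,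
      Nat.card_eq_fintype_card, SimpleGraph.edgeFinset_card]
  · intro d _ d' _ hdd
    refine Finset.disjoint_left.2 fun φ h h' => hdd ?_
    simp only [Finset.mem_filter, Finset.mem_univ, true_and] at h h'
    ext
    · exact φ.injective (h.1.trans h'.1.symm)
    · exact φ.injective (h.2.trans h'.2.symm)

/-- There are few copies of `G` through two given potential edges. -/
theorem card_filter_mem_edgeSupport_pair_le {s t : EdgeIdx n} (hst : s ≠ t) :
    (univ.filter fun φ : V ↪ Fin n => s ∈ edgeSupport G φ ∧ t ∈ edgeSupport G φ).card ≤
      Fintype.card V ^ 3 * n ^ (Fintype.card V - 3) := by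
  classical
  obtain ⟨w, hw, hw1, hw2⟩ : ∃ w, (w = t.1.1 ∨ w = t.1.2) ∧ w ≠ s.1.1 ∧ w ≠ s.1.2 := by
    by_contra! hcon
    have h1 := hcon _ (Or.inl rfl)
    have h2 := hcon _ (Or.inr rfl)
    have hs : s.1.1 < s.1.2 := s.2
    have ht : t.1.1 < t.1.2 := t.2
    apply hst
    apply Subtype.ext
    by_cases e : t.1.1 = s.1.1
    · refine Prod.ext e.symm ?_
      by_contra h
      exact absurd (h2 fun e' => by rw [e, e'] at ht; exact lt_irrefl _ ht) (Ne.symm h)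
    · have e1 := h1 e
      by_cases e' : t.1.2 = s.1.1
      · rw [e1, e'] at ht
        exact absurd hs (lt_asymm ht)
      · rw [e1, h2 e'] at ht
        exact absurd ht (lt_irrefl _)
  set T : Finset (V × V × V) := univ.filter fun x => x.1 ≠ x.2.1 ∧ x.1 ≠ x.2.2 ∧ x.2.1 ≠ x.2.2
  have hsub : (univ.filter fun φ : V ↪ Fin n => s ∈ edgeSupport G φ ∧ t ∈ edgeSupport G φ) ⊆
      T.biUnion fun x =>
        univ.filter fun φ : V ↪ Fin n => φ x.1 = s.1.1 ∧ φ x.2.1 = s.1.2 ∧ φ x.2.2 = w := by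
    intro φ hφ
    simp only [Finset.mem_filter, Finset.mem_univ, true_and, mem_edgeSupport] at hφ
    obtain ⟨⟨a, b, hab, ha, hb⟩, c, d, -, hc, hd⟩ := hφ
    obtain ⟨e, he⟩ : ∃ e, φ e = w := by
      rcases hw with rfl | rfl
      · exact ⟨c, hc⟩
      · exact ⟨d, hd⟩
    simp only [T, Finset.mem_biUnion, Finset.mem_filter, Finset.mem_univ, true_and, Prod.exists]
    refine ⟨a, b, e, ⟨hab.ne, ?_, ?_⟩, ha, hb, he⟩
    · rintro rfl
      exact hw1 (he.symm.trans ha)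
    · rintro rfl
      exact hw2 (he.symm.trans hb)
  have hT : T.card ≤ Fintype.card V ^ 3 := by
    refine (Finset.card_le_univ _).trans (le_of_eq ?_)
    simp only [Fintype.card_prod]
    ring
  refine (Finset.card_le_card hsub).trans ((Finset.card_biUnion_le_card_mul _ _ _ ?_).trans
    (Nat.mul_le_mul_right _ hT))
  intro x hx
  simp only [T, Finset.mem_filter, Finset.mem_univ, true_and] at hx
  exact card_embedding_triple_le hx.1 hx.2.1 hx.2.2 _ _ _

theorem homCount_eq_sum_mono (y : EdgeIdx n → Bool) :
    (homCount G y : ℝ) = ∑ φ : V ↪ Fin n, BoolCube.mono (edgeSupport G φ) y := by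
  classical
  have hiff : ∀ φ : V ↪ Fin n, (∀ a b, G.Adj a b → yAdj y (φ a) (φ b) = true) ↔
      ∀ s ∈ edgeSupport G φ, y s = true := by
    intro φ
    constructor
    · intro h s hs
      obtain ⟨a, b, hab, ha, hb⟩ := mem_edgeSupport.1 hs
      have := h a b hab
      have hlt : s.1.1 < s.1.2 := s.2
      rw [ha, hb, yAdj, dif_pos hlt] at this
      exact this
    · intro h a b hab
      rcases lt_or_gt_of_ne (φ.injective.ne hab.ne) with hlt | hlt
      · rw [yAdj, dif_pos hlt]
        exact h _ (mem_edgeSupport.2 ⟨a, b, hab, rfl, rfl⟩)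
      · rw [yAdj, dif_neg (lt_asymm hlt), dif_pos hlt]
        exact h _ (mem_edgeSupport.2 ⟨b, a, hab.symm, rfl, rfl⟩)
  have e : {φ : V → Fin n //
      Function.Injective φ ∧ ∀ a b, G.Adj a b → yAdj y (φ a) (φ b) = true} ≃
      {φ : V ↪ Fin n // ∀ s ∈ edgeSupport G φ, y s = true} :=
    { toFun := fun φ => ⟨⟨φ.1, φ.2.1⟩, (hiff _).1 φ.2.2⟩
      invFun := fun φ => ⟨φ.1, φ.1.injective, (hiff _).2 φ.2⟩
      left_inv := fun _ => rfl
      right_inv := fun _ => rfl }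
  rw [homCount, Nat.card_congr e, Nat.card_eq_fintype_card, Fintype.card_subtype]
  rw [Finset.card_filter, Nat.cast_sum]
  refine Finset.sum_congr rfl fun φ _ => ?_
  rw [BoolCube.mono_eq_ite, Nat.cast_ite, Nat.cast_one, Nat.cast_zero]
  congr

end EdgeSupport

section EdgeIdx

theorem two_mul_card_edgeIdx (n : ℕ) : 2 * Fintype.card (EdgeIdx n) = n * (n - 1) := by
  have h1 : Fintype.card (EdgeIdx n) = ∑ j : Fin n, (j : ℕ) := by
    have e : EdgeIdx n ≃ Σ j : Fin n, {i : Fin n // i < j} :=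
      { toFun := fun s => ⟨s.1.2, s.1.1, s.2⟩
        invFun := fun x => ⟨(x.2.1, x.1), x.2.2⟩
        left_inv := fun _ => rfl
        right_inv := fun _ => rfl }
    rw [Fintype.card_congr e, Fintype.card_sigma]
    refine Finset.sum_congr rfl fun j _ => ?_
    rw [Fintype.card_subtype, ← Fin.card_Iio]
    congr 1
    ext i
    simp
  rw [h1, Fin.sum_univ_eq_sum_range (fun i => i), mul_comm, Finset.sum_range_id_mul_two]

theorem card_edgeIdx {n : ℕ} (hn : 1 ≤ n) :
    (Fintype.card (EdgeIdx n) : ℝ) = n * ((n : ℝ) - 1) / 2 := by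
  have := two_mul_card_edgeIdx n
  have : (2 : ℝ) * Fintype.card (EdgeIdx n) = n * ((n - 1 : ℕ) : ℝ) := by exact_mod_cast this
  rw [Nat.cast_sub hn, Nat.cast_one] at this
  linarith

end EdgeIdx

theorem abs_zpow_mul_descFactorial_sub_one_le {n u : ℕ} (hn : 2 ≤ n) (hu : 2 ≤ u) :
    |(n : ℝ) ^ ((2 : ℤ) - u) * ((n - 2).descFactorial (u - 2) : ℝ) - 1| ≤ (u : ℝ) ^ 2 / n := by
  obtain ⟨u, rfl⟩ : ∃ w, u = w + 2 := ⟨u - 2, by omega⟩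
  have hn0 : (0 : ℝ) < n := by exact_mod_cast (by omega : 0 < n)
  have e : (n : ℝ) ^ ((2 : ℤ) - (u + 2 : ℕ)) = ((n : ℝ) ^ u)⁻¹ := by
    rw [show (2 : ℤ) - (u + 2 : ℕ) = -u by push_cast; ring, zpow_neg, zpow_natCast]
  rw [e, Nat.add_sub_cancel, inv_mul_eq_div]
  have hup : ((n - 2).descFactorial u : ℝ) ≤ (n : ℝ) ^ u := by
    exact_mod_cast (Nat.descFactorial_le_pow _ _).trans (Nat.pow_le_pow_left (Nat.sub_le n 2) u)
  have hup' : ((n - 2).descFactorial u : ℝ) / (n : ℝ) ^ u ≤ 1 := (div_le_one (by positivity)).2 hup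
  rw [abs_sub_comm, abs_of_nonneg (by linarith)]
  rcases le_or_gt (u + 1) n with hun | hun
  · have hlow : ((n : ℝ) - (u + 1)) ^ u ≤ ((n - 2).descFactorial u : ℝ) := by
      have h := Nat.pow_sub_le_descFactorial (n - 2) u
      rw [show n - 2 + 1 - u = n - (u + 1) by omega] at h
      have h' : (((n - (u + 1) : ℕ) : ℝ)) ^ u ≤ ((n - 2).descFactorial u : ℝ) := by exact_mod_cast h
      rwa [Nat.cast_sub hun, Nat.cast_add, Nat.cast_one] at h'
    have hx : (-2 : ℝ) ≤ -((u + 1) / n) := by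
      have : ((u : ℝ) + 1) / n ≤ 1 := (div_le_one hn0).2 (by exact_mod_cast hun)
      linarith
    have hb := one_add_mul_le_pow hx u
    have h2 : (1 + -(((u : ℝ) + 1) / n)) ^ u ≤ ((n - 2).descFactorial u : ℝ) / (n : ℝ) ^ u := by
      rw [le_div_iff₀ (by positivity), ← mul_pow]
      refine le_trans (le_of_eq ?_) hlow
      congr 1
      field_simp
      ring
    have h3 : (u : ℝ) * ((u + 1) / n) ≤ ((u + 2 : ℕ) : ℝ) ^ 2 / n := by
      rw [← mul_div_assoc]
      gcongr
      push_cast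
      nlinarith [(Nat.cast_nonneg u : (0 : ℝ) ≤ u)]
    linarith
  · have h1 : (1 : ℝ) ≤ ((u + 2 : ℕ) : ℝ) ^ 2 / n := by
      rw [le_div_iff₀ hn0, one_mul]
      have : n ≤ (u + 2) ^ 2 := by nlinarith
      exact_mod_cast this
    have : 0 ≤ ((n - 2).descFactorial u : ℝ) / (n : ℝ) ^ u := by positivity
    linarith

theorem eCount_le_choose {V : Type} [Fintype V] (G : SimpleGraph V) :
    eCount G ≤ (Fintype.card V).choose 2 := by
  classical
  rw [eCount, Nat.card_eq_fintype_card, ← SimpleGraph.edgeFinset_card]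
  exact SimpleGraph.card_edgeFinset_le_card_choose_two

theorem two_le_card_of_eCount_pos {V : Type} [Fintype V] {G : SimpleGraph V} (h : 1 ≤ eCount G) :
    2 ≤ Fintype.card V := by
  by_contra! hcon
  have := eCount_le_choose G
  rw [Nat.choose_eq_zero_of_lt hcon] at this
  omega

theorem three_le_card_of_two_le_eCount {V : Type} [Fintype V] {G : SimpleGraph V}
    (h : 2 ≤ eCount G) : 3 ≤ Fintype.card V := by
  by_contra! hcon
  have h1 := eCount_le_choose G
  have h2 := Nat.choose_le_choose 2 (Nat.le_of_lt_succ hcon)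
  rw [Nat.choose_self] at h2
  omega

/-- Two vertices and one edge: each edge of `G_y` is counted twice. -/
theorem homCount_eq_two_mul_size {V : Type} [Fintype V] {G : SimpleGraph V}
    (hV : Fintype.card V = 2) (hG : eCount G = 1) {n : ℕ} (y : EdgeIdx n → Bool) :
    (homCount G y : ℝ) = 2 * ∑ s, BoolCube.ind s y := by
  classical
  have h1 : ∀ φ : V ↪ Fin n, BoolCube.mono (edgeSupport G φ) y =
      ∑ s, if s ∈ edgeSupport G φ then BoolCube.ind s y else 0 := by
    intro φ
    obtain ⟨s, hs⟩ := Finset.card_eq_one.1 ((card_edgeSupport G φ).trans hG)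
    simp [hs, BoolCube.mono, BoolCube.ind]
  rw [homCount_eq_sum_mono, Finset.sum_congr rfl fun φ _ => h1 φ, Finset.sum_comm, Finset.mul_sum]
  refine Finset.sum_congr rfl fun s _ => ?_
  rw [← Finset.sum_filter, Finset.sum_const, card_filter_mem_edgeSupport, hG, hV]
  simp

section ERGM

variable {k : ℕ} (β : Fin (k + 1) → ℝ) (v : Fin (k + 1) → ℕ)
  (H : ∀ j : Fin (k + 1), SimpleGraph (Fin (v j)))

/-- The Hamiltonian of the exponential random graph model. -/
def ergmHam (n : ℕ) : BoolCube.PolyHam (EdgeIdx n) (Σ j, Fin (v j) ↪ Fin n) where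
  field := 2 * β 0
  coef a := if a.1 = 0 then 0 else β a.1 * (n : ℝ) ^ ((2 : ℤ) - (v a.1 : ℤ))
  supp a := edgeSupport (H a.1) a.2

theorem gibbs_ergmHam (hv0 : v 0 = 2) (he0 : eCount (H 0) = 1) (n : ℕ) :
    (ergmHam β v H n).gibbs = ergmProb β v H n := by
  have hham : ∀ y, Real.exp ((ergmHam β v H n).ham y) = ergmWeight β v H n y := by
    intro y
    rw [ergmWeight, BoolCube.PolyHam.ham, Fin.sum_univ_succ, Fintype.sum_sigma, Fin.sum_univ_succ,
      homCount_eq_two_mul_size (by rw [Fintype.card_fin, hv0]) he0]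
    simp only [ergmHam, Fin.succ_ne_zero, if_true, if_false, zero_mul, Finset.sum_const_zero,
      zero_add, homCount_eq_sum_mono, Finset.mul_sum]
    rw [hv0]
    norm_num
    exact Finset.sum_congr rfl fun s _ => by ring
  funext y
  simp only [BoolCube.PolyHam.gibbs, hham, ergmProb, ergmZ]

variable {β v H}

theorem sum_terms_ergmHam {n : ℕ} (s : EdgeIdx n) (g : Fin (k + 1) → ℝ) :
    ∑ a ∈ (ergmHam β v H n).terms s, (ergmHam β v H n).coef a * g a.1 =
      ∑ j, if j = 0 then 0 else 2 * (β j * eCount (H j) * g j) *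
        ((n : ℝ) ^ ((2 : ℤ) - v j) * ((n - 2).descFactorial (v j - 2) : ℝ)) := by
  rw [BoolCube.PolyHam.terms, Finset.sum_filter, Fintype.sum_sigma]
  refine Finset.sum_congr rfl fun j _ => ?_
  simp only [ergmHam]
  split_ifs with h
  · simp
  · rw [← Finset.sum_filter, Finset.sum_const]
    refine (congrArg (fun m : ℕ => m • _) (card_filter_mem_edgeSupport (H j) s)).trans ?_
    rw [Fintype.card_fin, nsmul_eq_mul]
    push_cast
    ring

theorem abs_field_add_sum_terms_sub_le (hv : ∀ j, 2 ≤ v j) (he0 : eCount (H 0) = 1) {n : ℕ}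
    (hn : 2 ≤ n) (s : EdgeIdx n) {g : Fin (k + 1) → ℝ}
    (hg : ∀ j, |g j| ≤ eCount (H j)) :
    |∑ a ∈ (ergmHam β v H n).terms s, (ergmHam β v H n).coef a * g a.1 -
        2 * (∑ j, β j * eCount (H j) * g j - β 0 * g 0)| ≤
      (∑ j, 2 * |β j| * (eCount (H j) : ℝ) ^ 2 * (v j : ℝ) ^ 2) / n := by
  have h0 : 2 * (∑ j, β j * eCount (H j) * g j - β 0 * g 0) =
      ∑ j, if j = 0 then 0 else 2 * (β j * eCount (H j) * g j) := by
    rw [Fin.sum_univ_succ, Fin.sum_univ_succ, he0]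
    simp only [Fin.succ_ne_zero, if_true, if_false, Nat.cast_one, ← Finset.mul_sum]
    ring
  rw [sum_terms_ergmHam, h0, ← Finset.sum_sub_distrib, Finset.sum_div]
  refine (Finset.abs_sum_le_sum_abs _ _).trans (Finset.sum_le_sum fun j _ => ?_)
  split_ifs with h
  · rw [sub_zero, abs_zero]
    positivity
  · rw [← mul_sub_one, abs_mul, abs_mul, abs_mul, abs_mul, abs_two, Nat.abs_cast]
    have h1 := abs_zpow_mul_descFactorial_sub_one_le hn (hv j)
    have h2 : |β j| * eCount (H j) * |g j| ≤ |β j| * eCount (H j) * eCount (H j) :=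
      mul_le_mul_of_nonneg_left (hg j) (by positivity)
    calc _ ≤ 2 * (|β j| * eCount (H j) * eCount (H j)) * ((v j : ℝ) ^ 2 / n) := by gcongr
      _ = _ := by ring

theorem exists_isNear (hβ : ∀ j : Fin (k + 1), j ≠ 0 → 0 < β j) (he0 : eCount (H 0) = 1)
    (hedges : ∀ j : Fin (k + 1), j ≠ 0 → 2 ≤ eCount (H j)) (K₀ : ℝ) :
    ∃ K, K₀ ≤ K ∧ ∀ n, 2 ≤ n →
      (ergmHam β v H n).IsNear (fun a => 2 * PhiFn β v H a) (ergmSlope β v H) K n := by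
  have he : ∀ j, 1 ≤ eCount (H j) := fun j => by
    rcases eq_or_ne j 0 with rfl | h
    · exact he0.ge
    · exact one_le_two.trans (hedges j h)
  have hv : ∀ j, 2 ≤ v j := fun j => by
    simpa using two_le_card_of_eCount_pos (he j)
  set K₁ : ℝ := ∑ j, 2 * |β j| * (eCount (H j) : ℝ) ^ 2 * (v j : ℝ) ^ 2 with hK₁
  set K₂ : ℝ := ∑ j, |β j| * (v j : ℝ) ^ 3 with hK₂
  set K₃ : ℝ := ∑ j, (eCount (H j) : ℝ) with hK₃
  have h1 : 0 ≤ K₁ := by positivity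
  have h2 : 0 ≤ K₂ := by positivity
  have h3 : 0 ≤ K₃ := by positivity
  refine ⟨|K₀| + K₁ + K₂ + K₃, by linarith [le_abs_self K₀], fun n hn => ?_⟩
  have hn0 : (0 : ℝ) < n := by exact_mod_cast (by omega : 0 < n)
  have hK₀ := abs_nonneg K₀
  have hcard : ∀ a, ((ergmHam β v H n).supp a).card = eCount (H a.1) := fun a =>
    card_edgeSupport _ _
  have hN := card_edgeIdx (one_le_two.trans hn)
  have hn2 : (2 : ℝ) ≤ n := by exact_mod_cast hn
  refine ⟨hn, fun a => ?_, fun s q hq => ?_, fun s q hq => ?_, fun s t hst => ?_, fun a => ?_, ?_, ?_⟩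
  · simp only [ergmHam]
    split_ifs with h
    · exact le_rfl
    · exact mul_nonneg (hβ _ h).le (by positivity)
  · simp only [hcard]
    refine le_trans (le_of_eq ?_) ((abs_field_add_sum_terms_sub_le hv he0 hn s
      (g := fun j => q ^ (eCount (H j) - 1)) fun j => ?_).trans
      (div_le_div_of_nonneg_right (by linarith) hn0.le))
    · congr 1
      simp only [ergmHam, PhiFn, he0, Nat.sub_self, pow_zero]
      ring
    · rw [abs_of_nonneg (pow_nonneg hq.1 _)]
      exact (pow_le_one₀ hq.1 hq.2).trans (by exact_mod_cast he j)
  · simp only [hcard]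
    refine le_trans (le_of_eq ?_) ((abs_field_add_sum_terms_sub_le hv he0 hn s
      (g := fun j => (eCount (H j) - 1 : ℕ) * q ^ (eCount (H j) - 2)) fun j => ?_).trans
      (div_le_div_of_nonneg_right (by linarith) hn0.le))
    · congr 1
      simp only [ergmSlope, he0, Nat.sub_self, Nat.cast_zero, zero_mul, mul_zero, sub_zero]
    · rw [abs_of_nonneg (mul_nonneg (Nat.cast_nonneg _) (pow_nonneg hq.1 _))]
      exact (mul_le_of_le_one_right (Nat.cast_nonneg _) (pow_le_one₀ hq.1 hq.2)).trans
        (by exact_mod_cast Nat.sub_le _ _)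
  · refine le_trans ?_ (div_le_div_of_nonneg_right (by linarith : K₂ ≤ _) hn0.le)
    classical
    rw [BoolCube.PolyHam.terms, Finset.filter_filter, Finset.sum_filter, Fintype.sum_sigma, hK₂,
      Finset.sum_div]
    refine Finset.sum_le_sum fun j _ => ?_
    simp only [ergmHam]
    rcases eq_or_ne j 0 with rfl | h
    · simp only [if_true, ite_self, Finset.sum_const_zero]
      positivity
    · have hv3 : 3 ≤ v j := by simpa using three_le_card_of_two_le_eCount (hedges j h)
      have hc : ((univ.filter fun φ : Fin (v j) ↪ Fin n =>
          s ∈ edgeSupport (H j) φ ∧ t ∈ edgeSupport (H j) φ).card : ℝ) ≤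
            (v j : ℝ) ^ 3 * (n : ℝ) ^ ((v j : ℤ) - 3) := by
        have := card_filter_mem_edgeSupport_pair_le (H j) hst
        rw [Fintype.card_fin] at this
        rw [show (v j : ℤ) - 3 = ((v j - 3 : ℕ) : ℤ) by omega, zpow_natCast]
        exact_mod_cast this
      rw [← Finset.sum_filter, Finset.sum_const, nsmul_eq_mul, if_neg h, abs_of_pos (hβ j h)]
      calc _ ≤ (v j : ℝ) ^ 3 * (n : ℝ) ^ ((v j : ℤ) - 3) * (β j * (n : ℝ) ^ ((2 : ℤ) - v j)) :=
            mul_le_mul_of_nonneg_right hc (mul_nonneg (hβ j h).le (by positivity))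
        _ = β j * (v j : ℝ) ^ 3 * ((n : ℝ) ^ ((v j : ℤ) - 3) * (n : ℝ) ^ ((2 : ℤ) - v j)) := by ring
        _ = β j * (v j : ℝ) ^ 3 / n := by
            rw [← zpow_add₀ hn0.ne', show (v j : ℤ) - 3 + (2 - v j) = -1 by ring, zpow_neg_one,
              div_eq_mul_inv]
  · rw [hcard]
    have : (eCount (H a.1) : ℝ) ≤ K₃ :=
      Finset.single_le_sum (f := fun j => (eCount (H j) : ℝ)) (fun j _ => Nat.cast_nonneg _)
        (Finset.mem_univ a.1)
    linarith
  · rw [hN]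
    nlinarith
  · rw [hN]
    nlinarith

end ERGM

/-- **Theorem 3.2 (Kolmogorov bound)**: CLT with rate `n^{-1/4}`, in the Kolmogorov
distance, for the standardized number of edges of an ERGM in the subcritical region. -/
theorem ergm_kolmogorov_clt {k : ℕ} (β : Fin (k + 1) → ℝ) (v : Fin (k + 1) → ℕ)
    (H : ∀ j : Fin (k + 1), SimpleGraph (Fin (v j)))
    -- `β₂, …, β_k > 0`
    (hβ : ∀ j : Fin (k + 1), j ≠ 0 → 0 < β j)
    -- `H₁` is a single edge
    (hv0 : v 0 = 2) (he0 : eCount (H 0) = 1)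
    -- the graphs have no isolated vertices
    (hnoiso : ∀ (j : Fin (k + 1)) (a : Fin (v j)), ∃ b, (H j).Adj a b)
    -- `H₂, …, H_k` have at least two edges
    (hedges : ∀ j : Fin (k + 1), j ≠ 0 → 2 ≤ eCount (H j))
    -- the subcritical region: unique fixed point `p ∈ (0,1)` with `φ_β'(p) < 1`
    (p : ℝ) (hp : p ∈ Set.Ioo (0 : ℝ) 1)
    (hfix : phiFn β v H p = p)
    (huniq : ∀ q ∈ Set.Ioo (0 : ℝ) 1, phiFn β v H q = q → q = p)
    (hsub : deriv (phiFn β v H) p < 1) :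
    ∃ C : ℝ, 0 < C ∧ ∀ n : ℕ, 2 ≤ n → ∀ x : ℝ,
      |(∑ y : EdgeIdx n → Bool,
            Set.indicator {y' : EdgeIdx n → Bool | Wn β v H p n y' ≤ x}
              (ergmProb β v H n) y) -
          ((gaussianReal 0 1) (Set.Iic x)).toReal| ≤ C * (n : ℝ) ^ (-(1 / 4 : ℝ)) := by
  have he : ∀ j, 1 ≤ eCount (H j) := fun j => by
    rcases eq_or_ne j 0 with rfl | h
    · exact he0.ge
    · exact one_le_two.trans (hedges j h)
  obtain ⟨ρ, K₀, hm₀⟩ := exists_meanField β v H hβ he0 he hp hfix huniq hsub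
  obtain ⟨K, hK, hnear⟩ := exists_isNear hβ he0 hedges K₀
  have hm := hm₀.mono hK
  obtain ⟨C, n₀, hC, h⟩ := hm.exists_kolmogorov_bound
  refine ⟨max C ((n₀ : ℝ) ^ (1 / 4 : ℝ)), lt_max_of_lt_left hC, fun n hn x => ?_⟩
  have hn0 : (0 : ℝ) < n := by exact_mod_cast (by omega : 0 < n)
  have hn2 : (2 : ℝ) ≤ n := by exact_mod_cast hn
  have hrpow : (0 : ℝ) < (n : ℝ) ^ (-(1 / 4) : ℝ) := Real.rpow_pos_of_pos hn0 _
  set P := ergmHam β v H n with hP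
  have hgibbs : P.gibbs = ergmProb β v H n := gibbs_ergmHam β v H hv0 he0 n
  have hslope : 2 * deriv (PhiFn β v H) p = ergmSlope β v H p := by
    have := (hasDerivAt_two_mul_PhiFn β v H p).deriv
    rwa [deriv_const_mul_field] at this
  have hτ : 0 < 1 - p * (1 - p) * ergmSlope β v H p := sub_pos.2 hm.subcritical
  have hnum : 0 < (n : ℝ) * ((n : ℝ) - 1) / 2 * p * (1 - p) := by
    have h1 : (0 : ℝ) < n - 1 := by linarith
    have h2 := hp.1
    have h3 : 0 < 1 - p := sub_pos.2 hp.2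
    positivity
  have hsig : sigmaSq β v H p n =
      (n : ℝ) * ((n : ℝ) - 1) / 2 * p * (1 - p) / (1 - p * (1 - p) * ergmSlope β v H p) := by
    rw [sigmaSq, ← hslope]
    congr 2
    ring
  have hsig0 : 0 < sigmaSq β v H p n := hsig ▸ div_pos hnum hτ
  have hW : ∀ y, Wn β v H p n y = P.stdSize (Real.sqrt (sigmaSq β v H p n)) y := by
    intro y
    rw [BoolCube.PolyHam.stdSize, hgibbs]
    rfl
  have hsum : ∑ y : EdgeIdx n → Bool,
      Set.indicator {y' : EdgeIdx n → Bool | Wn β v H p n y' ≤ x} (ergmProb β v H n) y =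
      BoolCube.mass P.gibbs {y | P.stdSize (Real.sqrt (sigmaSq β v H p n)) y ≤ x} := by
    simp only [hW, BoolCube.mass, BoolCube.mean, hgibbs]
    refine Finset.sum_congr rfl fun y _ => ?_
    by_cases hy : P.stdSize (Real.sqrt (sigmaSq β v H p n)) y ≤ x <;> simp [Set.indicator, hy]
  rw [hsum]
  change |_ - gaussCdf x| ≤ _
  rcases le_or_gt n₀ n with hle | hlt
  · refine (h n hle P (hnear n hn) _ (Real.sqrt_pos.2 hsig0) ?_ x).trans
      (mul_le_mul_of_nonneg_right (le_max_left _ _) hrpow.le)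
    rw [Real.sq_sqrt hsig0.le, hsig, div_mul_cancel₀ _ hτ.ne', card_edgeIdx (one_le_two.trans hn)]
    ring
  · have h1 : |BoolCube.mass P.gibbs {y | P.stdSize (Real.sqrt (sigmaSq β v H p n)) y ≤ x} -
        gaussCdf x| ≤ 1 := by
      have hμ : ∀ y, 0 ≤ P.gibbs y := fun y => (P.gibbs_pos y).le
      set B : Set (EdgeIdx n → Bool) := {y | P.stdSize (Real.sqrt (sigmaSq β v H p n)) y ≤ x}
      have h2 := BoolCube.mass_nonneg hμ B
      have h3 := BoolCube.mass_le_one hμ P.sum_gibbs B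
      have h4 := gaussCdf_nonneg x
      have h5 := gaussCdf_le_one x
      exact abs_sub_le_iff.2 ⟨by linarith, by linarith⟩
    refine h1.trans (le_trans ?_ (mul_le_mul_of_nonneg_right (le_max_right _ _) hrpow.le))
    rw [Real.rpow_neg hn0.le, ← div_eq_mul_inv, one_le_div (Real.rpow_pos_of_pos hn0 _)]
    exact Real.rpow_le_rpow hn0.le (by exact_mod_cast hlt.le) (by norm_num)
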